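/- arXiv:math/0703429 — 6 statements merged into one kernel-verified Lean document; each statement's English description precedes it below -/
import Mathlib

section
/- Let X and Y be compact Hausdorff spaces and f : X → Y continuous. Then there is an infinite loose family for f if and only if there is an (ω+1)-loose function for f, where ω+1 denotes the one-point compactification of the countable discrete space ℕ (equivalently, a convergent sequence with its limit). -/
open Set Topology

universe u

section Defs

variable {X Y K Z : Type*}

/-- A subset `S` of a topological space is *scattered* iff every nonempty subset `T ⊆ S`
has a point which is isolated in the subspace topology of `T`. -/
def IsScatteredSet [TopologicalSpace X] (S : Set X) : Prop :=
  ∀ T ⊆ S, T.Nonempty → ∃ x ∈ T, ∃ U : Set X, IsOpen U ∧ U ∩ T = {x}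

/-- A *loose family* for `f : X → Y` : a pairwise disjoint family `Ps` of closed subsets of `X`
such that for some non-scattered `Q ⊆ Y`, `f '' P = Q` for all `P ∈ Ps`. -/
def LooseFamily [TopologicalSpace X] [TopologicalSpace Y] (f : X → Y)
    (Ps : Set (Set X)) : Prop :=
  Ps.Pairwise Disjoint ∧ (∀ P ∈ Ps, IsClosed P) ∧
    ∃ Q : Set Y, ¬ IsScatteredSet Q ∧ ∀ P ∈ Ps, f '' P = Q

/-- `f` is `κ`-*tight* iff there is no loose family for `f` of cardinality `κ`. -/
def IsTightCard [TopologicalSpace X] [TopologicalSpace Y] (κ : Cardinal) (f : X → Y) : Prop :=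
  ¬ ∃ Ps : Set (Set X), LooseFamily f Ps ∧ Cardinal.mk Ps = κ

/-- `f` is *tight* iff it is `2`-tight. -/
def IsTight [TopologicalSpace X] [TopologicalSpace Y] (f : X → Y) : Prop :=
  IsTightCard 2 f

/-- A `K`-*loose function* for `f : X → Y` : a continuous `φ : D → K` with `D` closed in `X`,
such that for some non-scattered `Q ⊆ Y`, `φ(f⁻¹{y} ∩ D) = K` for all `y ∈ Q`. -/
def LooseFunction [TopologicalSpace X] [TopologicalSpace Y] [TopologicalSpace K]
    (f : X → Y) (D : Set X) (φ : X → K) : Prop :=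
  IsClosed D ∧ ContinuousOn φ D ∧
    ∃ Q : Set Y, ¬ IsScatteredSet Q ∧ ∀ y ∈ Q, φ '' (f ⁻¹' {y} ∩ D) = Set.univ

/-- `f` is *weakly c-tight* iff there is no `K`-loose function for `f`
with `K` the Cantor space `2^ω`. -/
def WeaklyCTight [TopologicalSpace X] [TopologicalSpace Y] (f : X → Y) : Prop :=
  ¬ ∃ (D : Set X) (φ : X → (ℕ → Bool)), LooseFunction f D φ

/-- `f` is *finer* than `g` iff `f x₁ = f x₂` implies `g x₁ = g x₂`. -/
def Finer (f : X → Y) (g : X → Z) : Prop :=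
  ∀ x₁ x₂ : X, f x₁ = f x₂ → g x₁ = g x₂

end Defs

/-- `X` is `κ`-*dissipated* iff every continuous map from `X` to a compact metrizable
space is refined by a `κ`-tight continuous map from `X` to a compact metrizable space. -/
def IsDissipatedCard (κ : Cardinal.{u}) (X : Type u) [TopologicalSpace X] : Prop :=
  ∀ (Z : Type u) [TopologicalSpace Z] [CompactSpace Z] [TopologicalSpace.MetrizableSpace Z],
    ∀ g : X → Z, Continuous g →
      ∃ (Y : Type u) (tY : TopologicalSpace Y),
        @CompactSpace Y tY ∧ @TopologicalSpace.MetrizableSpace Y tY ∧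
        ∃ f : X → Y, @Continuous X Y _ tY f ∧ @IsTightCard X Y _ tY κ f ∧ Finer f g

/-- `X` is *weakly c-dissipated* iff every continuous map from `X` to a compact metrizable
space is refined by a weakly c-tight continuous map from `X` to a compact metrizable space. -/
def IsWeaklyCDissipated (X : Type u) [TopologicalSpace X] : Prop :=
  ∀ (Z : Type u) [TopologicalSpace Z] [CompactSpace Z] [TopologicalSpace.MetrizableSpace Z],
    ∀ g : X → Z, Continuous g →
      ∃ (Y : Type u) (tY : TopologicalSpace Y),
        @CompactSpace Y tY ∧ @TopologicalSpace.MetrizableSpace Y tY ∧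
        ∃ f : X → Y, @Continuous X Y _ tY f ∧ @WeaklyCTight X Y _ tY f ∧ Finer f g

section Helpers

variable {X Y : Type*} [TopologicalSpace X] [TopologicalSpace Y]

def GoodPair (f : X → Y) (P : ℕ → Set X) (K : Set Y) (C : Set X) (V : Set Y) : Prop :=
  ∀ W, IsOpen W → W ⊆ V → (W ∩ K).Nonempty → ∀ N : ℕ, ∃ k, N ≤ k ∧
    ∃ W', W' ⊆ W ∧ IsOpen W' ∧ (W' ∩ K).Nonempty ∧ W' ∩ K ⊆ f '' (P k ∩ C)

structure ValidNode (f : X → Y) (P : ℕ → Set X) (K : Set Y) (V : Set Y) (C R : Set X) : Prop where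
  oV : IsOpen V
  neV : (V ∩ K).Nonempty
  cC : IsClosed C
  cR : IsClosed R
  dis : Disjoint R C
  sub : V ∩ K ⊆ f '' R
  good : GoodPair f P K C V

lemma GoodPair.mono {f : X → Y} {P : ℕ → Set X} {K : Set Y} {C : Set X} {V V' : Set Y}
    (h : GoodPair f P K C V) (hV : V' ⊆ V) : GoodPair f P K C V' :=
  fun W hW hWV => h W hW (hWV.trans hV)

lemma GoodPair.split [CompactSpace X] [T2Space Y] {f : X → Y} (hf : Continuous f)
    {P : ℕ → Set X} (hP : ∀ n, IsClosed (P n)) {K : Set Y} {C C₀ C₁ : Set X} {V : Set Y}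
    (h : GoodPair f P K C V) (hV : IsOpen V) (hne : (V ∩ K).Nonempty)
    (hC₀ : IsClosed C₀) (hC : C ⊆ C₀ ∪ C₁) :
    ∃ V' ⊆ V, IsOpen V' ∧ (V' ∩ K).Nonempty ∧
      (GoodPair f P K C₀ V' ∨ GoodPair f P K C₁ V') := by
  by_cases h0 : GoodPair f P K C₀ V
  · exact ⟨V, Subset.rfl, hV, hne, Or.inl h0⟩
  unfold GoodPair at h0
  push Not at h0
  obtain ⟨W, hW, hWV, hWK, N, hN⟩ := h0
  refine ⟨W, hWV, hW, hWK, Or.inr ?_⟩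
  intro W₁ hW₁ hW₁W hW₁K N'
  obtain ⟨k, hk, W₂, hW₂, oW₂, neW₂, sW₂⟩ := h W₁ hW₁ (hW₁W.trans hWV) hW₁K (max N N')
  have hcl : IsClosed (f '' (P k ∩ C₀)) :=
    (((hP k).inter hC₀).isCompact.image hf).isClosed
  have hnot := hN k (le_trans (le_max_left _ _) hk) W₂ (hW₂.trans hW₁W) oW₂ neW₂
  obtain ⟨y, hy, hy'⟩ := Set.not_subset.1 hnot
  refine ⟨k, le_trans (le_max_right _ _) hk, W₂ \ f '' (P k ∩ C₀),
    diff_subset.trans hW₂, oW₂.sdiff hcl, ⟨y, ⟨hy.1, hy'⟩, hy.2⟩, ?_⟩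
  rintro z ⟨⟨hz, hz'⟩, hzK⟩
  obtain ⟨x, ⟨hx, hxC⟩, rfl⟩ := sW₂ ⟨hz, hzK⟩
  rcases hC hxC with h1 | h1
  · exact absurd ⟨x, ⟨hx, h1⟩, rfl⟩ hz'
  · exact ⟨x, ⟨hx, h1⟩, rfl⟩

lemma GoodPair.node [CompactSpace X] [T2Space X] [T2Space Y] {f : X → Y} (hf : Continuous f)
    {P : ℕ → Set X} (hP : ∀ n, IsClosed (P n)) (hd : ∀ i j, i ≠ j → Disjoint (P i) (P j))
    {K : Set Y} {C : Set X} {V : Set Y}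
    (h : GoodPair f P K C V) (hV : IsOpen V) (hne : (V ∩ K).Nonempty) (hC : IsClosed C) :
    ∃ V' C' R', V' ⊆ V ∧ C' ⊆ C ∧ R' ⊆ C ∧ ValidNode f P K V' C' R' := by
  obtain ⟨k, -, W, hWV, oW, neW, sW⟩ := h V hV Subset.rfl hne 0
  obtain ⟨l, hl, W', hW'W, oW', neW', sW'⟩ := h W oW hWV neW (k + 1)
  obtain ⟨A, B, oA, oB, hA, hB, hAB⟩ :=
    SeparatedNhds.of_isCompact_isCompact (hP k).isCompact (hP l).isCompact
      (hd k l (by omega))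
  obtain ⟨V', hV', oV', neV', hg⟩ := (h.mono (hW'W.trans hWV)).split hf hP oW' neW'
    (C₀ := C \ A) (C₁ := C \ B) (hC.sdiff oA) (by
      intro x hx
      by_cases hxA : x ∈ A
      · exact Or.inr ⟨hx, fun hxB => (Set.disjoint_left.1 hAB) hxA hxB⟩
      · exact Or.inl ⟨hx, hxA⟩)
  rcases hg with hg | hg
  · refine ⟨V', C \ A, P k ∩ C, hV'.trans (hW'W.trans hWV), diff_subset, inter_subset_right,
      oV', neV', hC.sdiff oA, (hP k).inter hC, ?_, ?_, hg⟩
    · exact Set.disjoint_left.2 fun x hx hx' => hx'.2 (hA hx.1)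
    · exact (inter_subset_inter_left _ (hV'.trans hW'W)).trans sW
  · refine ⟨V', C \ B, P l ∩ C, hV'.trans (hW'W.trans hWV), diff_subset, inter_subset_right,
      oV', neV', hC.sdiff oB, (hP l).inter hC, ?_, ?_, hg⟩
    · exact Set.disjoint_left.2 fun x hx hx' => hx'.2 (hB hx.1)
    · exact (inter_subset_inter_left _ hV').trans sW'

lemma ValidNode.step [CompactSpace X] [T2Space X] [CompactSpace Y] [T2Space Y]
    {f : X → Y} (hf : Continuous f)
    {P : ℕ → Set X} (hP : ∀ n, IsClosed (P n)) (hd : ∀ i j, i ≠ j → Disjoint (P i) (P j))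
    {K : Set Y} (hK : ∀ x ∈ K, ∀ U, IsOpen U → U ∩ K ≠ {x}) {C R : Set X} {V : Set Y}
    (h : ValidNode f P K V C R) :
    ∃ (V' : Bool → Set Y) (C' R' : Bool → Set X), (∀ b, V' b ⊆ V ∧ C' b ⊆ C ∧ R' b ⊆ C ∧
      ValidNode f P K (V' b) (C' b) (R' b)) ∧
      Disjoint (closure (V' true)) (closure (V' false)) := by
  obtain ⟨x, hxV, hxK⟩ := h.neV
  obtain ⟨y, hy, hyx⟩ : ∃ y ∈ V ∩ K, y ≠ x := by
    by_contra hcon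
    push Not at hcon
    exact hK x hxK V h.oV (Set.eq_singleton_iff_unique_mem.2 ⟨⟨hxV, hxK⟩, hcon⟩)
  obtain ⟨A, hxA, oA, B, hyB, oB, hAB⟩ := exists_open_nhds_disjoint_closure hyx.symm
  obtain ⟨V₁, C₁, R₁, h1, h2, h3, h4⟩ := (h.good.mono (V' := V ∩ A) inter_subset_left).node hf hP hd
    (h.oV.inter oA) ⟨x, ⟨hxV, hxA⟩, hxK⟩ h.cC
  obtain ⟨V₂, C₂, R₂, k1, k2, k3, k4⟩ := (h.good.mono (V' := V ∩ B) inter_subset_left).node hf hP hd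
    (h.oV.inter oB) ⟨y, ⟨hy.1, hyB⟩, hy.2⟩ h.cC
  refine ⟨fun b => cond b V₁ V₂, fun b => cond b C₁ C₂, fun b => cond b R₁ R₂, ?_, ?_⟩
  · rintro (_ | _)
    · exact ⟨k1.trans inter_subset_left, k2, k3, k4⟩
    · exact ⟨h1.trans inter_subset_left, h2, h3, h4⟩
  · exact hAB.mono (closure_mono (h1.trans inter_subset_right))
      (closure_mono (k1.trans inter_subset_right))

lemma exists_tree [CompactSpace X] [T2Space X] [CompactSpace Y] [T2Space Y]
    {f : X → Y} (hf : Continuous f)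
    {P : ℕ → Set X} (hP : ∀ n, IsClosed (P n)) (hd : ∀ i j, i ≠ j → Disjoint (P i) (P j))
    {K : Set Y} (hK : ∀ x ∈ K, ∀ U, IsOpen U → U ∩ K ≠ {x}) (hKn : K.Nonempty)
    (hKP : ∀ n, K ⊆ f '' P n) :
    ∃ (F : List Bool → Set Y) (C R : List Bool → Set X),
      (∀ l, IsClosed (F l)) ∧ (∀ l, (F l).Nonempty) ∧ (∀ b l, F (b :: l) ⊆ F l) ∧
      (∀ l, Disjoint (F (true :: l)) (F (false :: l))) ∧
      (∀ l, IsClosed (C l)) ∧ (∀ l, IsClosed (R l)) ∧ (∀ l, Disjoint (R l) (C l)) ∧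
      (∀ b l, R (b :: l) ⊆ C l) ∧ (∀ b l, C (b :: l) ⊆ C l) ∧ (∀ l, F l ⊆ f '' R l) := by
  have hroot : GoodPair f P K univ univ := by
    intro W oW _ neW N
    exact ⟨N, le_rfl, W, Subset.rfl, oW, neW, by
      rw [inter_univ]; exact inter_subset_right.trans (hKP N)⟩
  obtain ⟨V₀, C₀, R₀, -, -, -, h₀⟩ := hroot.node hf hP hd isOpen_univ (by simpa using hKn)
    isClosed_univ
  let S := {σ : Set Y × Set X × Set X // ValidNode f P K σ.1 σ.2.1 σ.2.2}
  have hstep : ∀ σ : S, ∃ τ : Bool → S, (∀ b, (τ b).1.1 ⊆ σ.1.1 ∧ (τ b).1.2.1 ⊆ σ.1.2.1 ∧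
      (τ b).1.2.2 ⊆ σ.1.2.1) ∧ Disjoint (closure (τ true).1.1) (closure (τ false).1.1) := by
    rintro ⟨⟨V, C, R⟩, h⟩
    obtain ⟨V', C', R', h1, h2⟩ := h.step hf hP hd hK
    exact ⟨fun b => ⟨(V' b, C' b, R' b), (h1 b).2.2.2⟩,
      fun b => ⟨(h1 b).1, (h1 b).2.1, (h1 b).2.2.1⟩, h2⟩
  choose τ hτ hτd using hstep
  let σ : List Bool → S := fun l => List.rec ⟨(V₀, C₀, R₀), h₀⟩ (fun b _ s => τ s b) l
  have hσ : ∀ b l, σ (b :: l) = τ (σ l) b := fun b l => rfl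
  refine ⟨fun l => closure ((σ l).1.1 ∩ K), fun l => (σ l).1.2.1, fun l => (σ l).1.2.2,
    fun l => isClosed_closure, fun l => (σ l).2.neV.closure, ?_, ?_, fun l => (σ l).2.cC,
    fun l => (σ l).2.cR, fun l => (σ l).2.dis, ?_, ?_, ?_⟩
  · intro b l
    exact closure_mono (inter_subset_inter_left _ (hτ (σ l) b).1)
  · intro l
    exact (hτd (σ l)).mono (closure_mono inter_subset_left) (closure_mono inter_subset_left)
  · intro b l
    exact (hτ (σ l) b).2.2
  · intro b l
    exact (hτ (σ l) b).2.1
  · intro l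
    exact closure_minimal (σ l).2.sub (((σ l).2.cR.isCompact.image hf).isClosed)

lemma exists_kernel [CompactSpace Y] [T2Space Y] {F : List Bool → Set Y}
    (hF : ∀ l, IsClosed (F l)) (hne : ∀ l, (F l).Nonempty) (hsub : ∀ b l, F (b :: l) ⊆ F l)
    (hdis : ∀ l, Disjoint (F (true :: l)) (F (false :: l))) :
    ∃ T : Set Y, ¬ IsScatteredSet T ∧ ∀ n, T ⊆ ⋃ l ∈ {l : List Bool | l.length = n}, F l := by
  let 𝒮 : Set (Set Y) := {T | IsClosed T ∧ ∀ l, (T ∩ F l).Nonempty}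
  obtain ⟨T, -, hT⟩ := zorn_superset_nonempty 𝒮 (by
    intro c hc hchain hcne
    refine ⟨⋂₀ c, ⟨isClosed_sInter fun t ht => (hc ht).1, fun l => ?_⟩,
      fun s hs => sInter_subset_of_mem hs⟩
    have : (⋂₀ ((fun t => t ∩ F l) '' c)).Nonempty := by
      have := (hcne.image (fun t => t ∩ F l)).to_subtype
      apply IsCompact.nonempty_sInter_of_directed_nonempty_isCompact_isClosed
      · rintro _ ⟨s, hs, rfl⟩ _ ⟨t, ht, rfl⟩
        rcases hchain.total hs ht with h | h
        · exact ⟨s ∩ F l, ⟨s, hs, rfl⟩, Subset.rfl, inter_subset_inter_left _ h⟩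
        · exact ⟨t ∩ F l, ⟨t, ht, rfl⟩, inter_subset_inter_left _ h, Subset.rfl⟩
      · rintro _ ⟨s, hs, rfl⟩
        exact (hc hs).2 l
      · rintro _ ⟨s, hs, rfl⟩
        exact ((hc hs).1.inter (hF l)).isCompact
      · rintro _ ⟨s, hs, rfl⟩
        exact (hc hs).1.inter (hF l)
    obtain ⟨y, hy⟩ := this
    refine ⟨y, fun s hs => (hy _ ⟨s, hs, rfl⟩).1, ?_⟩
    obtain ⟨s, hs⟩ := hcne
    exact (hy _ ⟨s, hs, rfl⟩).2) univ ⟨isClosed_univ, fun l => by simpa using hne l⟩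
  have hTm : ∀ T', IsClosed T' → T' ⊆ T → (∀ l, (T' ∩ F l).Nonempty) → T ⊆ T' :=
    fun T' h1 h2 h3 => hT.2 ⟨h1, h3⟩ h2
  obtain ⟨cT, nT⟩ := hT.1
  refine ⟨T, ?_, ?_⟩
  · intro hs
    obtain ⟨x, hx, U, oU, hU⟩ := hs T Subset.rfl ((nT []).mono inter_subset_left)
    have hxU : x ∈ U := by
      have : x ∈ U ∩ T := by rw [hU]; rfl
      exact this.1
    have : ¬ ∀ l, ((T \ U) ∩ F l).Nonempty := fun hcon =>
      (hTm (T \ U) (cT.sdiff oU) diff_subset hcon hx).2 hxU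
    push Not at this
    obtain ⟨l, hl⟩ := this
    have key : ∀ b, x ∈ F (b :: l) := by
      intro b
      obtain ⟨y, hyT, hyF⟩ := nT (b :: l)
      have hyU : y ∈ U := by
        by_contra hyU
        have : y ∈ (T \ U) ∩ F l := ⟨⟨hyT, hyU⟩, hsub b l hyF⟩
        rw [hl] at this
        exact this
      have : y ∈ U ∩ T := ⟨hyU, hyT⟩
      rw [hU] at this
      obtain rfl : y = x := this
      exact hyF
    exact Set.disjoint_left.1 (hdis l) (key true) (key false)
  · intro n
    have hcl : IsClosed (⋃ l ∈ {l : List Bool | l.length = n}, F l) :=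
      (List.finite_length_eq Bool n).isClosed_biUnion fun l _ => hF l
    refine (hTm _ (cT.inter hcl) inter_subset_left ?_).trans inter_subset_right
    have happ : ∀ m l, F (m ++ l) ⊆ F l := by
      intro m l
      induction m with
      | nil => exact Subset.rfl
      | cons b m ih => exact (hsub b _).trans ih
    have hlev : ∀ m : List Bool, n ≤ m.length →
        F m ⊆ ⋃ l ∈ {l : List Bool | l.length = n}, F l := by
      intro m hm y hy
      refine mem_biUnion (x := m.drop (m.length - n)) ?_ ?_
      · simp; omega
      · apply happ (m.take (m.length - n))
        rwa [List.take_append_drop]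
    intro l
    obtain ⟨y, hyT, hy⟩ := nT (List.replicate n true ++ l)
    exact ⟨y, ⟨hyT, hlev _ (by simp) hy⟩, happ _ _ hy⟩

lemma level_disjoint {F : List Bool → Set Y} (hsub : ∀ b l, F (b :: l) ⊆ F l)
    (hdis : ∀ l, Disjoint (F (true :: l)) (F (false :: l))) :
    ∀ (l m : List Bool), l.length = m.length → ∀ y, y ∈ F l → y ∈ F m → l = m := by
  intro l
  induction l with
  | nil => intro m h y _ _; cases m <;> simp_all
  | cons a l ih =>
    intro m h y hl hm
    cases m with
    | nil => simp at h
    | cons b m =>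
      obtain rfl := ih m (by simpa using h) y (hsub _ _ hl) (hsub _ _ hm)
      have := Set.disjoint_left.1 (hdis l)
      cases a <;> cases b <;> first | rfl | exact absurd hm (this hl) | exact absurd hl (this hm)

open Classical in
lemma exists_loose_of_seq [CompactSpace X] [T2Space Y] {f : X → Y} (hf : Continuous f)
    {S E : ℕ → Set X} (cS : ∀ n, IsClosed (S n)) (cE : ∀ n, IsClosed (E n))
    (hSE : ∀ n, S (n + 1) ⊆ E n) (hE : ∀ n, E (n + 1) ⊆ E n)
    (hdis : ∀ n, Disjoint (S n) (E n)) {T : Set Y} (hT : ¬ IsScatteredSet T)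
    (hTS : ∀ n, T ⊆ f '' S n) :
    ∃ (D : Set X) (φ : X → OnePoint ℕ), LooseFunction f D φ := by
  have hanti : Antitone E := antitone_nat_of_succ_le hE
  have hlt : ∀ n m, n < m → S m ⊆ E n := by
    intro n m h
    obtain ⟨m, rfl⟩ : ∃ k, m = k + 1 := ⟨m - 1, by omega⟩
    exact (hSE m).trans (hanti (by omega))
  have hdS : ∀ n m x, x ∈ S n → x ∈ S m → n = m := by
    intro n m x hn hm
    rcases lt_trichotomy n m with h | h | h
    · exact absurd (hlt n m h hm) (Set.disjoint_left.1 (hdis n) hn)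
    · exact h
    · exact absurd (hlt m n h hn) (Set.disjoint_left.1 (hdis m) hm)
  let φ : X → OnePoint ℕ := fun x => if h : ∃ n, x ∈ S n then ((h.choose : ℕ) : OnePoint ℕ) else
    OnePoint.infty
  have hφ : ∀ n x, x ∈ S n → φ x = (n : OnePoint ℕ) := by
    intro n x hx
    have h : ∃ n, x ∈ S n := ⟨n, hx⟩
    simp only [φ, dif_pos h]
    rw [hdS _ _ x h.choose_spec hx]
  let D := closure (⋃ n, S n)
  have hSD : ∀ n, S n ⊆ D := fun n => (subset_iUnion S n).trans subset_closure
  let G : ℕ → Set X := fun n => (⋃ i ∈ Iio n, S i) ∪ E n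
  have cG : ∀ n, IsClosed (G n) := fun n =>
    ((finite_Iio n).isClosed_biUnion fun i _ => cS i).union (cE n)
  have hDG : ∀ n, D ⊆ S n ∪ G n := by
    intro n
    refine closure_minimal (iUnion_subset fun m => ?_) ((cS n).union (cG n))
    rcases lt_trichotomy n m with h | h | h
    · exact (hlt n m h).trans (subset_union_right.trans subset_union_right)
    · subst h; exact subset_union_left
    · intro x hx
      exact Or.inr (Or.inl (mem_biUnion (show m ∈ Iio n from h) hx))
  have hcont : ContinuousOn φ D := by
    intro x hx
    by_cases h : ∃ n, x ∈ S n
    · obtain ⟨n, hn⟩ := h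
      have hxG : x ∉ G n := by
        rintro (h | h)
        · simp only [mem_iUnion] at h
          obtain ⟨i, hi, h⟩ := h
          exact absurd (hdS _ _ x h hn) (ne_of_lt hi)
        · exact Set.disjoint_left.1 (hdis n) hn h
      have hev : ∀ᶠ z in 𝓝[D] x, φ z = (n : OnePoint ℕ) := by
        filter_upwards [self_mem_nhdsWithin,
          mem_nhdsWithin_of_mem_nhds ((cG n).isOpen_compl.mem_nhds hxG)] with z hz hz'
        exact hφ n z ((hDG n hz).resolve_right hz')
      unfold ContinuousWithinAt
      rw [hφ n x hn]
      exact tendsto_const_nhds.congr' (hev.mono fun z hz => hz.symm)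
    · have hx0 : φ x = OnePoint.infty := dif_neg h
      unfold ContinuousWithinAt
      rw [hx0, Filter.tendsto_def]
      intro s hs
      obtain ⟨U, hUs, oU, hU⟩ := mem_nhds_iff.1 hs
      have hfin : Set.Finite (((↑) : ℕ → OnePoint ℕ) ⁻¹' U)ᶜ :=
        (((OnePoint.isOpen_iff_of_mem hU).1 oU).2).finite_of_discrete
      have hcl : IsClosed (⋃ i ∈ (((↑) : ℕ → OnePoint ℕ) ⁻¹' U)ᶜ, S i) :=
        hfin.isClosed_biUnion fun i _ => cS i
      have hxn : x ∉ ⋃ i ∈ (((↑) : ℕ → OnePoint ℕ) ⁻¹' U)ᶜ, S i := by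
        intro hcon
        simp only [mem_iUnion] at hcon
        obtain ⟨i, _, hi⟩ := hcon
        exact h ⟨i, hi⟩
      filter_upwards [mem_nhdsWithin_of_mem_nhds (hcl.isOpen_compl.mem_nhds hxn)] with z hz
      apply hUs
      by_cases hz' : ∃ n, z ∈ S n
      · obtain ⟨n, hn⟩ := hz'
        rw [hφ n z hn]
        by_contra hnU
        exact hz (mem_biUnion (show n ∈ (((↑) : ℕ → OnePoint ℕ) ⁻¹' U)ᶜ from hnU) hn)
      · have : φ z = OnePoint.infty := dif_neg hz'
        rw [this]; exact hU
  refine ⟨D, φ, isClosed_closure, hcont, T, hT, fun y hy => ?_⟩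
  have hcomp : IsCompact (φ '' (f ⁻¹' {y} ∩ D)) :=
    (((isClosed_singleton.preimage hf).inter isClosed_closure).isCompact).image_of_continuousOn
      (hcont.mono inter_subset_right)
  have hr : range ((↑) : ℕ → OnePoint ℕ) ⊆ φ '' (f ⁻¹' {y} ∩ D) := by
    rintro _ ⟨n, rfl⟩
    obtain ⟨x, hx, rfl⟩ := hTS n hy
    exact ⟨x, ⟨rfl, hSD n hx⟩, hφ n x hx⟩
  have hdense : DenseRange ((↑) : ℕ → OnePoint ℕ) := OnePoint.denseRange_coe
  exact (hdense.mono hr).closure_eq ▸ hcomp.isClosed.closure_eq.symm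

end Helpers

/-- There is an infinite loose family for `f` iff there is an `(ω+1)`-loose function for `f`,
where `ω+1` is the one-point compactification of the countable discrete space `ℕ`. -/
theorem stmt1 {X Y : Type*}
    [TopologicalSpace X] [CompactSpace X] [T2Space X]
    [TopologicalSpace Y] [CompactSpace Y] [T2Space Y]
    (f : X → Y) (hf : Continuous f) :
    (∃ Ps : Set (Set X), LooseFamily f Ps ∧ Ps.Infinite) ↔
      (∃ (D : Set X) (φ : X → OnePoint ℕ), LooseFunction f D φ) := by
  constructor
  · rintro ⟨Ps, ⟨hpd, hcl, Q, hQ, hPQ⟩, hinf⟩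
    let e := hinf.natEmbedding
    unfold IsScatteredSet at hQ
    push Not at hQ
    obtain ⟨K, hKQ, hKn, hK⟩ := hQ
    obtain ⟨F, C, R, cF, neF, sF, dF, cC, cR, dRC, sRC, sC, hFR⟩ :=
      exists_tree hf (P := fun n => (e n : Set X)) (fun n => hcl _ (e n).2)
        (fun i j hij => hpd (e i).2 (e j).2 fun h => hij (e.injective (Subtype.ext h)))
        (K := K) hK hKn (fun n => by rw [hPQ _ (e n).2]; exact hKQ)
    obtain ⟨T, hT, hTF⟩ := exists_kernel cF neF sF dF
    have hlev := level_disjoint sF dF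
    refine exists_loose_of_seq hf
      (S := fun n => ⋃ l ∈ {l : List Bool | l.length = n}, R l ∩ f ⁻¹' F l)
      (E := fun n => ⋃ l ∈ {l : List Bool | l.length = n}, C l ∩ f ⁻¹' F l)
      (fun n => (List.finite_length_eq Bool n).isClosed_biUnion fun l _ =>
        (cR l).inter ((cF l).preimage hf))
      (fun n => (List.finite_length_eq Bool n).isClosed_biUnion fun l _ =>
        (cC l).inter ((cF l).preimage hf)) ?_ ?_ ?_ hT ?_
    · intro n x hx
      simp only [mem_iUnion, mem_setOf_eq] at hx ⊢
      obtain ⟨l, hl, hxR, hxF⟩ := hx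
      cases l with
      | nil => simp at hl
      | cons b l => exact ⟨l, by simpa using hl, sRC b l hxR, sF b l hxF⟩
    · intro n x hx
      simp only [mem_iUnion, mem_setOf_eq] at hx ⊢
      obtain ⟨l, hl, hxR, hxF⟩ := hx
      cases l with
      | nil => simp at hl
      | cons b l => exact ⟨l, by simpa using hl, sC b l hxR, sF b l hxF⟩
    · intro n
      rw [Set.disjoint_left]
      intro x hx hx'
      simp only [mem_iUnion, mem_setOf_eq] at hx hx'
      obtain ⟨l, hl, hxR, hxF⟩ := hx
      obtain ⟨m, hm, hxC, hxF'⟩ := hx'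
      obtain rfl := hlev l m (hl.trans hm.symm) _ hxF hxF'
      exact Set.disjoint_left.1 (dRC l) hxR hxC
    · intro n y hy
      have := hTF n hy
      simp only [mem_iUnion] at this
      obtain ⟨l, hl, hyF⟩ := this
      obtain ⟨x, hx, rfl⟩ := hFR l hyF
      exact ⟨x, mem_biUnion hl ⟨hx, hyF⟩, rfl⟩
  · rintro ⟨D, φ, cD, hφ, Q, hQ, hsurj⟩
    have hQn : Q.Nonempty := by
      by_contra hne
      rw [Set.not_nonempty_iff_eq_empty] at hne
      subst hne
      exact hQ fun T hT hTn => absurd (hTn.mono hT) Set.not_nonempty_empty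
    let P : ℕ → Set X := fun n => (D ∩ φ ⁻¹' {(n : OnePoint ℕ)}) ∩ f ⁻¹' closure Q
    have cD' : ∀ n : ℕ, IsClosed (D ∩ φ ⁻¹' {(n : OnePoint ℕ)}) := fun n =>
      hφ.preimage_isClosed_of_isClosed cD isClosed_singleton
    have cP : ∀ n, IsClosed (P n) := fun n => (cD' n).inter (isClosed_closure.preimage hf)
    have hPQ : ∀ n, f '' P n = closure Q := by
      intro n
      have h1 : closure Q ⊆ f '' (D ∩ φ ⁻¹' {(n : OnePoint ℕ)}) := by
        refine closure_minimal ?_ ((cD' n).isCompact.image hf).isClosed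
        intro y hy
        have : (n : OnePoint ℕ) ∈ φ '' (f ⁻¹' {y} ∩ D) := by rw [hsurj y hy]; trivial
        obtain ⟨x, ⟨hx, hxD⟩, hxn⟩ := this
        exact ⟨x, ⟨hxD, hxn⟩, hx⟩
      apply Subset.antisymm
      · rintro _ ⟨x, hx, rfl⟩
        exact hx.2
      · intro y hy
        obtain ⟨x, hx, rfl⟩ := h1 hy
        exact ⟨x, ⟨hx, hy⟩, rfl⟩
    have hdis : ∀ i j, i ≠ j → Disjoint (P i) (P j) := by
      intro i j hij
      rw [Set.disjoint_left]
      intro x hi hj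
      have h1 : φ x = (i : OnePoint ℕ) := hi.1.2
      have h2 : φ x = (j : OnePoint ℕ) := hj.1.2
      exact hij (OnePoint.coe_injective (h1.symm.trans h2))
    have hne : ∀ n, (P n).Nonempty := fun n => by
      have : (f '' P n).Nonempty := by rw [hPQ]; exact hQn.closure
      exact this.of_image
    have hinj : Function.Injective P := by
      intro i j hij
      by_contra hne'
      have := hdis i j hne'
      rw [← hij, disjoint_self] at this
      exact (hne i).ne_empty this
    refine ⟨range P, ⟨?_, ?_, closure Q, ?_, ?_⟩, infinite_range_of_injective hinj⟩
    · rintro _ ⟨i, rfl⟩ _ ⟨j, rfl⟩ hij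
      exact hdis i j fun h => hij (by rw [h])
    · rintro _ ⟨i, rfl⟩
      exact cP i
    · intro hs
      exact hQ fun T hT => hs T (hT.trans subset_closure)
    · rintro _ ⟨i, rfl⟩
      exact hPQ i
end

section
/- Let X and Y be compact metrizable spaces, f : X → Y continuous, and κ a cardinal. Then f is κ-tight if and only if the set {y ∈ Y : the cardinality of f⁻¹{y} is at least κ} is countable. Moreover, f is weakly c-tight if and only if f is c-tight, where c = 2^ℵ₀. -/
open Set Topology

universe u

namespace Loose

open Filter Function CantorScheme
open scoped ENNReal

theorem condense {N Y : Type*} [TopologicalSpace N] [SecondCountableTopology N] (g : N → Y)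
    {C : Set N} (hC : ¬ (g '' C).Countable) :
    ¬ (g '' {x ∈ C | ∀ U ∈ 𝓝 x, ¬ (g '' (U ∩ C)).Countable}).Countable := by
  intro h
  apply hC
  set B := TopologicalSpace.countableBasis N
  have hB := TopologicalSpace.isBasis_countableBasis N
  have hcount : (⋃ U ∈ {U ∈ B | (g '' (U ∩ C)).Countable}, g '' (U ∩ C)).Countable := by
    apply Set.Countable.biUnion
    · exact (TopologicalSpace.countable_countableBasis N).mono (fun U hU => hU.1)
    · exact fun U hU => hU.2
  refine (h.union hcount).mono ?_
  rintro _ ⟨x, hx, rfl⟩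
  by_cases hx' : ∀ U ∈ 𝓝 x, ¬ (g '' (U ∩ C)).Countable
  · exact Or.inl ⟨x, ⟨hx, hx'⟩, rfl⟩
  · right
    push Not at hx'
    obtain ⟨U, hU, hc⟩ := hx'
    obtain ⟨V, hV, hxV, hVU⟩ := hB.mem_nhds_iff.1 hU
    simp only [mem_iUnion]
    exact ⟨V, ⟨hV, hc.mono (image_mono (inter_subset_inter_left _ hVU))⟩, x, ⟨hxV, hx⟩, rfl⟩

theorem split {N Y : Type*} [MetricSpace N] [SecondCountableTopology N] [TopologicalSpace Y]
    [T2Space Y] (g : N → Y) (hg : Continuous g) {C : Set N} (hCc : IsClosed C)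
    (hC : ¬ (g '' C).Countable) {ε : ℝ≥0∞} (hε : 0 < ε) :
    ∃ C₀ C₁ : Set N, (IsClosed C₀ ∧ ¬ (g '' C₀).Countable ∧ C₀ ⊆ C ∧ Metric.ediam C₀ ≤ ε) ∧
      (IsClosed C₁ ∧ ¬ (g '' C₁).Countable ∧ C₁ ⊆ C ∧ Metric.ediam C₁ ≤ ε) ∧
      Disjoint (g '' C₀) (g '' C₁) := by
  have h := condense g hC
  have hnt : (g '' {x ∈ C | ∀ U ∈ 𝓝 x, ¬ (g '' (U ∩ C)).Countable}).Nontrivial := by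
    by_contra hh
    exact h (Set.not_nontrivial_iff.1 hh).finite.countable
  obtain ⟨_, ⟨x, ⟨hxC, hx⟩, rfl⟩, _, ⟨y, ⟨hyC, hy⟩, rfl⟩, hne⟩ := hnt
  obtain ⟨U, V, hU, hV, hxU, hyV, hUV⟩ := t2_separation hne
  have key : ∀ (x : N) (U : Set Y), IsOpen U → g x ∈ U →
      ∃ W ∈ 𝓝 x, IsClosed W ∧ W ⊆ g ⁻¹' U ∧ Metric.ediam W ≤ ε := by
    intro x U hU hx
    have h1 : g ⁻¹' U ∩ Metric.closedEBall x (ε / 2) ∈ 𝓝 x := by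
      refine inter_mem ((hU.preimage hg).mem_nhds hx) (Metric.closedEBall_mem_nhds x ?_)
      rw [ENNReal.div_pos_iff]
      exact ⟨ne_of_gt hε, by simp⟩
    obtain ⟨W, hW, hWc, hWs⟩ := exists_mem_nhds_isClosed_subset h1
    refine ⟨W, hW, hWc, hWs.trans inter_subset_left, ?_⟩
    refine (Metric.ediam_mono (hWs.trans inter_subset_right)).trans ?_
    refine Metric.ediam_closedEBall_le.trans (le_of_eq ?_)
    rw [mul_comm, ENNReal.div_mul_cancel] <;> norm_num
  obtain ⟨W, hW, hWc, hWs, hWd⟩ := key x U hU hxU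
  obtain ⟨W', hW', hWc', hWs', hWd'⟩ := key y V hV hyV
  refine ⟨W ∩ C, W' ∩ C, ⟨hWc.inter hCc, hx W hW, inter_subset_right,
    (Metric.ediam_mono inter_subset_left).trans hWd⟩, ⟨hWc'.inter hCc, hy W' hW', inter_subset_right,
    (Metric.ediam_mono inter_subset_left).trans hWd'⟩, hUV.mono ?_ ?_⟩
  · exact image_subset_iff.2 (inter_subset_left.trans hWs)
  · exact image_subset_iff.2 (inter_subset_left.trans hWs')

theorem cantor {N Y : Type*} [TopologicalSpace N] [PolishSpace N] [TopologicalSpace Y]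
    [T2Space Y] (g : N → Y) (hg : Continuous g) (hunc : ¬ (range g).Countable) :
    ∃ c : (ℕ → Bool) → N, Continuous c ∧ Injective (g ∘ c) := by
  let := TopologicalSpace.upgradeIsCompletelyMetrizable N
  obtain ⟨u, -, upos', hu⟩ := exists_seq_strictAnti_tendsto' (zero_lt_one' ℝ≥0∞)
  have upos := fun n => (upos' n).1
  let P := Subtype fun E : Set N => IsClosed E ∧ ¬ (g '' E).Countable
  choose C0 C1 h0 h1 hdisj using
    fun {C : Set N} (hC : IsClosed C) (hunc : ¬ (g '' C).Countable) {ε : ℝ≥0∞} (hε : 0 < ε) =>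
    split g hg hC hunc hε
  let DP : List Bool → P := fun l => by
    induction l with
    | nil => exact ⟨univ, ⟨isClosed_univ, by rwa [image_univ]⟩⟩
    | cons a l ih =>
      cases a
      · use C0 ih.property.1 ih.property.2 (upos (l.length + 1))
        exact ⟨(h0 _ _ _).1, (h0 _ _ _).2.1⟩
      use C1 ih.property.1 ih.property.2 (upos (l.length + 1))
      exact ⟨(h1 _ _ _).1, (h1 _ _ _).2.1⟩
  let D : List Bool → Set N := fun l => (DP l).val
  have hanti : ClosureAntitone D := by
    refine Antitone.closureAntitone ?_ fun l => (DP l).property.1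
    intro l a
    cases a
    · exact (h0 _ _ _).2.2.1
    exact (h1 _ _ _).2.2.1
  have hdiam : VanishingDiam D := by
    intro x
    apply tendsto_of_tendsto_of_tendsto_of_le_of_le' tendsto_const_nhds hu
    · simp
    rw [eventually_atTop]
    refine ⟨1, fun m (hm : 1 ≤ m) => ?_⟩
    rw [Nat.one_le_iff_ne_zero] at hm
    rcases Nat.exists_eq_succ_of_ne_zero hm with ⟨n, rfl⟩
    dsimp
    cases x n
    · convert! (h0 _ _ _).2.2.2
      rw [PiNat.res_length]
    convert! (h1 _ _ _).2.2.2
    rw [PiNat.res_length]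
  have hdisj' : CantorScheme.Disjoint (fun l => g '' D l) := by
    rintro l (a | a) (b | b) hab <;> try contradiction
    · exact hdisj _ _ _
    exact (hdisj _ _ _).symm
  have hdom : ∀ {x : ℕ → Bool}, x ∈ (inducedMap D).1 := fun {x} => by
    rw [hanti.map_of_vanishingDiam hdiam fun l => ?_]
    · apply mem_univ
    · by_contra hh
      apply (DP l).property.2
      have : (DP l).val = ∅ := not_nonempty_iff_eq_empty.1 hh
      simp [this]
  refine ⟨fun x => (inducedMap D).2 ⟨x, hdom⟩, ?_, ?_⟩
  · apply hdiam.map_continuous.comp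
    fun_prop
  intro x y hxy
  simp only [comp_apply] at hxy
  apply PiNat.res_injective
  ext n : 1
  induction n with
  | zero => simp
  | succ n ih =>
    simp only [PiNat.res_succ, List.cons.injEq]
    refine ⟨?_, ih⟩
    by_contra hne
    have hd := Set.disjoint_left.1 (hdisj' (PiNat.res x n) hne)
    refine @hd (g ((inducedMap D).2 ⟨x, hdom⟩)) ⟨_, ?_, rfl⟩ ⟨_, ?_, hxy.symm⟩
    · rw [← PiNat.res_succ]
      exact map_mem (A := D) ⟨x, hdom⟩ (n + 1)
    · rw [ih, ← PiNat.res_succ]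
      exact map_mem (A := D) ⟨y, hdom⟩ (n + 1)

theorem cantor_on {M Y : Type*} [TopologicalSpace M] [PolishSpace M] [TopologicalSpace Y]
    [T2Space Y] (g : M → Y) (hg : Continuous g) {S : Set M} (hS : MeasureTheory.AnalyticSet S)
    (hunc : ¬ (g '' S).Countable) :
    ∃ c : (ℕ → Bool) → M, Continuous c ∧ (∀ s, c s ∈ S) ∧ Injective (g ∘ c) := by
  rw [MeasureTheory.AnalyticSet] at hS
  rcases hS with rfl | ⟨h, hh, rfl⟩
  · simp at hunc
  · rw [← range_comp] at hunc
    obtain ⟨c, hc, hi⟩ := cantor (g ∘ h) (hg.comp hh) hunc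
    exact ⟨h ∘ c, hh.comp hc, fun s => mem_range_self _, hi⟩

theorem mk_fun : Cardinal.mk (ℕ → Bool) = Cardinal.continuum := by
  rw [← Cardinal.power_def, Cardinal.mk_bool, Cardinal.mk_nat, Cardinal.two_power_aleph0]

theorem not_countable_range {Y : Type*} {j : (ℕ → Bool) → Y} (hj : Injective j) :
    ¬ (range j).Countable := by
  intro h1
  have h2 : Countable (ℕ → Bool) := by
    have := h1.to_subtype
    exact (Set.rangeFactorization_injective.2 hj).countable
  have h3 := Cardinal.mk_le_aleph0_iff.2 h2
  rw [mk_fun] at h3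
  exact absurd Cardinal.aleph0_lt_continuum (not_lt.2 h3)

theorem scattered_iff {Y : Type*} [TopologicalSpace Y] [PolishSpace Y] {C : Set Y}
    (hC : IsClosed C) : IsScatteredSet C ↔ C.Countable := by
  constructor
  · intro h
    by_contra hunc
    obtain ⟨D, hD, Dne, hDC⟩ := exists_perfect_nonempty_of_isClosed_of_not_countable hC hunc
    obtain ⟨x, hx, U, hU, hUx⟩ := h D hDC Dne
    have hxU : x ∈ U := (hUx.symm.subset rfl).1
    obtain ⟨y, hy, hne⟩ := preperfect_iff_nhds.1 hD.acc x hx U (hU.mem_nhds hxU)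
    exact hne (hUx.subset hy)
  · intro hc T hT hne
    by_contra hcon
    push Not at hcon
    have hpre : Preperfect T := by
      rw [preperfect_iff_nhds]
      intro x hx U hU
      obtain ⟨V, hVU, hV, hxV⟩ := mem_nhds_iff.1 hU
      by_contra hh
      push Not at hh
      refine hcon x hx V hV (Subset.antisymm (fun y hy => hh y ⟨hVU hy.1, hy.2⟩) ?_)
      rintro _ rfl
      exact ⟨hxV, hx⟩
    let := TopologicalSpace.upgradeIsCompletelyMetrizable Y
    obtain ⟨j, hj, -, hinj⟩ := hpre.perfect_closure.exists_nat_bool_injection hne.closure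
    have h1 : (range j).Countable := hc.mono (hj.trans (closure_minimal hT hC))
    exact not_countable_range hinj h1

theorem family {X Y I : Type u} [TopologicalSpace X] [T2Space X]
    [TopologicalSpace Y] [PolishSpace Y] (f : X → Y)
    (Φ : I → (ℕ → Bool) → X) (hΦ : ∀ i, Continuous (Φ i))
    (j : (ℕ → Bool) → Y) (hj : Continuous j) (hinj : Injective j)
    (hfj : ∀ i s, f (Φ i s) = j s) (hΦi : ∀ s, Injective fun i => Φ i s) :
    ∃ Ps : Set (Set X), LooseFamily f Ps ∧ Cardinal.mk Ps = Cardinal.mk I := by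
  have key : ∀ i i' s s', Φ i s = Φ i' s' → i = i' := by
    intro i i' s s' h
    have hs : s = s' := hinj (by rw [← hfj i s, h, hfj])
    subst hs
    exact hΦi s h
  refine ⟨range fun i => range (Φ i), ⟨?_, ?_, range j, ?_, ?_⟩, ?_⟩
  · rintro _ ⟨i, rfl⟩ _ ⟨i', rfl⟩ hne
    rw [Set.disjoint_left]
    rintro _ ⟨s, rfl⟩ ⟨s', h⟩
    have := key _ _ _ _ h
    subst this
    exact hne rfl
  · rintro _ ⟨i, rfl⟩
    exact (isCompact_range (hΦ i)).isClosed
  · rw [scattered_iff (isCompact_range hj).isClosed]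
    exact not_countable_range hinj
  · rintro _ ⟨i, rfl⟩
    rw [← range_comp]
    congr 1
    ext s
    exact hfj i s
  · refine Cardinal.mk_range_eq _ ?_
    intro i i' h
    have h1 : Φ i (fun _ => true) ∈ range (Φ i') := by
      have h' : range (Φ i) = range (Φ i') := h
      rw [← h']
      exact mem_range_self _
    obtain ⟨s, hs⟩ := h1
    exact (key _ _ _ _ hs).symm

theorem countable_case {X Y I : Type u} [TopologicalSpace X] [PolishSpace X]
    [TopologicalSpace Y] [PolishSpace Y] (f : X → Y) (hf : Continuous f) [Countable I] [Nonempty I]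
    (h : ¬ {y : Y | Cardinal.mk I ≤ Cardinal.mk (f ⁻¹' {y})}.Countable) :
    ∃ Ps : Set (Set X), LooseFamily f Ps ∧ Cardinal.mk Ps = Cardinal.mk I := by
  obtain ⟨i₀⟩ := ‹Nonempty I›
  let S : Set (I → X) := {φ | Injective φ ∧ ∀ i i', f (φ i) = f (φ i')}
  borelize (I → X)
  have hS : MeasurableSet S := by
    have : S = (⋂ i, ⋂ i', ⋂ (_ : i ≠ i'), {φ : I → X | φ i ≠ φ i'}) ∩
        ⋂ i, ⋂ i', {φ : I → X | f (φ i) = f (φ i')} := by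
      ext φ
      simp only [S, mem_inter_iff, mem_iInter, mem_ofPred_eq, Injective]
      refine and_congr_left fun _ => forall_congr' fun i => forall_congr' fun i' => ?_
      tauto
    rw [this]
    refine MeasurableSet.inter ?_ ?_
    · refine .iInter fun i => .iInter fun i' => .iInter fun _ => ?_
      exact (isOpen_ne_fun (by fun_prop) (by fun_prop)).measurableSet
    · refine .iInter fun i => .iInter fun i' => ?_
      exact (isClosed_eq (by fun_prop) (by fun_prop)).measurableSet
  obtain ⟨c, hc, hcS, hinj⟩ := cantor_on (fun φ : I → X => f (φ i₀)) (by fun_prop)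
    hS.analyticSet (by
      refine fun hh => h (hh.mono ?_)
      intro y hy
      obtain ⟨e⟩ := Cardinal.le_def _ _ |>.1 hy
      have he : ∀ i, f (e i) = y := fun i => (e i).2
      refine ⟨fun i => (e i : X), ⟨?_, ?_⟩, he _⟩
      · exact Subtype.val_injective.comp e.injective
      · intro i i'
        rw [he, he])
  refine family f (fun i s => c s i) (fun i => by fun_prop) _ (by fun_prop) hinj ?_ ?_
  · intro i s
    exact (hcS s).2 _ _
  · intro s
    exact (hcS s).1

theorem uncountable_case {X Y : Type*} [TopologicalSpace X] [CompactSpace X]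
    [TopologicalSpace.MetrizableSpace X]
    [TopologicalSpace Y] [T2Space Y] (f : X → Y) (hf : Continuous f)
    (h : ¬ {y : Y | ¬ (f ⁻¹' {y}).Countable}.Countable) :
    ∃ (Φ : (ℕ → Bool) → (ℕ → Bool) → X) (j : (ℕ → Bool) → Y),
      Continuous (uncurry Φ) ∧ Continuous j ∧ Injective j ∧ (∀ s t, f (Φ s t) = j s) ∧
      ∀ s, Injective (Φ s) := by
  let := TopologicalSpace.metrizableSpaceMetric X
  have : PolishSpace C(ℕ → Bool, X) := inferInstance
  let S : Set C(ℕ → Bool, X) := {φ | Injective φ ∧ ∀ i i', f (φ i) = f (φ i')}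
  borelize C(ℕ → Bool, X)
  have hS : MeasurableSet S := by
    have : S = (⋂ n : ℕ, (Prod.fst '' {p : C(ℕ → Bool, X) × ((ℕ → Bool) × (ℕ → Bool)) |
        p.1 p.2.1 = p.1 p.2.2 ∧ p.2.1 n = !(p.2.2 n)})ᶜ) ∩
        ⋂ i, ⋂ i', {φ : C(ℕ → Bool, X) | f (φ i) = f (φ i')} := by
      ext φ
      simp only [S, mem_inter_iff, mem_iInter, mem_ofPred_eq, Injective]
      refine and_congr_left fun _ => ⟨?_, ?_⟩
      · rintro hi n ⟨⟨_, s, t⟩, ⟨h1, h2⟩, rfl⟩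
        have := hi h1
        simp only at this h2
        subst this
        simp at h2
      · intro hn s t hst
        by_contra hne
        obtain ⟨n, hn'⟩ := Function.ne_iff.1 hne
        refine hn n ⟨⟨φ, s, t⟩, ⟨hst, ?_⟩, rfl⟩
        exact Bool.eq_not.2 hn'
    rw [this]
    refine MeasurableSet.inter ?_ ?_
    · refine .iInter fun n => ?_
      refine (isClosedMap_fst_of_compactSpace _ ?_).isOpen_compl.measurableSet
      refine (isClosed_eq ?_ ?_).inter (isClosed_eq ?_ ?_)
      · fun_prop
      · fun_prop
      · fun_prop
      · exact (continuous_of_discreteTopology (f := Bool.not)).comp (by fun_prop :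
          Continuous fun p : C(ℕ → Bool, X) × ((ℕ → Bool) × (ℕ → Bool)) => p.2.2 n)
    · refine IsClosed.measurableSet ?_
      refine isClosed_iInter fun i => isClosed_iInter fun i' => ?_
      exact isClosed_eq (by fun_prop) (by fun_prop)
  obtain ⟨c, hc, hcS, hinj⟩ := cantor_on (fun φ : C(ℕ → Bool, X) => f (φ fun _ => true))
    (by fun_prop) hS.analyticSet (by
      refine fun hh => h (hh.mono ?_)
      intro y hy
      by_cases hcl : IsClosed (f ⁻¹' {y})
      · obtain ⟨e, he, hec, hei⟩ := hcl.exists_nat_bool_injection_of_not_countable hy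
        have he' : ∀ i, f (e i) = y := fun i => he (mem_range_self i)
        refine ⟨⟨e, hec⟩, ⟨hei, ?_⟩, he' _⟩
        intro i i'
        exact (he' i).trans (he' i').symm
      · exact absurd (isClosed_singleton.preimage hf) hcl)
  refine ⟨fun s t => c s t, _, ?_, ?_, hinj, fun s t => (hcS s).2 _ _, fun s => (hcS s).1⟩
  · simp only [uncurry_def]
    fun_prop
  · fun_prop

theorem mk_le {X : Type u} [TopologicalSpace X] [PolishSpace X] :
    Cardinal.mk X ≤ Cardinal.continuum := by
  cases isEmpty_or_nonempty X
  · simp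
  obtain ⟨h, -, hs⟩ := PolishSpace.exists_nat_nat_continuous_surjective X
  have := Cardinal.mk_le_of_surjective (f := h ∘ ULift.down.{u})
    (hs.comp ULift.down_surjective)
  simpa using this

theorem main_part {X Y : Type u}
    [TopologicalSpace X] [CompactSpace X] [TopologicalSpace.MetrizableSpace X]
    [TopologicalSpace Y] [CompactSpace Y] [TopologicalSpace.MetrizableSpace Y]
    (f : X → Y) (hf : Continuous f) (κ : Cardinal.{u}) :
    IsTightCard κ f ↔ {y : Y | κ ≤ Cardinal.mk (f ⁻¹' {y})}.Countable := by
  let := TopologicalSpace.metrizableSpaceMetric X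
  let := TopologicalSpace.metrizableSpaceMetric Y
  constructor
  · intro h
    by_contra hunc
    apply h
    rcases eq_or_ne κ 0 with rfl | h0
    · refine ⟨∅, ⟨by simp, by simp, univ, ?_, by simp⟩, by simp⟩
      rw [scattered_iff isClosed_univ]
      exact fun hh => hunc (hh.mono (subset_univ _))
    · rcases le_or_gt κ Cardinal.aleph0 with hle | hgt
      · have h1 : Countable κ.out := by
          rw [← Cardinal.mk_le_aleph0_iff, Cardinal.mk_out]
          exact hle
        have h2 : Nonempty κ.out := by
          rw [← Cardinal.mk_ne_zero_iff, Cardinal.mk_out]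
          exact h0
        have := countable_case (I := κ.out) f hf (by rwa [Cardinal.mk_out])
        rwa [Cardinal.mk_out] at this
      · have hκ : κ ≤ Cardinal.continuum := by
          have hne : {y : Y | κ ≤ Cardinal.mk (f ⁻¹' {y})}.Nonempty := by
            by_contra hh
            rw [not_nonempty_iff_eq_empty] at hh
            rw [hh] at hunc
            simp at hunc
          obtain ⟨y, hy⟩ := hne
          exact hy.trans ((Cardinal.mk_set_le _).trans mk_le)
        obtain ⟨Φ, j, hΦ, hj, hinj, hfj, hΦi⟩ := uncountable_case f hf (by
          refine fun hh => hunc (hh.mono ?_)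
          intro y hy hc
          have : κ ≤ Cardinal.aleph0 := le_trans hy (Cardinal.mk_le_aleph0_iff.2 hc.to_subtype)
          exact absurd hgt (not_lt.2 this))
        have : Cardinal.mk κ.out ≤ Cardinal.mk (ULift.{u} (ℕ → Bool)) := by
          rw [Cardinal.mk_out, Cardinal.mk_uLift, mk_fun]
          simpa using hκ
        obtain ⟨e⟩ := Cardinal.le_def _ _ |>.1 this
        have := family (I := κ.out) f (fun i s => Φ s (e i).down)
          (fun i => hΦ.comp (by fun_prop : Continuous fun s => (s, (e i).down)))
          j hj hinj (fun i s => hfj _ _)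
          (fun s => (hΦi s).comp (ULift.down_injective.comp e.injective))
        rwa [Cardinal.mk_out] at this
  · rintro hc ⟨Ps, ⟨hdisj, hcl, Q, hQ, hPQ⟩, rfl⟩
    rcases Ps.eq_empty_or_nonempty with rfl | ⟨P, hP⟩
    · apply hQ
      have h1 : IsScatteredSet (univ : Set Y) := by
        rw [scattered_iff isClosed_univ]
        exact hc.mono fun y _ => by simp
      exact fun T _ => h1 T (subset_univ T)
    · have hQc : IsClosed Q := by
        rw [← hPQ P hP]
        exact ((hcl P hP).isCompact.image hf).isClosed
      rw [scattered_iff hQc] at hQ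
      refine hQ (hc.mono ?_)
      intro y hy
      have hex : ∀ P : Ps, ∃ x ∈ (P : Set X), f x = y := by
        intro P
        have : y ∈ f '' (P : Set X) := by rw [hPQ P P.2]; exact hy
        exact this
      choose e he hfe using hex
      refine Cardinal.mk_le_of_injective (f := fun P : Ps => (⟨e P, hfe P⟩ : f ⁻¹' {y})) ?_
      intro P P' h
      have h' : e P = e P' := congrArg Subtype.val h
      by_contra hne
      refine Set.disjoint_left.1 (hdisj P.2 P'.2 (fun hh => hne (Subtype.ext hh))) (he P) ?_
      rw [h']
      exact he P'

theorem weak_part {X Y : Type u}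
    [TopologicalSpace X] [CompactSpace X] [TopologicalSpace.MetrizableSpace X]
    [TopologicalSpace Y] [CompactSpace Y] [TopologicalSpace.MetrizableSpace Y]
    (f : X → Y) (hf : Continuous f) :
    WeaklyCTight f ↔ IsTightCard Cardinal.continuum f := by
  let := TopologicalSpace.metrizableSpaceMetric X
  let := TopologicalSpace.metrizableSpaceMetric Y
  rw [main_part f hf]
  constructor
  · intro h
    by_contra hunc
    apply h
    obtain ⟨Φ, j, hΦ, hj, hinj, hfj, hΦi⟩ := uncountable_case f hf (by
      refine fun hh => hunc (hh.mono ?_)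
      intro y hy hc
      have : Cardinal.continuum ≤ Cardinal.aleph0 :=
        le_trans hy (Cardinal.mk_le_aleph0_iff.2 hc.to_subtype)
      exact absurd Cardinal.aleph0_lt_continuum (not_lt.2 this))
    have hΦinj : Injective (uncurry Φ) := by
      rintro ⟨s, t⟩ ⟨s', t'⟩ h
      have h' : Φ s t = Φ s' t' := h
      have hs : s = s' := hinj (by rw [← hfj s t, h', hfj])
      subst hs
      rw [hΦi s h']
    have hemb : IsClosedEmbedding (uncurry Φ) := hΦ.isClosedEmbedding hΦinj
    refine ⟨range (uncurry Φ), fun x => (invFun (uncurry Φ) x).2, hemb.isClosed_range, ?_,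
      range j, ?_, ?_⟩
    · refine continuous_snd.comp_continuousOn ?_
      rw [continuousOn_iff_continuous_domRestrict]
      have h1 := hemb.isEmbedding.toHomeomorph.symm.continuous
      convert h1 using 1
      ext1 ⟨_, p, rfl⟩
      rw [Set.domRestrict_apply, leftInverse_invFun hΦinj]
      symm
      rw [Homeomorph.symm_apply_eq]
      rfl
    · rw [scattered_iff (isCompact_range hj).isClosed]
      exact not_countable_range hinj
    · rintro _ ⟨s, rfl⟩
      rw [eq_univ_iff_forall]
      intro t
      refine ⟨Φ s t, ⟨hfj s t, (s, t), rfl⟩, ?_⟩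
      have := leftInverse_invFun hΦinj (s, t)
      exact congrArg Prod.snd this
  · rintro hc ⟨D, φ, hD, hφ, Q, hQ, hQφ⟩
    have hQ' : ¬ (closure Q).Countable := by
      rw [← scattered_iff isClosed_closure]
      exact fun hh => hQ fun T hT => hh T (hT.trans subset_closure)
    refine hQ' (hc.mono ?_)
    intro y hy
    have hcl : IsClosed ((fun x => (f x, φ x)) '' D) :=
      (hD.isCompact.image_of_continuousOn (hf.continuousOn.prodMk hφ)).isClosed
    have hsub : closure Q ×ˢ (univ : Set (ℕ → Bool)) ⊆ (fun x => (f x, φ x)) '' D := by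
      have : closure (Q ×ˢ (univ : Set (ℕ → Bool))) ⊆ (fun x => (f x, φ x)) '' D := by
        refine closure_minimal ?_ hcl
        rintro ⟨y, t⟩ ⟨hy, -⟩
        have ht : t ∈ φ '' (f ⁻¹' {y} ∩ D) := by rw [hQφ y hy]; trivial
        obtain ⟨x, ⟨hx1, hx2⟩, rfl⟩ := ht
        exact ⟨x, hx2, Prod.ext hx1 rfl⟩
      rwa [closure_prod_eq, closure_univ] at this
    have hex : ∀ t : ULift.{u} (ℕ → Bool), ∃ x, f x = y ∧ φ x = t.down := by
      intro t
      obtain ⟨x, -, hx⟩ := hsub (show (y, t.down) ∈ _ from ⟨hy, trivial⟩)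
      exact ⟨x, congrArg Prod.fst hx, congrArg Prod.snd hx⟩
    choose e he1 he2 using hex
    have : Cardinal.mk (ULift.{u} (ℕ → Bool)) ≤ Cardinal.mk (f ⁻¹' {y}) := by
      refine Cardinal.mk_le_of_injective (f := fun t => (⟨e t, he1 t⟩ : f ⁻¹' {y})) ?_
      intro t t' h
      have h' : e t = e t' := congrArg Subtype.val h
      apply ULift.down_injective
      rw [← he2 t, h', he2]
    rw [Cardinal.mk_uLift, mk_fun] at this
    simpa using this

end Loose

/-- For compact metrizable `X, Y` and continuous `f : X → Y`:
`f` is `κ`-tight iff `{y : |f⁻¹{y}| ≥ κ}` is countable, and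
`f` is weakly c-tight iff `f` is `c`-tight where `c = 2^ℵ₀`. -/
theorem stmt2 {X Y : Type u}
    [TopologicalSpace X] [CompactSpace X] [TopologicalSpace.MetrizableSpace X]
    [TopologicalSpace Y] [CompactSpace Y] [TopologicalSpace.MetrizableSpace Y]
    (f : X → Y) (hf : Continuous f) (κ : Cardinal.{u}) :
    (IsTightCard κ f ↔ {y : Y | κ ≤ Cardinal.mk (f ⁻¹' {y})}.Countable) ∧
      (WeaklyCTight f ↔ IsTightCard Cardinal.continuum f) := by
  exact ⟨Loose.main_part f hf κ, Loose.weak_part f hf⟩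
end

section
/- For i = 0, 1, let X_i and Y_i be compact Hausdorff spaces, let f_i : X_i → Y_i be a continuous (m_i + 1)-tight map, let m_i ≤ n_i < ω, and assume that the fiber f_i⁻¹{y} has cardinality at most n_i for every y ∈ Y_i. Then f₀ × f₁ : X₀ × X₁ → Y₀ × Y₁ is (max(m₀n₁, m₁n₀) + 1)-tight. -/
open Set Topology

universe u

theorem scat_mono {Y : Type*} [TopologicalSpace Y] {A B : Set Y} (h : A ⊆ B)
    (hB : IsScatteredSet B) : IsScatteredSet A :=
  fun T hT hne => hB T (hT.trans h) hne

theorem scat_union {Y : Type*} [TopologicalSpace Y] [T1Space Y] {A B : Set Y}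
    (hA : IsScatteredSet A) (hB : IsScatteredSet B) : IsScatteredSet (A ∪ B) := by
  intro T hT hne
  by_cases h1 : (T ∩ A).Nonempty
  · obtain ⟨x, hx, U, hU, hUx⟩ := hA (T ∩ A) inter_subset_right h1
    have hxU : x ∈ U := by
      have : x ∈ U ∩ (T ∩ A) := by rw [hUx]; rfl
      exact this.1
    by_cases h2 : ((U ∩ T) \ {x}).Nonempty
    · have hsub : (U ∩ T) \ {x} ⊆ B := by
        rintro y ⟨⟨hyU, hyT⟩, hyx⟩
        rcases hT hyT with hyA | hyB
        · exfalso
          apply hyx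
          have : y ∈ U ∩ (T ∩ A) := ⟨hyU, hyT, hyA⟩
          rwa [hUx] at this
        · exact hyB
      obtain ⟨y, hy, V, hV, hVy⟩ := hB _ hsub h2
      refine ⟨y, hy.1.2, V ∩ (U ∩ {x}ᶜ), hV.inter (hU.inter isOpen_compl_singleton), ?_⟩
      rw [← hVy]
      ext z
      simp only [mem_inter_iff, mem_diff, mem_compl_iff, mem_singleton_iff]
      tauto
    · refine ⟨x, hx.1, U, hU, ?_⟩
      rw [not_nonempty_iff_eq_empty, diff_eq_empty] at h2
      exact Subset.antisymm h2 (singleton_subset_iff.2 ⟨hxU, hx.1⟩)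
  · refine hB T (fun y hy => ?_) hne
    rcases hT hy with h | h
    · exact (h1 ⟨y, hy, h⟩).elim
    · exact h

theorem scat_prod {Y Z : Type*} [TopologicalSpace Y] [TopologicalSpace Z] {Q : Set (Y × Z)}
    (hA : IsScatteredSet (Prod.fst '' Q)) (hB : IsScatteredSet (Prod.snd '' Q)) :
    IsScatteredSet Q := by
  intro T hT hne
  obtain ⟨y, ⟨⟨y', z'⟩, hyz, hy'⟩, U, hU, hUy⟩ :=
    hA (Prod.fst '' T) (image_mono hT) (hne.image _)
  simp only at hy'
  subst hy'
  obtain ⟨z, hz, V, hV, hVz⟩ := hB {z | (y', z) ∈ T} (fun z hz => ⟨(y', z), hT hz, rfl⟩)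
    ⟨z', hyz⟩
  have hy : y' ∈ U := by
    have : y' ∈ U ∩ Prod.fst '' T := by rw [hUy]; rfl
    exact this.1
  have hzV : z ∈ V := by
    have : z ∈ V ∩ {z | (y', z) ∈ T} := by rw [hVz]; rfl
    exact this.1
  refine ⟨(y', z), hz, U ×ˢ V, hU.prod hV, ?_⟩
  ext ⟨a, b⟩
  constructor
  · rintro ⟨⟨ha, hb⟩, hab⟩
    have h1 : a ∈ U ∩ Prod.fst '' T := ⟨ha, (a, b), hab, rfl⟩
    rw [hUy] at h1
    obtain rfl : a = y' := h1
    have h2 : b ∈ V ∩ {z | (a, z) ∈ T} := ⟨hb, hab⟩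
    rw [hVz] at h2
    obtain rfl : b = z := h2
    rfl
  · rintro h
    obtain ⟨rfl, rfl⟩ := Prod.mk.inj h
    exact ⟨⟨hy, hzV⟩, hz⟩

theorem loose_of_closed {X Y : Type u} [TopologicalSpace X] [CompactSpace X]
    [TopologicalSpace Y] [T2Space Y] {f : X → Y} (hf : Continuous f) {k : ℕ}
    (C : Fin k → Set X) (hC : ∀ i, IsClosed (C i)) (hd : Pairwise fun i j => Disjoint (C i) (C j))
    (hQ : ¬ IsScatteredSet (⋂ i, f '' C i)) (ht : IsTightCard (k : Cardinal.{u}) f) : False := by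
  set Q := ⋂ i, f '' C i with hQdef
  have hQc : IsClosed Q := isClosed_iInter fun i => ((hC i).isCompact.image hf).isClosed
  have hQn : Q.Nonempty := by
    by_contra h
    rw [not_nonempty_iff_eq_empty] at h
    apply hQ
    rw [h]
    intro T hT hne
    exact (hne.mono hT).ne_empty rfl |>.elim
  have him : ∀ i, f '' (C i ∩ f ⁻¹' Q) = Q := by
    intro i
    rw [image_inter_preimage]
    exact inter_eq_right.2 (iInter_subset _ i)
  have hinj : Function.Injective fun i => C i ∩ f ⁻¹' Q := by
    intro i j hij
    by_contra hne
    obtain ⟨x, hx⟩ : (C i ∩ f ⁻¹' Q).Nonempty := by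
      rw [← image_nonempty (f := f), him]; exact hQn
    have hx' : x ∈ C j ∩ f ⁻¹' Q := by
      have hij' : C i ∩ f ⁻¹' Q = C j ∩ f ⁻¹' Q := hij
      rwa [← hij']
    exact disjoint_left.1 (hd hne) hx.1 hx'.1
  apply ht
  refine ⟨range fun i => C i ∩ f ⁻¹' Q, ⟨?_, ?_, Q, hQ, ?_⟩, ?_⟩
  · rintro _ ⟨i, rfl⟩ _ ⟨j, rfl⟩ hne
    have : i ≠ j := fun h => hne (by rw [h])
    exact (hd this).mono inter_subset_left inter_subset_left
  · rintro _ ⟨i, rfl⟩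
    exact (hC i).inter (hQc.preimage hf)
  · rintro _ ⟨i, rfl⟩
    exact him i
  · have := Cardinal.mk_range_eq_of_injective hinj
    simpa using this

theorem scat_of_tuples {X Y : Type u} [TopologicalSpace X] [CompactSpace X] [T2Space X]
    [TopologicalSpace Y] [T2Space Y] {f : X → Y} (hf : Continuous f) {k : ℕ}
    (ht : IsTightCard (k : Cardinal.{u}) f) (T : Set (Fin k → X)) (hT : IsCompact T)
    (hinj : ∀ t ∈ T, Function.Injective t) :
    IsScatteredSet {y | ∃ t ∈ T, ∀ i, f (t i) = y} := by
  refine hT.induction_on (p := fun S => IsScatteredSet {y | ∃ t ∈ S, ∀ i, f (t i) = y})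
    ?_ ?_ ?_ ?_
  · intro S hS hne
    obtain ⟨y, hy⟩ := hne
    obtain ⟨t, h, _⟩ := hS hy
    exact h.elim
  · intro s t hst h
    exact scat_mono (by rintro y ⟨a, ha, hy⟩; exact ⟨a, hst ha, hy⟩) h
  · intro s t hs ht
    refine scat_mono ?_ (scat_union hs ht)
    rintro y ⟨a, ha | ha, hy⟩
    · exact Or.inl ⟨a, ha, hy⟩
    · exact Or.inr ⟨a, ha, hy⟩
  · intro t htT
    have hti := hinj t htT
    obtain ⟨U, hU, hUd⟩ := (finite_range t).t2_separation
    have hC : ∀ i, ∃ C ∈ 𝓝 (t i), IsClosed C ∧ C ⊆ U (t i) := fun i =>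
      exists_mem_nhds_isClosed_subset ((hU (t i)).2.mem_nhds (hU (t i)).1)
    choose C hCn hCc hCU using hC
    refine ⟨univ.pi C, mem_nhdsWithin_of_mem_nhds
      (set_pi_mem_nhds finite_univ fun i _ => hCn i), ?_⟩
    by_contra hns
    refine loose_of_closed hf C hCc ?_ (fun h => hns (scat_mono ?_ h)) ht
    · intro i j hij
      exact (hUd (mem_range_self i) (mem_range_self j) (hti.ne hij)).mono (hCU i) (hCU j)
    · rintro y ⟨a, ha, hy⟩
      exact mem_iInter.2 fun i => ⟨a i, ha i trivial, hy i⟩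

theorem scat_proj {X₀ Y₀ X₁ Y₁ ι : Type u} [Fintype ι]
    [TopologicalSpace X₀] [CompactSpace X₀] [T2Space X₀]
    [TopologicalSpace Y₀] [T2Space Y₀]
    [TopologicalSpace X₁] [CompactSpace X₁]
    (m₀ n₁ : ℕ) (f₀ : X₀ → Y₀) (f₁ : X₁ → Y₁) (hf₀ : Continuous f₀)
    (ht₀ : IsTightCard ((m₀ + 1 : ℕ) : Cardinal.{u}) f₀)
    (hb₁ : ∀ y : Y₁, Cardinal.mk (f₁ ⁻¹' {y}) ≤ (n₁ : Cardinal.{u}))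
    (P : ι → Set (X₀ × X₁)) (hP : ∀ i, IsClosed (P i))
    (hd : Pairwise fun i j => Disjoint (P i) (P j))
    (hcard : m₀ * n₁ < Fintype.card ι)
    (Q : Set (Y₀ × Y₁)) (hQ : ∀ i, Q ⊆ Prod.map f₀ f₁ '' P i) :
    IsScatteredSet (Prod.fst '' Q) := by
  classical
  let T : Set (Fin (m₀ + 1) → X₀) := ⋃ e : Fin (m₀ + 1) ↪ ι,
    Prod.fst '' {p : (Fin (m₀ + 1) → X₀) × X₁ | ∀ k, (p.1 k, p.2) ∈ P (e k)}
  have hT : IsCompact T := by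
    refine isCompact_iUnion fun e => IsCompact.image (IsClosed.isCompact ?_) continuous_fst
    simp only [Set.ofPred_forall]
    refine isClosed_iInter fun k => (hP (e k)).preimage (by fun_prop)
  have hinj : ∀ t ∈ T, Function.Injective t := by
    intro t ht i j hij
    obtain ⟨e, ⟨t, b⟩, hp, rfl⟩ := mem_iUnion.1 ht
    by_contra hne
    have h1 := hp i
    have h2 := hp j
    simp only at h1 h2 hij
    rw [hij] at h1
    exact disjoint_left.1 (hd (e.injective.ne hne)) h1 h2
  refine scat_mono ?_ (scat_of_tuples hf₀ ht₀ T hT hinj)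
  rintro _ ⟨⟨y, z⟩, hyz, rfl⟩
  have hx : ∀ i, ∃ p ∈ P i, Prod.map f₀ f₁ p = (y, z) := fun i => hQ i hyz
  choose p hp hpe using hx
  have hfin : (f₁ ⁻¹' {z}).Finite := by
    rw [← Cardinal.lt_aleph0_iff_set_finite]
    exact (hb₁ z).trans_lt Cardinal.natCast_lt_aleph0
  have hc : hfin.toFinset.card ≤ n₁ := by
    have h := hb₁ z
    rw [← hfin.coe_toFinset, Finset.coe_sort_coe, Cardinal.mk_coe_finset] at h
    exact_mod_cast h
  obtain ⟨b, hb, hlt⟩ := Finset.exists_lt_card_fiber_of_mul_lt_card_of_maps_to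
    (s := (Finset.univ : Finset ι)) (t := hfin.toFinset) (f := fun i => (p i).2) (n := m₀)
    (fun i _ => by
      rw [Set.Finite.mem_toFinset]
      exact congrArg Prod.snd (hpe i))
    (by
      rw [Finset.card_univ]
      refine lt_of_le_of_lt ?_ hcard
      rw [mul_comm]
      exact Nat.mul_le_mul_left _ hc)
  obtain ⟨s, hs, hsc⟩ := Finset.exists_subset_card_eq (Nat.succ_le_of_lt hlt)
  let e : Fin (m₀ + 1) ↪ ι := (s.equivFinOfCardEq hsc).symm.toEmbedding.trans
    (Function.Embedding.subtype _)
  have he : ∀ k, (p (e k)).2 = b := by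
    intro k
    have := hs ((s.equivFinOfCardEq hsc).symm k).2
    exact (Finset.mem_filter.1 this).2
  refine ⟨fun k => (p (e k)).1, mem_iUnion.2 ⟨e, (fun k => (p (e k)).1, b), ?_, rfl⟩, ?_⟩
  · intro k
    show ((p (e k)).1, b) ∈ P (e k)
    rw [← he k]
    exact hp _
  · intro k
    exact congrArg Prod.fst (hpe (e k))

/-- Product of tight maps: if `fᵢ : Xᵢ → Yᵢ` is `(mᵢ+1)`-tight with all fibers of size at
most `nᵢ` (`mᵢ ≤ nᵢ`), then `f₀ × f₁` is `(max(m₀n₁, m₁n₀) + 1)`-tight. -/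
theorem stmt6 {X₀ Y₀ X₁ Y₁ : Type u}
    [TopologicalSpace X₀] [CompactSpace X₀] [T2Space X₀]
    [TopologicalSpace Y₀] [CompactSpace Y₀] [T2Space Y₀]
    [TopologicalSpace X₁] [CompactSpace X₁] [T2Space X₁]
    [TopologicalSpace Y₁] [CompactSpace Y₁] [T2Space Y₁]
    (m₀ n₀ m₁ n₁ : ℕ) (hm₀ : m₀ ≤ n₀) (hm₁ : m₁ ≤ n₁)
    (f₀ : X₀ → Y₀) (f₁ : X₁ → Y₁) (hf₀ : Continuous f₀) (hf₁ : Continuous f₁)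
    (ht₀ : IsTightCard ((m₀ + 1 : ℕ) : Cardinal.{u}) f₀)
    (ht₁ : IsTightCard ((m₁ + 1 : ℕ) : Cardinal.{u}) f₁)
    (hb₀ : ∀ y : Y₀, Cardinal.mk (f₀ ⁻¹' {y}) ≤ (n₀ : Cardinal.{u}))
    (hb₁ : ∀ y : Y₁, Cardinal.mk (f₁ ⁻¹' {y}) ≤ (n₁ : Cardinal.{u})) :
    IsTightCard ((max (m₀ * n₁) (m₁ * n₀) + 1 : ℕ) : Cardinal.{u}) (Prod.map f₀ f₁) := by
  classical
  rintro ⟨Ps, ⟨hd, hcl, Q, hQ, him⟩, hcard⟩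
  have hfin : Finite Ps := by
    rw [← Cardinal.lt_aleph0_iff_finite, hcard]
    exact Cardinal.natCast_lt_aleph0
  have := Fintype.ofFinite Ps
  have hc : Fintype.card Ps = max (m₀ * n₁) (m₁ * n₀) + 1 := by
    rw [Cardinal.mk_fintype] at hcard
    exact_mod_cast hcard
  have hd' : Pairwise fun i j : Ps => Disjoint i.1 j.1 := fun i j hij =>
    hd i.2 j.2 (Subtype.coe_ne_coe.2 hij)
  apply hQ
  apply scat_prod
  · refine scat_proj m₀ n₁ f₀ f₁ hf₀ ht₀ hb₁ (fun i : Ps => i.1) (fun i => hcl _ i.2) hd' ?_ Q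
      (fun i => (him _ i.2).ge)
    rw [hc]
    exact Nat.lt_succ_of_le (le_max_left _ _)
  · have h := scat_proj m₁ n₀ f₁ f₀ hf₁ ht₁ hb₀ (fun i : Ps => Prod.swap ⁻¹' i.1)
      (fun i => (hcl _ i.2).preimage continuous_swap) (fun i j hij => (hd' hij).preimage _) ?_
      (Prod.swap ⁻¹' Q) ?_
    · convert h using 1
      ext z
      simp
    · rw [hc]
      exact Nat.lt_succ_of_le (le_max_right _ _)
    · rintro i ⟨z, y⟩ hzy
      have hzy' : (y, z) ∈ Q := hzy
      rw [← him _ i.2] at hzy'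
      obtain ⟨⟨a, b⟩, hab, he⟩ := hzy'
      refine ⟨(b, a), hab, ?_⟩
      simp only [Prod.map_apply, Prod.mk.injEq] at he ⊢
      exact ⟨he.2, he.1⟩
end

section
/- Let n be finite and let X_i, for i ≤ n, be a compact separable LOTS. Then ∏_{i≤n} X_i is (2^n + 1)-dissipated. Furthermore, if all the X_i are not scattered and at most one of the X_i is second countable, then ∏_{i≤n} X_i is not 2^n-dissipated. -/
open Set Topology

universe u

open Filter

/-- Monotone Urysohn. -/
lemma mono_urysohn {X : Type} [LinearOrder X] [TopologicalSpace X] [OrderTopology X]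
    [CompactSpace X] {a b : X} (hab : a < b) :
    ∃ h : X → ℝ, Continuous h ∧ Monotone h ∧ (∀ x, 0 ≤ h x ∧ h x ≤ 1) ∧ h a < h b := by
  obtain ⟨u, hu0, hu1, hu⟩ := exists_continuous_zero_one_of_isClosed
    (isClosed_Iic (a := a)) (isClosed_Ici (a := b)) (by
      rw [Set.disjoint_left]
      intro x hx hx'
      exact absurd (lt_of_lt_of_le hab (le_trans hx' hx)) (lt_irrefl _))
  let f : X → X → ℝ := fun x y => u (min x y)
  have hf : Continuous ↿f := by
    show Continuous (fun p : X × X => u (min p.1 p.2))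
    fun_prop
  have hbdd : ∀ x, BddAbove (f x '' univ) := by
    intro x
    refine ⟨1, ?_⟩
    rintro _ ⟨y, -, rfl⟩
    exact (hu _).2
  have hne : ∀ x, (f x '' univ).Nonempty := fun x => ⟨_, ⟨x, mem_univ _, rfl⟩⟩
  refine ⟨fun x => sSup (f x '' univ), isCompact_univ.continuous_sSup hf, ?_, ?_, ?_⟩
  · intro x x' hx
    refine csSup_le_csSup (hbdd x') (hne x) ?_
    rintro _ ⟨y, -, rfl⟩
    refine ⟨min x y, mem_univ _, ?_⟩
    simp only [f]
    rw [← min_assoc, min_eq_right hx]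
  · intro x
    constructor
    · exact le_trans (hu _).1 (le_csSup (hbdd x) ⟨x, mem_univ _, rfl⟩)
    · refine csSup_le (hne x) ?_
      rintro _ ⟨y, -, rfl⟩
      exact (hu _).2
  · have h0 : sSup (f a '' univ) ≤ 0 := by
      refine csSup_le (hne a) ?_
      rintro _ ⟨y, -, rfl⟩
      exact le_of_eq (hu0 (show min a y ∈ Iic a from min_le_left _ _))
    have h1 : 1 ≤ sSup (f b '' univ) := by
      refine le_csSup (hbdd b) ⟨b, mem_univ _, ?_⟩
      simp only [f, min_self]
      exact hu1 (show b ∈ Ici b from le_refl b)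
    show sSup (f a '' univ) < sSup (f b '' univ)
    linarith

/-- The admissible functions. -/
def MF (X : Type) [LinearOrder X] [TopologicalSpace X] : Set (X → ℝ) :=
  {h | Continuous h ∧ Monotone h ∧ ∀ x, 0 ≤ h x ∧ h x ≤ 1}

/-- Combine countably many monotone functions into one. -/
lemma combine {X : Type} [LinearOrder X] [TopologicalSpace X]
    (S : Set (X → ℝ)) (hS : S.Countable) (hSM : S ⊆ MF X) :
    ∃ F : X → Icc (0:ℝ) 2, Continuous F ∧ Monotone F ∧
      ∀ x y, F x = F y → ∀ h ∈ S, h x = h y := by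
  have hz : (fun _ => 0 : X → ℝ) ∈ MF X :=
    ⟨continuous_const, monotone_const, fun x => ⟨le_refl _, zero_le_one⟩⟩
  obtain ⟨h, hh⟩ := (hS.insert (fun _ => 0 : X → ℝ)).exists_eq_range ⟨_, mem_insert _ _⟩
  have hM : ∀ k, h k ∈ MF X := by
    intro k
    have : h k ∈ insert (fun _ => 0 : X → ℝ) S := hh ▸ mem_range_self k
    rcases this with e | e
    · rw [e]; exact hz
    · exact hSM e
  have hb : ∀ k x, ‖(1/2:ℝ)^k * h k x‖ ≤ (1/2:ℝ)^k := by
    intro k x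
    have := (hM k).2.2 x
    rw [Real.norm_of_nonneg (mul_nonneg (by positivity) this.1)]
    exact mul_le_of_le_one_right (by positivity) this.2
  have hsum : ∀ x, Summable (fun k => (1/2:ℝ)^k * h k x) := fun x =>
    Summable.of_norm_bounded summable_geometric_two (fun k => hb k x)
  have hterm : ∀ {x y}, x ≤ y → ∀ k, (1/2:ℝ)^k * h k x ≤ (1/2:ℝ)^k * h k y := by
    intro x y hxy k
    exact mul_le_mul_of_nonneg_left ((hM k).2.1 hxy) (by positivity)
  have key : ∀ x y, x ≤ y → (∑' k, (1/2:ℝ)^k * h k x) = (∑' k, (1/2:ℝ)^k * h k y) →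
      ∀ k, h k x = h k y := by
    intro x y hxy he k
    by_contra hne
    have hlt : (1/2:ℝ)^k * h k x < (1/2:ℝ)^k * h k y :=
      mul_lt_mul_of_pos_left (lt_of_le_of_ne ((hM k).2.1 hxy) hne) (by positivity)
    have := Summable.tsum_lt_tsum (hterm hxy) hlt (hsum x) (hsum y)
    exact absurd he this.ne
  refine ⟨fun x => ⟨∑' k, (1/2:ℝ)^k * h k x, ?_, ?_⟩, ?_, ?_, ?_⟩
  · exact tsum_nonneg fun k => mul_nonneg (by positivity) ((hM k).2.2 x).1
  · refine le_trans ?_ tsum_geometric_two.le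
    exact (hsum x).tsum_le_tsum (fun k => (le_abs_self _).trans (hb k x)) summable_geometric_two
  · refine Continuous.subtype_mk ?_ _
    exact continuous_tsum (fun k => continuous_const.mul (hM k).1) summable_geometric_two hb
  · intro x y hxy
    exact (hsum x).tsum_le_tsum (hterm hxy) (hsum y)
  · intro x y hxy g hg
    have hxy' := congrArg Subtype.val hxy
    have : g ∈ range h := hh ▸ mem_insert_of_mem _ hg
    obtain ⟨k, rfl⟩ := this
    rcases le_total x y with hle | hle
    · exact key x y hle hxy' k
    · exact (key y x hle hxy'.symm k).symm

/-- A map with small fibres. -/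
lemma exists_small {X : Type} [LinearOrder X] [TopologicalSpace X] [OrderTopology X]
    [CompactSpace X] [TopologicalSpace.SeparableSpace X]
    (S : Set (X → ℝ)) (hS : S.Countable) (hSM : S ⊆ MF X) :
    ∃ F : X → Icc (0:ℝ) 2, Continuous F ∧ Monotone F ∧
      (∀ x y, F x = F y → ∀ h ∈ S, h x = h y) ∧ ∀ x y z, x < y → y < z → F x ≠ F z := by
  obtain ⟨D, hDc, hD⟩ := TopologicalSpace.exists_countable_dense X
  let E : Set (X × X) := (D ×ˢ D) ∪ {p | p.1 ∈ D ∧ p.1 ⋖ p.2}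
  have hE : E.Countable := by
    refine (hDc.prod hDc).union ?_
    have : MapsTo Prod.fst {p : X × X | p.1 ∈ D ∧ p.1 ⋖ p.2} D := fun p hp => hp.1
    refine Set.MapsTo.countable_of_injOn this ?_ hDc
    rintro ⟨a, b⟩ ⟨-, h1⟩ ⟨a', b'⟩ ⟨-, h2⟩ (rfl : a = a')
    simp only at h1 h2
    rw [h1.unique_right h2]
  have hu : ∀ p : X × X, ∃ h ∈ MF X, p.1 < p.2 → h p.1 < h p.2 := by
    intro p
    by_cases hp : p.1 < p.2
    · obtain ⟨h, h1, h2, h3, h4⟩ := mono_urysohn hp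
      exact ⟨h, ⟨h1, h2, h3⟩, fun _ => h4⟩
    · exact ⟨fun _ => 0, ⟨continuous_const, monotone_const,
        fun x => ⟨le_refl _, zero_le_one⟩⟩, fun h => absurd h hp⟩
  choose u huM hu using hu
  obtain ⟨F, F1, F2, F3⟩ := combine (S ∪ u '' E) (hS.union (hE.image u)) (by
    rintro h (h' | ⟨p, -, rfl⟩)
    · exact hSM h'
    · exact huM p)
  have hsep : ∀ p ∈ E, p.1 < p.2 → F p.1 ≠ F p.2 := by
    intro p hp hlt he
    exact absurd (F3 _ _ he (u p) (Or.inr ⟨p, hp, rfl⟩)) (hu p hlt).ne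
  refine ⟨F, F1, F2, fun x y hxy h hh => F3 x y hxy h (Or.inl hh), ?_⟩
  intro x y z hxy hyz he
  have hc : ∀ a b, x ≤ a → a ≤ b → b ≤ z → F a = F b := fun a b h1 h2 h3 =>
    le_antisymm (F2 h2) ((F2 h3).trans (he ▸ F2 h1))
  obtain ⟨d, ⟨hd1, hd2⟩, hdD⟩ := hD.inter_open_nonempty (Ioo x z) isOpen_Ioo ⟨y, hxy, hyz⟩
  by_cases h1 : (Ioo d z).Nonempty
  · obtain ⟨d', ⟨h3, h4⟩, h5⟩ := hD.inter_open_nonempty (Ioo d z) isOpen_Ioo h1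
    exact hsep (d, d') (Or.inl ⟨hdD, h5⟩) h3 (hc _ _ hd1.le h3.le h4.le)
  · refine hsep (d, z) (Or.inr ⟨hdD, hd2, ?_⟩) hd2 (hc _ _ hd1.le hd2.le le_rfl)
    intro c h3 h4
    exact h1 ⟨c, h3, h4⟩

/-- A continuous map on a product of LOTS depends on countably many monotone functions. -/
lemma countable_dep {m : ℕ} (X : Fin m → Type)
    [∀ i, LinearOrder (X i)] [∀ i, TopologicalSpace (X i)] [∀ i, OrderTopology (X i)]
    [∀ i, CompactSpace (X i)] (Z : Type) [TopologicalSpace Z] [CompactSpace Z]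
    [TopologicalSpace.MetrizableSpace Z] (g : (∀ i, X i) → Z) (hg : Continuous g) :
    ∃ S : ∀ i, Set (X i → ℝ), (∀ i, (S i).Countable) ∧ (∀ i, S i ⊆ MF (X i)) ∧
      ∀ x y, (∀ i, ∀ h ∈ S i, h (x i) = h (y i)) → g x = g y := by
  let _ := TopologicalSpace.metrizableSpaceMetric Z
  let U : (Σ i, ↥(MF (X i))) → Set ((∀ i, X i) × (∀ i, X i)) :=
    fun j => {p | (j.2 : X j.1 → ℝ) (p.1 j.1) ≠ (j.2 : X j.1 → ℝ) (p.2 j.1)}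
  have hU : ∀ j, IsOpen (U j) := by
    intro j
    have := j.2.2.1
    exact isOpen_ne_fun (by fun_prop) (by fun_prop)
  let K : ℕ → Set ((∀ i, X i) × (∀ i, X i)) := fun k => {p | 1 / ((k:ℝ) + 1) ≤ dist (g p.1) (g p.2)}
  have hK : ∀ k, IsCompact (K k) := fun k =>
    (isClosed_le continuous_const (by fun_prop)).isCompact
  have hKU : ∀ k, K k ⊆ ⋃ j, U j := by
    intro k p hp
    have hne : p.1 ≠ p.2 := by
      intro he
      have hp' : 1 / ((k:ℝ) + 1) ≤ dist (g p.1) (g p.2) := hp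
      rw [he, dist_self] at hp'
      have : 0 < 1 / ((k:ℝ) + 1) := by positivity
      linarith
    obtain ⟨i, hi⟩ := Function.ne_iff.1 hne
    rcases lt_or_gt_of_ne hi with hlt | hlt
    · obtain ⟨h, h1, h2, h3, h4⟩ := mono_urysohn hlt
      exact mem_iUnion.2 ⟨⟨i, h, h1, h2, h3⟩, h4.ne⟩
    · obtain ⟨h, h1, h2, h3, h4⟩ := mono_urysohn hlt
      exact mem_iUnion.2 ⟨⟨i, h, h1, h2, h3⟩, h4.ne'⟩
  choose t ht using fun k => (hK k).elim_finite_subcover U hU (hKU k)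
  refine ⟨fun i => {h | ∃ k, ∃ j ∈ t k, ∃ e : j.1 = i, h = e ▸ j.2.1}, ?_, ?_, ?_⟩
  · intro i
    have hc : (⋃ k, (t k : Set (Σ i, ↥(MF (X i))))).Countable :=
      countable_iUnion fun k => (t k).finite_toSet.countable
    classical
    refine (hc.image (fun j : (Σ i, ↥(MF (X i))) => if e : j.1 = i then e ▸ j.2.1 else fun _ => 0)).mono ?_
    rintro h ⟨k, j, hj, e, rfl⟩
    exact ⟨j, mem_iUnion.2 ⟨k, hj⟩, by simp [e]⟩
  · rintro i h ⟨k, ⟨i', j⟩, hj, e, rfl⟩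
    simp only at e
    subst e
    exact j.2
  · intro x y hxy
    by_contra hne
    obtain ⟨k, hk⟩ := exists_nat_one_div_lt (dist_pos.2 hne)
    have : (x, y) ∈ K k := hk.le
    have := ht k this
    simp only [mem_iUnion] at this
    obtain ⟨j, hj, hj'⟩ := this
    exact hj' (hxy j.1 j.2.1 ⟨k, j, hj, rfl, rfl⟩)

lemma part1_tight {n : ℕ} (X : Fin (n + 1) → Type)
    [∀ i, LinearOrder (X i)] [∀ i, TopologicalSpace (X i)] [∀ i, OrderTopology (X i)]
    [∀ i, CompactSpace (X i)] (F : ∀ i, X i → Icc (0:ℝ) 2)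
    (hF : ∀ i, Continuous (F i)) (hM : ∀ i, Monotone (F i))
    (h2 : ∀ i x y z, x < y → y < z → F i x ≠ F i z) :
    IsTightCard ((2 ^ n + 1 : ℕ) : Cardinal.{0})
      (fun (x : ∀ i, X i) (i : Fin (n + 1)) => F i (x i)) := by
  classical
  rintro ⟨Ps, ⟨hdisj, hcl, Q, hQ, hPQ⟩, hcard⟩
  have hfc : Continuous (fun (x : ∀ i, X i) (i : Fin (n + 1)) => F i (x i)) := by
    refine continuous_pi fun i => ?_
    have := hF i
    fun_prop
  simp only [IsScatteredSet, not_forall] at hQ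
  obtain ⟨T, hTQ, ⟨q, hq⟩, hT⟩ := hQ
  push Not at hT
  have hne : (𝓝[T \ {q}] q).NeBot := by
    rw [← mem_closure_iff_nhdsWithin_neBot, mem_closure_iff]
    intro o ho hqo
    by_contra hemp
    refine hT q hq o ho ?_
    ext y
    constructor
    · rintro ⟨h3, h4⟩
      by_contra h5
      exact hemp ⟨y, h3, h4, h5⟩
    · rintro rfl
      exact ⟨hqo, hq⟩
  let W : Ultrafilter (Fin (n + 1) → Icc (0:ℝ) 2) := Ultrafilter.of (𝓝[T \ {q}] q)
  have hW : (W : Filter _) ≤ 𝓝[T \ {q}] q := Ultrafilter.of_le _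
  have hWq : (W : Filter _) ≤ 𝓝 q := hW.trans nhdsWithin_le_nhds
  have hWT : ∀ᶠ y in (W : Filter _), y ∈ T \ {q} := hW self_mem_nhdsWithin
  -- pick a direction
  have hdir : ∃ i, (∀ᶠ y in (W : Filter (Fin (n + 1) → Icc (0:ℝ) 2)), y i < q i) ∨
      (∀ᶠ y in (W : Filter (Fin (n + 1) → Icc (0:ℝ) 2)), q i < y i) := by
    by_contra hcon
    push Not at hcon
    have : ∀ i, ∀ᶠ y in (W : Filter (Fin (n + 1) → Icc (0:ℝ) 2)), y i = q i := by
      intro i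
      have h3 := (hcon i).1
      have h4 := (hcon i).2
      filter_upwards [h3, h4] with y h5 h6
      exact le_antisymm h6 h5
    have h7 := eventually_all.2 this
    obtain ⟨y, hy, hy'⟩ := (hWT.and h7).exists
    exact hy.2 (funext hy')
  obtain ⟨i, hi⟩ := hdir
  have hp : ∀ P : Ps, ∃ p ∈ P.1, (∀ k, F k (p k) = q k) ∧
      ∀ c, F i c = q i → ((∀ᶠ y in (W : Filter (Fin (n + 1) → Icc (0:ℝ) 2)), y i < q i) → p i ≤ c) ∧
        ((∀ᶠ y in (W : Filter (Fin (n + 1) → Icc (0:ℝ) 2)), q i < y i) → c ≤ p i) := by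
    rintro ⟨P, hP⟩
    have hs : ∀ y, ∃ x : ∀ i, X i, y ∈ T → x ∈ P ∧ (fun i => F i (x i)) = y := by
      have hx : ∀ y ∈ T, ∃ x ∈ P, (fun i => F i (x i)) = y := by
        intro y hy
        have : y ∈ Q := hTQ hy
        rw [← hPQ P hP] at this
        exact this
      intro y
      by_cases hy : y ∈ T
      · obtain ⟨x, hx⟩ := hx y hy
        exact ⟨x, fun _ => hx⟩
      · obtain ⟨x, hx⟩ := hx q hq
        exact ⟨x, fun h => absurd h hy⟩
    choose s hs using hs
    obtain ⟨p, hpP, hp⟩ := (hcl P hP).isCompact.ultrafilter_le_nhds (W.map s) (by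
      rw [le_principal_iff]
      show ∀ᶠ y in (W : Filter _), s y ∈ P
      filter_upwards [hWT] with y hy
      exact (hs y hy.1).1)
    have hp' : Tendsto s W (𝓝 p) := hp
    have hfp : (fun k => F k (p k)) = q := by
      have h3 : Tendsto (fun y k => F k (s y k)) W (𝓝 (fun k => F k (p k))) :=
        (hfc.tendsto p).comp hp'
      have h4 : Tendsto (fun y k => F k (s y k)) W (𝓝 q) := by
        refine Tendsto.congr' ?_ (show Tendsto id (W : Filter _) (𝓝 q) from hWq)
        filter_upwards [hWT] with y hy
        exact (hs y hy.1).2.symm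
      exact tendsto_nhds_unique h3 h4
    have hpi : Tendsto (fun y => s y i) W (𝓝 (p i)) := (continuous_apply i).continuousAt.tendsto.comp hp'
    refine ⟨p, hpP, fun k => congrFun hfp k, fun c hc => ⟨fun h => ?_, fun h => ?_⟩⟩
    · refine le_of_tendsto hpi ?_
      filter_upwards [h, hWT] with y hy hyT
      by_contra hcon
      have := hM i (not_le.1 hcon).le
      rw [hc, show F i (s y i) = y i from congrFun (hs y hyT.1).2 i] at this
      exact absurd hy (not_lt.2 this)
    · refine ge_of_tendsto hpi ?_
      filter_upwards [h, hWT] with y hy hyT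
      by_contra hcon
      have := hM i (not_le.1 hcon).le
      rw [hc, show F i (s y i) = y i from congrFun (hs y hyT.1).2 i] at this
      exact absurd hy (not_lt.2 this)
  choose p hpP hpq hpi using hp
  have hpieq : ∀ P P', p P i = p P' i := by
    intro P P'
    rcases hi with h | h
    · exact le_antisymm ((hpi P _ (hpq P' i)).1 h) ((hpi P' _ (hpq P i)).1 h)
    · exact le_antisymm ((hpi P' _ (hpq P i)).2 h) ((hpi P _ (hpq P' i)).2 h)
  have hPne : Nonempty Ps := by
    rw [← Cardinal.mk_ne_zero_iff, hcard]
    exact Nat.cast_ne_zero.2 (Nat.succ_ne_zero _)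
  obtain ⟨P0⟩ := hPne
  let c : Ps → ({k // k ≠ i} → Bool) := fun P k => decide (p P k = p P0 k)
  have hc : Function.Injective c := by
    intro P P' he
    have : p P = p P' := by
      funext k
      by_cases hk : k = i
      · subst hk; exact hpieq _ _
      · have h3 := congrFun he ⟨k, hk⟩
        simp only [c, decide_eq_decide] at h3
        by_cases h4 : p P k = p P0 k
        · rw [h4, h3.1 h4]
        · have h5 : p P' k ≠ p P0 k := fun h => h4 (h3.2 h)
          by_contra h6
          have e1 := hpq P k
          have e2 := hpq P' k
          have e3 := hpq P0 k
          have key := h2 k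
          rcases lt_or_gt_of_ne h4 with a1 | a1 <;> rcases lt_or_gt_of_ne h5 with a2 | a2 <;>
            rcases lt_or_gt_of_ne h6 with a3 | a3
          all_goals first
            | exact key _ _ _ a1 a2 (by rw [e1, e2])
            | exact key _ _ _ a2 a1 (by rw [e1, e2])
            | exact key _ _ _ a3 a2 (by rw [e1, e3])
            | exact key _ _ _ a3 a1 (by rw [e2, e3])
            | exact key _ _ _ a1 a3 (by rw [e2, e3])
            | exact key _ _ _ a2 a3 (by rw [e1, e3])
    by_contra hPP
    have hd := hdisj P.2 P'.2 (fun h => hPP (Subtype.ext h))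
    exact Set.disjoint_left.1 hd (hpP P) (this ▸ hpP P')
  have hle := Cardinal.mk_le_of_injective hc
  rw [hcard, Cardinal.mk_fintype, Nat.cast_le] at hle
  simp [Fintype.card_subtype_compl] at hle

lemma part1 (n : ℕ) (X : Fin (n + 1) → Type)
    [∀ i, LinearOrder (X i)] [∀ i, TopologicalSpace (X i)] [∀ i, OrderTopology (X i)]
    [∀ i, CompactSpace (X i)] [∀ i, TopologicalSpace.SeparableSpace (X i)] :
    IsDissipatedCard ((2 ^ n + 1 : ℕ) : Cardinal.{0}) (∀ i, X i) := by
  intro Z _ _ _ g hg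
  obtain ⟨S, hSc, hSM, hS⟩ := countable_dep X Z g hg
  choose F F1 F2 F3 F4 using fun i => exists_small (S i) (hSc i) (hSM i)
  refine ⟨Fin (n + 1) → Icc (0:ℝ) 2, inferInstance, inferInstance, inferInstance,
    fun x i => F i (x i), ?_, part1_tight X F F1 F2 F4, ?_⟩
  · exact continuous_pi fun i => (F1 i).comp (continuous_apply i)
  · intro x y hxy
    exact hS x y fun i h hh => F3 i _ _ (congrFun hxy i) h hh

/-- Finite-fibred maps keep dense-in-itself sets. -/
lemma not_scattered_image {X Y : Type} [TopologicalSpace X] [T1Space X] [TopologicalSpace Y]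
    (k : X → Y) (hk : Continuous k) (hfib : ∀ x, {y | k y = k x}.Finite)
    (hX : ¬ IsScatteredSet (Set.univ : Set X)) : ¬ IsScatteredSet (range k) := by
  simp only [IsScatteredSet, not_forall] at hX
  obtain ⟨T, -, ⟨q, hq⟩, hT⟩ := hX
  push Not at hT
  intro hs
  obtain ⟨y, ⟨x, hx, rfl⟩, V, hV, hVT⟩ := hs (k '' T) (image_subset_range _ _) ⟨k q, q, hq, rfl⟩
  have hsub : k ⁻¹' V ∩ T ⊆ {y | k y = k x} := by
    rintro z ⟨hz, hzT⟩
    have : k z ∈ V ∩ k '' T := ⟨hz, z, hzT, rfl⟩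
    rw [hVT] at this
    exact this
  have hfin := (hfib x).subset hsub
  have hxV : x ∈ k ⁻¹' V := by
    have : k x ∈ V ∩ k '' T := by rw [hVT]; rfl
    exact this.1
  refine hT x hx (k ⁻¹' V \ ((k ⁻¹' V ∩ T) \ {x})) ?_ ?_
  · exact (hV.preimage hk).sdiff (hfin.subset sdiff_subset).isClosed
  · ext z
    constructor
    · rintro ⟨⟨h1, h2⟩, h3⟩
      by_contra h4
      exact h2 ⟨⟨h1, h3⟩, h4⟩
    · rintro rfl
      exact ⟨⟨hxV, fun h => h.2 rfl⟩, hx⟩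

/-- Countably many jumps implies second countable. -/
lemma second_countable_of_jumps {X : Type} [LinearOrder X] [TopologicalSpace X] [OrderTopology X]
    [TopologicalSpace.SeparableSpace X] (h : {p : X × X | p.1 ⋖ p.2}.Countable) :
    SecondCountableTopology X := by
  obtain ⟨D, hDc, hD⟩ := TopologicalSpace.exists_countable_dense X
  let C : Set X := D ∪ (Prod.fst '' {p : X × X | p.1 ⋖ p.2} ∪ Prod.snd '' {p : X × X | p.1 ⋖ p.2})
  have hC : C.Countable := hDc.union ((h.image _).union (h.image _))
  have hbt : ∀ a x : X, a < x → (a ∉ C ∨ x ∉ C) → ∃ d ∈ C, a < d ∧ d < x := by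
    intro a x hax hor
    by_cases hne : (Ioo a x).Nonempty
    · obtain ⟨d, hd, hdD⟩ := hD.inter_open_nonempty _ isOpen_Ioo hne
      exact ⟨d, Or.inl hdD, hd.1, hd.2⟩
    · have hj : a ⋖ x := ⟨hax, fun c h1 h2 => hne ⟨c, h1, h2⟩⟩
      rcases hor with h1 | h1
      · exact absurd (Or.inr (Or.inl ⟨(a, x), hj, rfl⟩)) h1
      · exact absurd (Or.inr (Or.inr ⟨(a, x), hj, rfl⟩)) h1
  refine ⟨⟨Ioi '' C ∪ Iio '' C, (hC.image _).union (hC.image _), ?_⟩⟩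
  apply le_antisymm
  · refine TopologicalSpace.le_generateFrom_iff_subset_isOpen.2 ?_
    rintro _ (⟨c, -, rfl⟩ | ⟨c, -, rfl⟩)
    · exact isOpen_Ioi
    · exact isOpen_Iio
  · rw [OrderTopology.topology_eq_generate_intervals (α := X)]
    refine le_generateFrom ?_
    have h1 : ∀ c ∈ C, IsOpen[TopologicalSpace.generateFrom (Ioi '' C ∪ Iio '' C)] (Ioi c) :=
      fun c hc => TopologicalSpace.isOpen_generateFrom_of_mem (Or.inl ⟨c, hc, rfl⟩)
    have h2 : ∀ c ∈ C, IsOpen[TopologicalSpace.generateFrom (Ioi '' C ∪ Iio '' C)] (Iio c) :=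
      fun c hc => TopologicalSpace.isOpen_generateFrom_of_mem (Or.inr ⟨c, hc, rfl⟩)
    rintro _ ⟨a, rfl | rfl⟩
    · by_cases ha : a ∈ C
      · exact h1 a ha
      · have : Ioi a = ⋃ c ∈ {c ∈ C | a < c}, Ioi c := by
          ext x
          simp only [mem_iUnion, mem_Ioi, mem_ofPred_eq, exists_prop]
          constructor
          · intro hx
            obtain ⟨d, hd, h3, h4⟩ := hbt a x hx (Or.inl ha)
            exact ⟨d, ⟨hd, h3⟩, h4⟩
          · rintro ⟨d, ⟨-, h3⟩, h4⟩
            exact h3.trans h4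
        rw [this]
        exact @isOpen_biUnion _ _ (TopologicalSpace.generateFrom _) _ _ fun c hc => h1 c hc.1
    · by_cases ha : a ∈ C
      · exact h2 a ha
      · have : Iio a = ⋃ c ∈ {c ∈ C | c < a}, Iio c := by
          ext x
          simp only [mem_iUnion, mem_Iio, mem_ofPred_eq, exists_prop]
          constructor
          · intro hx
            obtain ⟨d, hd, h3, h4⟩ := hbt x a hx (Or.inr ha)
            exact ⟨d, ⟨hd, h4⟩, h3⟩
          · rintro ⟨d, ⟨-, h3⟩, h4⟩
            exact h4.trans h3
        rw [this]
        exact @isOpen_biUnion _ _ (TopologicalSpace.generateFrom _) _ _ fun c hc => h2 c hc.1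

/-- A continuous map to a metric space separates only countably many jumps. -/
lemma countable_bad_jumps {X E : Type} [LinearOrder X] [TopologicalSpace X] [OrderTopology X]
    [CompactSpace X] [PseudoMetricSpace E] (F : X → E) (hF : Continuous F) :
    {p : X × X | p.1 ⋖ p.2 ∧ 0 < dist (F p.1) (F p.2)}.Countable := by
  have hfin : ∀ ε > 0, {p : X × X | p.1 ⋖ p.2 ∧ ε ≤ dist (F p.1) (F p.2)}.Finite := by
    intro ε hε
    have hN : ∀ c : X, ∃ U ∈ 𝓝 c, U.OrdConnected ∧ ∀ x ∈ U, dist (F x) (F c) < ε / 2 := by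
      intro c
      have : F ⁻¹' (Metric.ball (F c) (ε / 2)) ∈ 𝓝 c :=
        hF.continuousAt.preimage_mem_nhds (Metric.ball_mem_nhds _ (half_pos hε))
      exact ⟨ordConnectedComponent _ c, ordConnectedComponent_mem_nhds.2 this, inferInstance,
        fun x hx => Metric.mem_ball.1 (mem_preimage.1 (ordConnectedComponent_subset hx))⟩
    choose U hU hUc hUd using hN
    obtain ⟨t, -, ht⟩ := isCompact_univ.elim_nhds_subcover U (fun x _ => hU x)
    have hm : ∀ x : X, ∃ c ∈ t, x ∈ U c := by
      intro x
      simpa using ht (mem_univ x)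
    choose m hmt hmU using hm
    refine Set.Finite.of_finite_image (f := fun p => m p.1) ?_ ?_
    · refine t.finite_toSet.subset ?_
      rintro _ ⟨p, -, rfl⟩
      exact hmt _
    · have hout : ∀ p : X × X, ε ≤ dist (F p.1) (F p.2) → p.2 ∉ U (m p.1) := by
        intro p hp hin
        have h1 := hUd _ _ hin
        have h2 := hUd _ _ (hmU p.1)
        have := dist_triangle_right (F p.1) (F p.2) (F (m p.1))
        linarith
      have hle : ∀ p p' : X × X, p.1 ⋖ p.2 → p'.1 ⋖ p'.2 → ε ≤ dist (F p.1) (F p.2) →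
          m p.1 = m p'.1 → p'.1 ≤ p.1 := by
        intro p p' h1 h2 h3 h4
        by_contra hcon
        refine hout p h3 ?_
        exact (hUc (m p.1)).out (hmU p.1) (h4 ▸ hmU p'.1) ⟨h1.le, h1.ge_of_gt (not_le.1 hcon)⟩
      rintro p ⟨h1, h2⟩ p' ⟨h1', h2'⟩ he
      have e := le_antisymm (hle p' p h1' h1 h2' he.symm) (hle p p' h1 h1' h2 he)
      refine Prod.ext e ?_
      rw [e] at h1
      exact h1.unique_right h1'
  refine (countable_iUnion fun k : ℕ => (hfin (1 / ((k:ℝ) + 1)) (by positivity)).countable).mono ?_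
  rintro p ⟨h1, h2⟩
  obtain ⟨k, hk⟩ := exists_nat_one_div_lt h2
  exact mem_iUnion.2 ⟨k, h1, hk.le⟩

/-- A map on the product does not see some jump in a non-second-countable coordinate. -/
lemma exists_invisible_jump {m : ℕ} (X : Fin m → Type)
    [∀ i, LinearOrder (X i)] [∀ i, TopologicalSpace (X i)] [∀ i, OrderTopology (X i)]
    [∀ i, CompactSpace (X i)] [∀ i, TopologicalSpace.SeparableSpace (X i)]
    (Y : Type) [MetricSpace Y] (f : (∀ i, X i) → Y) (hf : Continuous f) (i : Fin m)
    (hi : ¬ SecondCountableTopology (X i)) :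
    ∃ a b : X i, a < b ∧ ∀ z, f (Function.update z i a) = f (Function.update z i b) := by
  let G : C(X i × (∀ i, X i), Y) := ⟨fun p => f (Function.update p.2 i p.1),
    hf.comp (Continuous.update continuous_snd i continuous_fst)⟩
  by_contra hcon
  push Not at hcon
  refine hi (second_countable_of_jumps
    ((countable_bad_jumps (fun t => G.curry t) G.curry.continuous).mono ?_))
  rintro p hp
  refine ⟨hp, dist_pos.2 fun he => ?_⟩
  obtain ⟨z, hz⟩ := hcon p.1 p.2 hp.lt
  exact hz (congrArg (fun k : C((∀ i, X i), Y) => k z) he)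

lemma part2 (n : ℕ) (X : Fin (n + 1) → Type)
    [∀ i, LinearOrder (X i)] [∀ i, TopologicalSpace (X i)] [∀ i, OrderTopology (X i)]
    [∀ i, CompactSpace (X i)] [∀ i, TopologicalSpace.SeparableSpace (X i)]
    (hns : ∀ i, ¬ IsScatteredSet (Set.univ : Set (X i)))
    (hsc : ∀ i j, SecondCountableTopology (X i) → SecondCountableTopology (X j) → i = j) :
    ¬ IsDissipatedCard ((2 ^ n : ℕ) : Cardinal.{0}) (∀ i, X i) := by
  classical
  have hi0 : ∃ i0 : Fin (n + 1), ∀ i, i ≠ i0 → ¬ SecondCountableTopology (X i) := by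
    by_cases h : ∃ i, SecondCountableTopology (X i)
    · obtain ⟨i, hi⟩ := h
      exact ⟨i, fun j hj hj' => hj (hsc j i hj' hi)⟩
    · push Not at h
      exact ⟨0, fun i _ hi => h i hi⟩
  obtain ⟨i0, hi0⟩ := hi0
  intro hdis
  obtain ⟨F, F1, F2, -, F4⟩ := exists_small (X := X i0) ∅ countable_empty (empty_subset _)
  obtain ⟨Y, tY, hYc, hYm, f, hf, htight, hfiner⟩ :=
    hdis (Icc (0:ℝ) 2) (fun x => F (x i0)) (F1.comp (continuous_apply i0))
  let _ := TopologicalSpace.metrizableSpaceMetric Y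
  have hne : ∀ i, Nonempty (X i) := by
    intro i
    by_contra h
    refine hns i fun T _ hT => ?_
    exact absurd ⟨hT.some⟩ h
  have hjump : ∀ i, ∃ a b : X i, (i ≠ i0 → a < b) ∧
      (i ≠ i0 → ∀ z, f (Function.update z i a) = f (Function.update z i b)) := by
    intro i
    by_cases hi : i = i0
    · obtain ⟨a⟩ := hne i
      exact ⟨a, a, fun h => absurd hi h, fun h => absurd hi h⟩
    · obtain ⟨a, b, h1, h2⟩ := exists_invisible_jump X Y f hf i (hi0 i hi)
      exact ⟨a, b, fun _ => h1, fun _ => h2⟩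
  choose a b hab hfab using hjump
  -- sign choices
  let pt : (Fin (n + 1) → Bool) → X i0 → ∀ i, X i := fun s t =>
    Function.update (fun i => if s i then b i else a i) i0 t
  have hpt : ∀ s t, pt s t i0 = t := fun s t => by simp [pt]
  have hpt' : ∀ s t i, i ≠ i0 → pt s t i = if s i then b i else a i := fun s t i hi => by
    simp [pt, hi]
  have hflip : ∀ (A : Finset (Fin (n + 1))) t, i0 ∉ A →
      f (pt (fun i => decide (i ∈ A)) t) = f (pt (fun _ => false) t) := by
    intro A t
    induction A using Finset.induction_on with
    | empty => intro _; simp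
    | insert j A hj ih =>
      intro hA
      have hj0 : j ≠ i0 := fun h => hA (by simp [h])
      rw [← ih (fun h => hA (Finset.mem_insert_of_mem h))]
      have e1 : pt (fun i => decide (i ∈ insert j A)) t =
          Function.update (pt (fun i => decide (i ∈ A)) t) j (b j) := by
        funext k
        by_cases hk : k = j
        · subst hk; simp [hpt' _ _ _ hj0]
        · by_cases hk0 : k = i0
          · subst hk0; simp [hpt, hk]
          · simp [hpt' _ _ _ hk0, hk]
      have e2 : pt (fun i => decide (i ∈ A)) t =
          Function.update (pt (fun i => decide (i ∈ A)) t) j (a j) := by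
        funext k
        by_cases hk : k = j
        · subst hk; simp [hpt' _ _ _ hj0, hj]
        · simp [hk]
      rw [e1, ← hfab j hj0, ← e2]
  let S := {s : Fin (n + 1) → Bool // s i0 = false}
  have hfs : ∀ (s : S) t, f (pt s.1 t) = f (pt (fun _ => false) t) := by
    intro s t
    rw [← hflip (Finset.univ.filter fun i => s.1 i = true) t (by simp [s.2])]
    congr 2
    funext i
    simp
  have hptc : ∀ s, Continuous (pt s) := fun s =>
    Continuous.update continuous_const i0 continuous_id
  have hP : ∀ s s' : S, s ≠ s' → Disjoint (range (pt s.1)) (range (pt s'.1)) := by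
    intro s s' hss
    rw [Set.disjoint_left]
    rintro _ ⟨t, rfl⟩ ⟨t', ht'⟩
    refine hss (Subtype.ext (funext fun i => ?_))
    by_cases hi : i = i0
    · rw [hi, s.2, s'.2]
    · have h1 := congrFun ht' i
      rw [hpt' _ _ _ hi, hpt' _ _ _ hi] at h1
      have h2 := (hab i hi).ne
      cases h3 : s.1 i <;> cases h4 : s'.1 i <;> simp [h3, h4, h2, h2.symm] at h1 ⊢
  have hinj : Function.Injective (fun s : S => range (pt s.1)) := by
    intro s s' he
    by_contra hss
    have hd := hP s s' hss
    have he' : range (pt s.1) = range (pt s'.1) := he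
    rw [he'] at hd
    obtain ⟨t⟩ := hne i0
    exact Set.disjoint_left.1 hd ⟨t, rfl⟩ ⟨t, rfl⟩
  refine htight ⟨range (fun s : S => range (pt s.1)), ⟨?_, ?_, range (fun t => f (pt (fun _ => false) t)), ?_, ?_⟩, ?_⟩
  · rintro _ ⟨s, rfl⟩ _ ⟨s', rfl⟩ h
    exact hP s s' fun e => h (by rw [e])
  · rintro _ ⟨s, rfl⟩
    exact (isCompact_range (hptc s.1)).isClosed
  · refine not_scattered_image _ (hf.comp (hptc _)) ?_ (hns i0)
    intro x
    by_contra hinf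
    have hinf : {y | f (pt (fun _ => false) y) = f (pt (fun _ => false) x)}.Infinite := hinf
    obtain ⟨u, hu, hu3⟩ := hinf.exists_subset_card_eq 3
    have hFe : ∀ y ∈ u, F y = F x := by
      intro y hy
      have := hfiner _ _ (hu hy)
      simpa [hpt] using this
    let o := u.orderEmbOfFin hu3
    have hlt : ∀ i j, i < j → o i < o j := fun i j h => o.strictMono h
    refine F4 (o 0) (o 1) (o 2) (hlt _ _ (by decide)) (hlt _ _ (by decide)) ?_
    rw [hFe _ (u.orderEmbOfFin_mem hu3 0), hFe _ (u.orderEmbOfFin_mem hu3 2)]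
  · rintro _ ⟨s, rfl⟩
    rw [← range_comp]
    congr 1
    funext t
    exact hfs s t
  · rw [Cardinal.mk_range_eq _ hinj]
    let e : S ≃ ({i : Fin (n + 1) // i ≠ i0} → Bool) :=
      { toFun := fun s i => s.1 i
        invFun := fun r => ⟨fun i => if h : i = i0 then false else r ⟨i, h⟩, by simp⟩
        left_inv := by
          intro s
          ext i
          by_cases h : i = i0
          · subst h; simp [s.2]
          · simp [h]
        right_inv := by
          intro r
          funext i
          simp [i.2] }
    rw [Cardinal.mk_congr e, Cardinal.mk_fintype]
    simp [Fintype.card_subtype_compl]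

/-- A product of `n+1` compact separable LOTSes is `(2^n + 1)`-dissipated; moreover, if
all factors are non-scattered and at most one is second countable, the product is not
`2^n`-dissipated. -/
theorem stmt13 (n : ℕ) (X : Fin (n + 1) → Type)
    [∀ i, LinearOrder (X i)] [∀ i, TopologicalSpace (X i)] [∀ i, OrderTopology (X i)]
    [∀ i, CompactSpace (X i)] [∀ i, TopologicalSpace.SeparableSpace (X i)] :
    IsDissipatedCard ((2 ^ n + 1 : ℕ) : Cardinal.{0}) (∀ i, X i) ∧
      ((∀ i, ¬ IsScatteredSet (Set.univ : Set (X i))) →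
        (∀ i j, SecondCountableTopology (X i) → SecondCountableTopology (X j) → i = j) →
        ¬ IsDissipatedCard ((2 ^ n : ℕ) : Cardinal.{0}) (∀ i, X i)) := by
  exact ⟨part1 n X, part2 n X⟩
end

section
/- Let L be a compact LOTS, let 1 ≤ m < ω, and let f : [ω₁]^m → L be continuous, where [ω₁]^m = {(α₁,…,α_m) ∈ ω₁^m : α₁ < ⋯ < α_m} carries the subspace topology from the product of order topologies. Then there exist a club C ⊆ ω₁, a continuous map g : C → L (with C given the subspace topology from ω₁), and an index j ∈ {1,…,m} such that f(α₁,…,α_m) = g(α_j) for all (α₁,…,α_m) ∈ [C]^m, and g is either strictly increasing, or strictly decreasing, or constant. -/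
open Set

noncomputable section

/-- The first uncountable ordinal. -/
def omega1 : Ordinal.{0} := (Cardinal.aleph 1).ord

/-- `ω₁` as a linearly ordered set: the set of ordinals below `ω₁`. -/
abbrev Omega1 : Type 1 := ↥(Set.Iio omega1)

/-- The order topology on `ω₁`. -/
instance : TopologicalSpace Omega1 := Preorder.topology Omega1

instance : OrderTopology Omega1 := ⟨rfl⟩

/-- A club in `ω₁` : a subset closed in the order topology and unbounded. -/
def IsClubIn (C : Set Omega1) : Prop :=
  IsClosed C ∧ ∀ x : Omega1, ∃ y ∈ C, x ≤ y

open Filter Topology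

theorem om_countable_Iio (a : Omega1) : (Set.Iio a).Countable := by
  have h1 : (Set.Iio a.1).Countable := by
    rw [← Cardinal.le_aleph0_iff_set_countable, Cardinal.mk_Iio_ordinal]
    have h2 : a.1.card < Cardinal.aleph 1 := Cardinal.lt_ord.1 a.2
    have h3 : a.1.card ≤ Cardinal.aleph0 := by
      rw [← Order.lt_succ_iff, Cardinal.succ_aleph0]; exact h2
    rw [← Cardinal.lift_aleph0.{1,0}]
    exact Cardinal.lift_le.2 h3
  have h2 : Set.Iio a = Subtype.val ⁻¹' (Set.Iio a.1) := by ext x; rfl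
  rw [h2]
  exact h1.preimage Subtype.val_injective

theorem om_countable_Iic (a : Omega1) : (Set.Iic a).Countable := by
  rw [← Set.Iio_insert]; exact (om_countable_Iio a).insert _

theorem om_uncountable : ¬ (Set.univ : Set Omega1).Countable := by
  intro h
  have h1 : (Set.Iio omega1).Countable := by
    rw [← Set.countable_coe_iff]
    exact Set.countable_univ_iff.1 h
  rw [← Cardinal.le_aleph0_iff_set_countable, Cardinal.mk_Iio_ordinal] at h1
  simp [omega1] at h1

theorem om_bdd {S : Set Omega1} (hS : S.Countable) : ∃ y, ∀ x ∈ S, x < y := by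
  by_contra! h
  apply om_uncountable
  refine (hS.biUnion (fun x _ => om_countable_Iic x)).mono ?_
  intro y _
  obtain ⟨x, hx, hxy⟩ := h y
  simp only [Set.mem_iUnion]
  exact ⟨x, hx, hxy⟩

theorem om_exists_gt (x : Omega1) : ∃ y, x < y := by
  obtain ⟨y, hy⟩ := om_bdd (Set.countable_singleton x)
  exact ⟨y, hy x rfl⟩

instance om_nomax : NoMaxOrder Omega1 := ⟨om_exists_gt⟩

instance om_bot : OrderBot Omega1 where
  bot := ⟨0, by
    change (0 : Ordinal) < omega1
    rw [omega1, Cardinal.lt_ord]; simp⟩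
  bot_le a := by
    change (0 : Ordinal) ≤ a.1
    exact zero_le

theorem om_Iic_nhds (a : Omega1) : Set.Iic a ∈ 𝓝 a := by
  obtain ⟨b, hb, hmin⟩ := (wellFounded_lt (α := Omega1)).has_min (Set.Ioi a) (om_exists_gt a)
  filter_upwards [Iio_mem_nhds hb] with x hx
  by_contra hxa
  exact hmin x (Set.mem_Ioi.2 (lt_of_not_ge fun h => hxa h)) hx

theorem om_mem_closure {S : Set Omega1} {γ : Omega1} (h0 : ∃ z, z < γ)
    (h : ∀ z < γ, ∃ y ∈ S, z < y ∧ y ≤ γ) : γ ∈ closure S := by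
  rw [mem_closure_iff_nhds]
  intro U hU
  obtain ⟨l, hl, hlU⟩ := exists_Ioc_subset_of_mem_nhds hU h0
  obtain ⟨y, hy, h1, h2⟩ := h l hl
  exact ⟨y, hlU ⟨h1, h2⟩, hy⟩

/-- diagonal intersection -/
theorem club_diag {ι : Type*} (r : ι → Omega1) (hr : ∀ x, {i | r i ≤ x}.Countable)
    (D : ι → Set Omega1) (hD : ∀ i, IsClubIn (D i)) :
    IsClubIn {β | ∀ i, r i < β → β ∈ D i} := by
  constructor
  · rw [← isOpen_compl_iff, isOpen_iff_mem_nhds]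
    intro β hβ
    simp only [Set.mem_compl_iff, Set.mem_ofPred_eq, not_forall] at hβ
    obtain ⟨i, hi, hβi⟩ := hβ
    filter_upwards [Ioi_mem_nhds hi, (hD i).1.isOpen_compl.mem_nhds hβi] with x hx hx2 hx3
    exact hx2 (hx3 i hx)
  · intro x0
    have hnext : ∀ i x, ∃ y ∈ D i, x < y := by
      intro i x
      obtain ⟨z, hz⟩ := om_exists_gt x
      obtain ⟨y, hy, hzy⟩ := (hD i).2 z
      exact ⟨y, hy, hz.trans_le hzy⟩
    choose nx hnxD hnx using hnext
    have hstep : ∀ x, ∃ y, x < y ∧ ∀ i, r i ≤ x → nx i x < y := by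
      intro x
      obtain ⟨y, hy⟩ := om_bdd (((hr x).image (fun i => nx i x)).insert x)
      exact ⟨y, hy x (Set.mem_insert _ _), fun i hi =>
        hy _ (Set.mem_insert_of_mem _ ⟨i, hi, rfl⟩)⟩
    choose st hst1 hst2 using hstep
    let u : ℕ → Omega1 := fun n => st^[n] x0
    have hu : ∀ n, u (n+1) = st (u n) := fun n => Function.iterate_succ_apply' _ _ _
    have humono : StrictMono u := strictMono_nat_of_lt_succ fun n => by rw [hu]; exact hst1 _
    obtain ⟨y, hy⟩ := om_bdd (Set.countable_range u)
    obtain ⟨γ, hγ, hmin⟩ := (wellFounded_lt (α := Omega1)).has_min {y | ∀ n, u n < y}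
      ⟨y, fun n => hy _ ⟨n, rfl⟩⟩
    have hγ' : ∀ n, u n < γ := hγ
    have hlim : ∀ z < γ, ∃ n, z ≤ u n := by
      intro z hz
      by_contra! h
      exact hmin z h hz
    refine ⟨γ, ?_, (hγ' 0).le⟩
    intro i hi
    rw [← (hD i).1.closure_eq]
    refine om_mem_closure ⟨_, hi⟩ ?_
    intro z hz
    obtain ⟨n, hn⟩ := hlim z hz
    obtain ⟨k, hk⟩ := hlim _ hi
    have hk' : r i ≤ u (max n k) := hk.trans (humono.monotone (le_max_right _ _))
    refine ⟨nx i (u (max n k)), hnxD _ _, ?_, ?_⟩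
    · exact (hn.trans (humono.monotone (le_max_left _ _))).trans_lt (hnx _ _)
    · refine (hst2 _ i hk').le.trans ?_
      rw [← hu]; exact (hγ' _).le

theorem club_univ : IsClubIn Set.univ := ⟨isClosed_univ, fun x => ⟨x, trivial, le_rfl⟩⟩

theorem club_Ici (x : Omega1) : IsClubIn (Set.Ici x) :=
  ⟨isClosed_Ici, fun y => ⟨max x y, Set.mem_Ici.2 (le_max_left _ _), le_max_right _ _⟩⟩

theorem club_iInter {ι : Type*} [Countable ι] (D : ι → Set Omega1) (hD : ∀ i, IsClubIn (D i)) :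
    IsClubIn (⋂ i, D i) := by
  refine ⟨isClosed_iInter fun i => (hD i).1, fun x => ?_⟩
  obtain ⟨y, hy, hxy⟩ := (club_diag (fun _ : ι => (⊥ : Omega1)) (fun x => Set.to_countable _)
    D hD).2 (max x (Classical.choose (om_exists_gt ⊥)))
  have h := Classical.choose_spec (om_exists_gt ⊥)
  exact ⟨y, Set.mem_iInter.2 fun i => hy i (h.trans_le ((le_max_right _ _).trans hxy)),
    (le_max_left _ _).trans hxy⟩

/-- The club filter. -/
def clubF : Filter Omega1 := Filter.ofCountableInter {S | ∃ C, IsClubIn C ∧ C ⊆ S}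
  (by
    intro S hS hSl
    have : Countable S := hS
    choose D hD hDS using fun s : S => hSl s.2
    refine ⟨⋂ i, D i, club_iInter D hD, ?_⟩
    intro x hx s hs
    exact hDS ⟨s, hs⟩ (Set.mem_iInter.1 hx ⟨s, hs⟩))
  (fun s t ⟨C, hC, hCs⟩ hst => ⟨C, hC, hCs.trans hst⟩)

instance clubF_cInter : CountableInterFilter clubF := by
  unfold clubF; infer_instance

theorem mem_clubF {S : Set Omega1} : S ∈ clubF ↔ ∃ C, IsClubIn C ∧ C ⊆ S := Iff.rfl

theorem clubF_of_club {C : Set Omega1} (h : IsClubIn C) : C ∈ clubF := ⟨C, h, Subset.rfl⟩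

instance clubF_neBot : NeBot clubF := by
  rw [neBot_iff]
  intro h
  have : (∅ : Set Omega1) ∈ clubF := by rw [h]; trivial
  obtain ⟨C, hC, h⟩ := this
  obtain ⟨y, hy, _⟩ := hC.2 ⊥
  exact h hy

theorem clubF_gt (x : Omega1) : ∀ᶠ β in clubF, x < β := by
  obtain ⟨y, hy⟩ := om_exists_gt x
  filter_upwards [clubF_of_club (club_Ici y)] with β hβ
  exact hy.trans_le hβ

theorem clubF_gt_all {k : ℕ} (a : Fin k → Omega1) : ∀ᶠ β in clubF, ∀ i, a i < β :=
  eventually_all.2 fun i => clubF_gt (a i)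

theorem clubF_diag {ι : Type*} (r : ι → Omega1) (hr : ∀ x, {i | r i ≤ x}.Countable)
    (P : ι → Omega1 → Prop) (hP : ∀ i, ∀ᶠ β in clubF, P i β) :
    ∀ᶠ β in clubF, ∀ i, r i < β → P i β := by
  choose D hD hDP using hP
  exact ⟨_, club_diag r hr D hD, fun β hβ i hi => hDP i (hβ i hi)⟩

theorem clubF_diag' (P : Omega1 → Omega1 → Prop) (hP : ∀ x, ∀ᶠ β in clubF, P x β) :
    ∀ᶠ β in clubF, ∀ x < β, P x β :=
  clubF_diag id om_countable_Iic P hP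

theorem clubF_limit {S : Set Omega1} (hS : S ∈ clubF) :
    ∀ᶠ γ in clubF, γ ∈ closure (S ∩ Set.Iio γ) := by
  have h : ∀ x, ∃ y ∈ S, x < y := fun x => by
    obtain ⟨y, h1, h2⟩ := (Filter.Eventually.and (p := fun y => y ∈ S) hS (clubF_gt x)).exists
    exact ⟨y, h1, h2⟩
  choose y hyS hy using h
  filter_upwards [clubF_gt ⊥, clubF_diag' (fun x β => y x < β) (fun x => clubF_gt _)] with γ h0 h1
  exact om_mem_closure ⟨_, h0⟩ fun z hz => ⟨y z, ⟨hyS z, h1 z hz⟩, hy z, (h1 z hz).le⟩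

/-- Sets closed on a tail are decided by the club filter. -/
theorem clubF_dich (A : Omega1 → Prop) (x : Omega1) (hA : IsClosed (Set.Ici x ∩ {β | A β})) :
    (∀ᶠ β in clubF, A β) ∨ ∀ᶠ β in clubF, ¬ A β := by
  by_cases h : ∀ z, ∃ y ∈ Set.Ici x ∩ {β | A β}, z ≤ y
  · left
    exact ⟨_, ⟨hA, h⟩, fun y hy => hy.2⟩
  · right
    push Not at h
    obtain ⟨z, hz⟩ := h
    filter_upwards [clubF_gt x, clubF_gt z] with β h1 h2 h3
    exact absurd (hz β ⟨h1.le, h3⟩) (not_lt.2 h2.le)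

/-- Append a last coordinate. -/
def sn {k : ℕ} (a : Fin k → Omega1) (β : Omega1) : Fin (k+1) → Omega1 :=
  Fin.snoc (α := fun _ => Omega1) a β

@[simp] theorem sn_castSucc {k : ℕ} (a : Fin k → Omega1) (β : Omega1) (i : Fin k) :
    sn a β i.castSucc = a i := by simp [sn]

@[simp] theorem sn_last {k : ℕ} (a : Fin k → Omega1) (β : Omega1) :
    sn a β (Fin.last k) = β := by simp [sn]

/-- Remove the last coordinate. -/
def ini {k : ℕ} (v : Fin (k+1) → Omega1) : Fin k → Omega1 := fun i => v i.castSucc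

theorem sn_ini {k : ℕ} (v : Fin (k+1) → Omega1) : sn (ini v) (v (Fin.last k)) = v := by
  funext i
  refine Fin.lastCases ?_ (fun i => ?_) i <;> simp [ini]

theorem sn_strictMono {k : ℕ} {a : Fin k → Omega1} {β : Omega1} (ha : StrictMono a)
    (hβ : ∀ i, a i < β) : StrictMono (sn a β) := by
  intro i
  refine Fin.lastCases ?_ (fun i => ?_) i
  · intro j hj
    exact absurd hj (not_lt.2 (Fin.le_last j))
  · intro j
    refine Fin.lastCases ?_ (fun j => ?_) j
    · intro _; simpa using hβ i
    · intro hij; simpa using ha (by simpa using hij)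

theorem ini_strictMono {k : ℕ} {v : Fin (k+1) → Omega1} (hv : StrictMono v) :
    StrictMono (ini v) := fun i j hij => hv (by simpa using hij)

theorem ini_lt {k : ℕ} {v : Fin (k+1) → Omega1} (hv : StrictMono v) (i : Fin k) :
    ini v i < v (Fin.last k) := hv (Fin.castSucc_lt_last i)

theorem sn_continuous_left {k : ℕ} (β : Omega1) :
    Continuous (fun a : Fin k → Omega1 => sn a β) := by
  refine continuous_pi fun i => ?_
  refine Fin.lastCases ?_ (fun i => ?_) i
  · simpa using continuous_const
  · simpa using continuous_apply i

theorem sn_continuous_right {k : ℕ} (a : Fin k → Omega1) :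
    Continuous (fun β : Omega1 => sn a β) := by
  refine continuous_pi fun i => ?_
  refine Fin.lastCases ?_ (fun i => ?_) i
  · simp only [sn_last]; exact continuous_id
  · simpa using continuous_const

theorem isOpen_SM (k : ℕ) : IsOpen {v : Fin k → Omega1 | StrictMono v} := by
  have : {v : Fin k → Omega1 | StrictMono v} =
      ⋂ i : Fin k, ⋂ j : Fin k, {v | i < j → v i < v j} := by
    ext v; simp [StrictMono]
  rw [this]
  refine isOpen_iInter_of_finite fun i => isOpen_iInter_of_finite fun j => ?_
  by_cases h : i < j
  · simpa [h] using isOpen_lt (continuous_apply i) (continuous_apply j)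
  · simp [h]

theorem tup_countable {k : ℕ} (x : Fin k → Omega1) :
    {a : Fin k → Omega1 | ∀ i, a i ≤ x i}.Countable :=
  Set.countable_pi (s := fun i => Set.Iic (x i)) fun i => om_countable_Iic (x i)

theorem tup_closure {k : ℕ} {a : Fin k → Omega1} {D : Set (Fin k → Omega1)}
    (ha : a ∈ closure D) : ∃ D' ⊆ D, D'.Countable ∧ a ∈ closure D' := by
  refine ⟨D ∩ {b | ∀ i, b i ≤ a i}, Set.inter_subset_left,
    (tup_countable a).mono Set.inter_subset_right, ?_⟩
  have hn : {b : Fin k → Omega1 | ∀ i, b i ≤ a i} ∈ 𝓝 a := by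
    refine eventually_all.2 fun i => ?_
    exact (continuous_apply i).continuousAt.eventually (om_Iic_nhds (a i))
  rw [mem_closure_iff_nhds] at ha ⊢
  intro U hU
  obtain ⟨b, hb, hbD⟩ := ha _ (inter_mem hU hn)
  exact ⟨b, hb.1, hbD, hb.2⟩

/-- Passing to closures under the club quantifier. -/
theorem clubF_closure {k : ℕ} {a : Fin k → Omega1} {D : Set (Fin k → Omega1)}
    (ha : a ∈ closure D) (P : (Fin k → Omega1) → Omega1 → Prop)
    (hD : ∀ b ∈ D, ∀ᶠ β in clubF, P b β)
    (hP : ∀ᶠ β in clubF, a ∈ closure {b | b ∈ D ∧ P b β} → P a β) :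
    ∀ᶠ β in clubF, P a β := by
  obtain ⟨D', hD', hc, ha'⟩ := tup_closure ha
  have h := (eventually_countable_ball (l := clubF) hc (p := fun β b _ => P b β)).2
    fun b hb => hD b (hD' hb)
  filter_upwards [h, hP] with β h1 h2
  refine h2 (closure_mono ?_ ha')
  intro b hb
  exact ⟨hD' hb, h1 b hb⟩

/-- Almost everywhere (on `[C]^k` for a club `C`). -/
def EE {k : ℕ} (P : (Fin k → Omega1) → Prop) : Prop :=
  ∃ C ∈ clubF, ∀ v, StrictMono v → (∀ i, v i ∈ C) → P v

/-- Relatively closed predicates. -/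
def RC {k : ℕ} (P : (Fin k → Omega1) → Prop) : Prop :=
  ∀ a, StrictMono a → a ∈ closure {b | StrictMono b ∧ P b} → P a

theorem RC_desc {k : ℕ} {P : (Fin (k+1) → Omega1) → Prop} (hP : RC P) :
    RC (fun a : Fin k → Omega1 => ∀ᶠ β in clubF, P (sn a β)) := by
  intro a ha hcl
  have h := clubF_closure hcl (fun b β => (∀ i, b i < β) ∧ P (sn b β)) ?_ ?_
  · exact h.mono fun β hβ => hβ.2
  · intro b hb
    exact (clubF_gt_all b).and hb.2
  · filter_upwards [clubF_gt_all a] with β hβ hc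
    refine ⟨hβ, hP _ (sn_strictMono ha hβ) ?_⟩
    refine map_mem_closure (f := fun b => sn b β) (sn_continuous_left β) hc ?_
    intro b hb
    exact ⟨sn_strictMono hb.1.1 hb.2.1, hb.2.2⟩

theorem RC_dich {k : ℕ} {P : (Fin (k+1) → Omega1) → Prop} (hP : RC P)
    {a : Fin k → Omega1} (ha : StrictMono a) :
    (∀ᶠ β in clubF, P (sn a β)) ∨ ∀ᶠ β in clubF, ¬ P (sn a β) := by
  obtain ⟨x, hx⟩ := (clubF_gt_all a).exists
  refine clubF_dich (fun β => P (sn a β)) x ?_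
  refine isClosed_of_closure_subset fun β hβ => ?_
  have hβx : x ≤ β := by
    have := closure_mono Set.inter_subset_left hβ
    rw [isClosed_Ici.closure_eq] at this
    exact this
  refine ⟨hβx, ?_⟩
  refine hP _ (sn_strictMono ha fun i => (hx i).trans_le hβx) ?_
  refine map_mem_closure (sn_continuous_right a) hβ ?_
  intro b hb
  exact ⟨sn_strictMono ha fun i => (hx i).trans_le hb.1, hb.2⟩

theorem EE_collapse {k : ℕ} {P : (Fin (k+1) → Omega1) → Prop}
    (h : EE (fun a : Fin k → Omega1 => ∀ᶠ β in clubF, P (sn a β))) : EE P := by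
  obtain ⟨C, hC, h⟩ := h
  have hd := clubF_diag (ι := Fin k → Omega1) (fun a => Finset.univ.sup a)
    (fun x => (tup_countable (fun _ => x)).mono (by
      intro a ha i
      exact (Finset.le_sup (f := a) (Finset.mem_univ i)).trans ha))
    (fun a β => StrictMono a → (∀ i, a i ∈ C) → P (sn a β)) (by
      intro a
      by_cases ha : StrictMono a ∧ ∀ i, a i ∈ C
      · exact (h a ha.1 ha.2).mono fun β hβ _ _ => hβ
      · exact Eventually.of_forall fun β h1 h2 => absurd ⟨h1, h2⟩ ha)
  refine ⟨C ∩ ({β | ⊥ < β} ∩ {β | ∀ a : Fin k → Omega1, Finset.univ.sup a < β →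
    StrictMono a → (∀ i, a i ∈ C) → P (sn a β)}), inter_mem hC (inter_mem (clubF_gt ⊥) hd), ?_⟩
  intro v hv hvC
  rw [← sn_ini v]
  refine (hvC (Fin.last k)).2.2 (ini v) ?_ (ini_strictMono hv) (fun i => (hvC _).1)
  rw [Finset.sup_lt_iff (hvC (Fin.last k)).2.1]
  exact fun i _ => ini_lt hv i

theorem EE_mono {k : ℕ} {P Q : (Fin k → Omega1) → Prop} (h : EE P)
    (hPQ : ∀ v, StrictMono v → P v → Q v) : EE Q := by
  obtain ⟨C, hC, h⟩ := h
  exact ⟨C, hC, fun v hv hvC => hPQ v hv (h v hv hvC)⟩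

theorem EE_and {k : ℕ} {P Q : (Fin k → Omega1) → Prop} (h : EE P) (h' : EE Q) :
    EE (fun v => P v ∧ Q v) := by
  obtain ⟨C, hC, h⟩ := h
  obtain ⟨C', hC', h'⟩ := h'
  exact ⟨C ∩ C', inter_mem hC hC', fun v hv hvC =>
    ⟨h v hv fun i => (hvC i).1, h' v hv fun i => (hvC i).2⟩⟩

theorem EE_all {k : ℕ} {C : Set Omega1} (hC : C ∈ clubF) :
    EE (fun v : Fin k → Omega1 => ∀ i, v i ∈ C) := ⟨C, hC, fun _ _ h => h⟩

theorem EE_dich {k : ℕ} : ∀ {A B : (Fin k → Omega1) → Prop}, RC A → RC B →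
    EE (fun v => A v ∨ B v) → EE A ∨ EE B := by
  induction k with
  | zero =>
    rintro A B - - ⟨C, hC, h⟩
    have hv : ∀ v : Fin 0 → Omega1, v = Fin.elim0 := fun v => Subsingleton.elim _ _
    rcases h Fin.elim0 (fun i => i.elim0) (fun i => i.elim0) with h | h
    · left; exact ⟨C, hC, fun v _ _ => by rw [hv v]; exact h⟩
    · right; exact ⟨C, hC, fun v _ _ => by rw [hv v]; exact h⟩
  | succ k ih =>
    rintro A B hA hB ⟨C, hC, h⟩
    refine (ih (RC_desc hA) (RC_desc hB) ?_).imp EE_collapse EE_collapse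
    refine ⟨C, hC, fun a ha haC => ?_⟩
    rcases RC_dich hA ha with h1 | h1
    · exact Or.inl h1
    · right
      filter_upwards [h1, hC, clubF_gt_all a] with β hβ hβC hgt
      refine (h _ (sn_strictMono ha hgt) fun i => ?_).resolve_left hβ
      refine Fin.lastCases ?_ (fun i => ?_) i
      · simpa using hβC
      · simpa using haC i

section main
universe u

theorem cw {X Y : Type*} [TopologicalSpace X] [TopologicalSpace Y] {f : X → Y} {x : X}
    {s : Set X} (hf : ContinuousAt f x) (hx : x ∈ closure s) (K : Set Y) (hK : IsClosed K)
    (h : ∀ y ∈ s, f y ∈ K) : f x ∈ K := by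
  have := hf.continuousWithinAt.mem_closure hx h
  rwa [hK.closure_eq] at this

set_option linter.unusedSectionVars false

variable {L : Type u} [LinearOrder L] [TopologicalSpace L] [OrderTopology L]

theorem cont_left {k : ℕ} {f : (Fin (k+1) → Omega1) → L} (hf : ContinuousOn f {v | StrictMono v})
    {a : Fin k → Omega1} (ha : StrictMono a) {β : Omega1} (hβ : ∀ i, a i < β) :
    ContinuousAt (fun b => f (sn b β)) a :=
  ContinuousAt.comp (f := fun b => sn b β) (g := f)
    (hf.continuousAt ((isOpen_SM _).mem_nhds (sn_strictMono ha hβ)))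
    (sn_continuous_left β).continuousAt

theorem cont_right {k : ℕ} {f : (Fin (k+1) → Omega1) → L} (hf : ContinuousOn f {v | StrictMono v})
    {a : Fin k → Omega1} (ha : StrictMono a) {β : Omega1} (hβ : ∀ i, a i < β) :
    ContinuousAt (fun β => f (sn a β)) β :=
  ContinuousAt.comp (f := fun β => sn a β) (g := f)
    (hf.continuousAt ((isOpen_SM _).mem_nhds (sn_strictMono ha hβ)))
    (sn_continuous_right a).continuousAt

theorem RC_of_closed {k : ℕ} {f : (Fin k → Omega1) → L} (hf : ContinuousOn f {v | StrictMono v})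
    {K : Set L} (hK : IsClosed K) : RC (fun v => f v ∈ K) := by
  intro a ha hcl
  exact cw (hf.continuousAt ((isOpen_SM _).mem_nhds ha)) hcl K hK (fun b hb => hb.2)

theorem exists_lim [CompactSpace L] {k : ℕ} {f : (Fin (k+1) → Omega1) → L}
    (hf : ContinuousOn f {v | StrictMono v}) {a : Fin k → Omega1} (ha : StrictMono a) :
    ∃ l, Tendsto (fun β => f (sn a β)) clubF (𝓝 l) := by
  obtain ⟨l, hl⟩ := exists_clusterPt_of_compactSpace (map (fun β => f (sn a β)) clubF)
  refine ⟨l, (closed_nhds_basis l).tendsto_right_iff.2 ?_⟩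
  rintro V ⟨hV, hVc⟩
  refine (RC_dich (RC_of_closed hf hVc) ha).resolve_right fun h => ?_
  exact (mapClusterPt_iff_frequently.1 hl V hV) h

theorem clos_val {k : ℕ} {f : (Fin (k+1) → Omega1) → L} (hf : ContinuousOn f {v | StrictMono v})
    {a : Fin k → Omega1} (ha : StrictMono a) {D : Set (Fin k → Omega1)} (hD : a ∈ closure D)
    (K : Omega1 → Set L) (hK : ∀ β, IsClosed (K β))
    (h : ∀ b ∈ D, ∀ᶠ β in clubF, f (sn b β) ∈ K β) : ∀ᶠ β in clubF, f (sn a β) ∈ K β := by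
  refine clubF_closure hD (fun b β => f (sn b β) ∈ K β) h ?_
  filter_upwards [clubF_gt_all a] with β hβ hc
  exact cw (cont_left hf ha hβ) hc (K β) (hK β) (fun b hb => hb.2)

theorem lim_cont {k : ℕ} {f : (Fin (k+1) → Omega1) → L}
    (hf : ContinuousOn f {v | StrictMono v}) (s : (Fin k → Omega1) → L)
    (hs : ∀ a, StrictMono a → Tendsto (fun β => f (sn a β)) clubF (𝓝 (s a))) :
    ContinuousOn s {v | StrictMono v} := by
  intro a ha
  refine (closed_nhds_basis (s a)).tendsto_right_iff.2 ?_
  rintro V ⟨hV, hVc⟩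
  by_contra hcon
  have hcl : a ∈ closure {b | StrictMono b ∧ s b ∉ V} := by
    rw [mem_closure_iff_nhds]
    intro U hU
    by_contra hne
    apply hcon
    filter_upwards [mem_nhdsWithin_of_mem_nhds hU, self_mem_nhdsWithin] with b hb hb2
    by_contra hbV
    exact hne ⟨b, hb, hb2, hbV⟩
  have h := clos_val hf ha hcl (fun _ => closure Vᶜ) (fun _ => isClosed_closure) (by
    intro b hb
    filter_upwards [(hs b hb.1).eventually (hVc.isOpen_compl.mem_nhds hb.2)] with β hβ
    exact subset_closure hβ)
  have h2 : s a ∈ closure Vᶜ := isClosed_closure.mem_of_tendsto (hs a ha) h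
  rw [closure_compl] at h2
  exact h2 (mem_interior_iff_mem_nhds.2 hV)

theorem mono_case {k : ℕ} {f : (Fin (k+1) → Omega1) → L}
    (hf : ContinuousOn f {v | StrictMono v}) (s : (Fin k → Omega1) → L)
    (hs : ∀ a, StrictMono a → Tendsto (fun β => f (sn a β)) clubF (𝓝 (s a)))
    {C : Set Omega1} (hC : C ∈ clubF) (j : Fin k) (g : Omega1 → L) (hg : StrictMonoOn g C)
    (hsg : ∀ a, StrictMono a → (∀ i, a i ∈ C) → s a = g (a j)) :
    EE (fun v : Fin (k+1) → Omega1 => f v = g (v j.castSucc)) := by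
  have hsc := lim_cont hf s hs
  apply EE_collapse
  refine ⟨C ∩ {γ | γ ∈ closure (C ∩ Set.Iio γ)}, inter_mem hC (clubF_limit hC), ?_⟩
  intro a ha haC
  have haC1 : ∀ i, a i ∈ C := fun i => (haC i).1
  simp only [sn_castSucc]
  let φ : Omega1 → (Fin k → Omega1) := fun x => Function.update a j x
  have hφ : Continuous φ := continuous_const.update j continuous_id
  have hφa : φ (a j) = a := Function.update_eq_self j a
  have hO : {x | StrictMono (φ x)} ∈ 𝓝 (a j) := by
    refine hφ.continuousAt.preimage_mem_nhds (t := {v | StrictMono v}) ?_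
    rw [hφa]
    exact (isOpen_SM k).mem_nhds ha
  let X : Set Omega1 := {x | (x ∈ C ∧ x < a j) ∧ StrictMono (φ x)}
  have hX : a j ∈ closure X := by
    have h1 : a j ∈ closure (C ∩ Set.Iio (a j)) := (haC j).2
    rw [mem_closure_iff_nhds] at h1 ⊢
    intro U hU
    obtain ⟨x, hx, hx2⟩ := h1 _ (inter_mem hU hO)
    exact ⟨x, hx.1, ⟨hx2.1, hx2.2⟩, hx.2⟩
  have hXs : ∀ x ∈ X, s (φ x) = g x := by
    intro x hx
    rw [hsg (φ x) hx.2]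
    · simp [φ]
    · intro i
      by_cases hij : i = j
      · subst hij; simpa [φ] using hx.1.1
      · simpa [φ, hij] using haC1 i
  have hsa : s a = g (a j) := hsg a ha haC1
  have hXlt : ∀ x ∈ X, g x < g (a j) := fun x hx => hg hx.1.1 (haC1 j) hx.1.2
  have hcl : a ∈ closure (φ '' X) := by
    have := image_closure_subset_closure_image hφ ⟨_, hX, rfl⟩
    rwa [hφa] at this
  have hup := clos_val hf ha hcl (fun _ => Set.Iic (g (a j))) (fun _ => isClosed_Iic) (by
    rintro _ ⟨x, hx, rfl⟩
    have ht := hs (φ x) hx.2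
    rw [hXs x hx] at ht
    exact (ht.eventually (Iio_mem_nhds (hXlt x hx))).mono fun β hβ => le_of_lt hβ)
  have hXc : X.Countable := (om_countable_Iio (a j)).mono (by intro x hx; exact hx.1.2)
  have hlow : ∀ᶠ β in clubF, ∀ x ∈ X, g x ≤ f (sn a β) := by
    refine (eventually_countable_ball hXc).2 fun x hx => ?_
    have ht := hs a ha
    rw [hsa] at ht
    exact (ht.eventually (Ioi_mem_nhds (hXlt x hx))).mono fun β hβ => le_of_lt hβ
  filter_upwards [hup, hlow] with β h1 h2
  refine le_antisymm h1 ?_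
  have hc : ContinuousAt s (φ (a j)) := by
    rw [hφa]; exact hsc.continuousAt ((isOpen_SM k).mem_nhds ha)
  have hc2 : ContinuousAt (fun x => s (φ x)) (a j) :=
    ContinuousAt.comp (g := s) (f := φ) hc hφ.continuousAt
  have h3 := cw hc2 hX (Set.Iic (f (sn a β))) isClosed_Iic (by
    intro x hx
    change s (φ x) ≤ _
    rw [hXs x hx]
    exact h2 x hx)
  rw [hφa, hsa] at h3
  exact h3

theorem one_var {u w : Omega1 → L} {c : L} (hu : ∀ᶠ γ in clubF, ContinuousAt u γ)
    (huc : ∀ᶠ γ in clubF, u γ < c) (hw : Tendsto w clubF (𝓝 c)) :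
    ∀ᶠ γ in clubF, u γ ≤ w γ := by
  have hd := clubF_diag' (fun x γ => u x < c → u x < w γ) (by
    intro x
    by_cases hx : u x < c
    · exact (hw.eventually (Ioi_mem_nhds hx)).mono fun β hβ _ => hβ
    · exact Eventually.of_forall fun β h => absurd h hx)
  filter_upwards [hd, hu, clubF_limit (S := {x | u x < c}) huc] with γ h1 h2 h3
  have h4 := cw h2 h3 (Set.Iic (w γ)) isClosed_Iic (by
    intro x hx
    exact (h1 x hx.2 hx.1).le)
  exact h4

/-- The conclusion of the theorem, in a form suited for induction. -/
def Concl {k : ℕ} (f : (Fin k → Omega1) → L) : Prop :=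
  ∃ C ∈ clubF, (∃ c, ∀ v, StrictMono v → (∀ i, v i ∈ C) → f v = c) ∨
    ∃ (j : Fin k) (g : Omega1 → L), ContinuousOn g C ∧ (StrictMonoOn g C ∨ StrictAntiOn g C) ∧
      ∀ v, StrictMono v → (∀ i, v i ∈ C) → f v = g (v j)

theorem const_case {k : ℕ} {f : (Fin (k+1) → Omega1) → L}
    (hf : ContinuousOn f {v | StrictMono v}) (c : L)
    (h1 : EE (fun a : Fin k → Omega1 => Tendsto (fun β => f (sn a β)) clubF (𝓝 c)))
    (h2 : EE (fun a : Fin k → Omega1 => ∀ᶠ β in clubF, f (sn a β) ≤ c)) : Concl f := by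
  obtain ⟨C, hC, hG⟩ := EE_and h1 h2
  obtain ⟨C₁, hC₁, hsub⟩ := mem_clubF.1 hC
  have hagree : ∀ b b' : Fin k → Omega1, StrictMono b → StrictMono b' → (∀ i, b i ∈ C₁) →
      (∀ i, b' i ∈ C₁) → (∀ᶠ β in clubF, f (sn b β) < c) → (∀ᶠ β in clubF, f (sn b' β) < c) →
      ∀ᶠ β in clubF, f (sn b β) = f (sn b' β) := by
    intro b b' hb hb' hbC hbC' hlt hlt'
    have e1 := one_var ((clubF_gt_all b).mono fun β hβ => cont_right hf hb hβ) hlt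
      (hG b' hb' fun i => hsub (hbC' i)).1
    have e2 := one_var ((clubF_gt_all b').mono fun β hβ => cont_right hf hb' hβ) hlt'
      (hG b hb fun i => hsub (hbC i)).1
    filter_upwards [e1, e2] with β h1 h2
    exact le_antisymm h1 h2
  have hRC0 : RC (fun v => f v ∈ ({c} : Set L)) := RC_of_closed hf isClosed_singleton
  have hRZ := RC_desc hRC0
  have hRY : RC (fun a : Fin k → Omega1 =>
      (∀ i, a i ∈ C₁) ∧ ∀ᶠ β in clubF, f (sn a β) < c) := by
    intro a ha hcl
    refine ⟨fun i => ?_, ?_⟩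
    · rw [← hC₁.1.closure_eq]
      exact map_mem_closure (f := fun b : Fin k → Omega1 => b i) (continuous_apply i) hcl fun b hb => hb.2.1 i
    · obtain ⟨b0, hb0⟩ := closure_nonempty_iff.1 ⟨a, hcl⟩
      have h := clos_val hf ha hcl (fun β => {f (sn b0 β)}) (fun _ => isClosed_singleton) (by
        intro b hb
        exact hagree b b0 hb.1 hb0.1 hb.2.1 hb0.2.1 hb.2.2 hb0.2.2)
      filter_upwards [h, hb0.2.2] with β h1 h2
      rw [show f (sn a β) = f (sn b0 β) from h1]
      exact h2
  rcases EE_dich hRZ hRY ⟨C₁, clubF_of_club hC₁, fun a ha haC => by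
      rcases RC_dich hRC0 ha with h | h
      · exact Or.inl h
      · right
        refine ⟨haC, ?_⟩
        filter_upwards [h, (hG a ha fun i => hsub (haC i)).2] with β h1 h2
        exact lt_of_le_of_ne h2 h1⟩ with hZ | hY
  · obtain ⟨C', hC', h⟩ := EE_collapse (P := fun v => f v ∈ ({c} : Set L)) hZ
    exact ⟨C', hC', Or.inl ⟨c, h⟩⟩
  · obtain ⟨C₂, hC₂, hY⟩ := hY
    by_cases hex : ∃ b0 : Fin k → Omega1, StrictMono b0 ∧ ∀ i, b0 i ∈ C₂
    · obtain ⟨b0, hb0, hb0C⟩ := hex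
      have hY0 := hY b0 hb0 hb0C
      have hE : EE (fun v : Fin (k+1) → Omega1 => f v = f (sn b0 (v (Fin.last k)))) := by
        apply EE_collapse
        refine ⟨C₂, hC₂, fun a ha haC => ?_⟩
        simp only [sn_last]
        have hYa := hY a ha haC
        exact hagree a b0 ha hb0 hYa.1 hY0.1 hYa.2 hY0.2
      obtain ⟨C₃, hC₃, hE⟩ := hE
      have ht := (hG b0 hb0 fun i => hsub (hY0.1 i)).1
      have hd := clubF_diag' (fun x γ => f (sn b0 x) < c → f (sn b0 x) < f (sn b0 γ)) (by
        intro x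
        by_cases hx : f (sn b0 x) < c
        · exact (ht.eventually (Ioi_mem_nhds hx)).mono fun β hβ _ => hβ
        · exact Eventually.of_forall fun β h => absurd h hx)
      have hall := ((hd.and hY0.2).and (clubF_gt_all b0)).and hC₃
      refine ⟨_, hall, Or.inr ⟨Fin.last k, fun β => f (sn b0 β), ?_, Or.inl ?_, ?_⟩⟩
      · intro β hβ
        exact (cont_right hf hb0 hβ.1.2).continuousWithinAt
      · intro x hx y hy hxy
        exact hy.1.1.1 x hxy hx.1.1.2
      · intro v hv hvC
        exact hE v hv fun i => (hvC i).2
    · refine ⟨C₂, hC₂, Or.inl ⟨c, fun v hv hvC => ?_⟩⟩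
      exact absurd ⟨ini v, ini_strictMono hv, fun i => hvC _⟩ hex

theorem Concl_dual {k : ℕ} {f : (Fin k → Omega1) → L}
    (h : Concl (L := Lᵒᵈ) (fun v => OrderDual.toDual (f v))) : Concl f := by
  obtain ⟨C, hC, h⟩ := h
  refine ⟨C, hC, ?_⟩
  rcases h with ⟨c, h⟩ | ⟨j, g, hg, hm, h⟩
  · exact Or.inl ⟨OrderDual.ofDual c, h⟩
  · refine Or.inr ⟨j, fun x => OrderDual.ofDual (g x), hg, ?_, h⟩
    rcases hm with hm | hm
    · right; intro x hx y hy hxy; exact hm hx hy hxy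
    · left; intro x hx y hy hxy; exact hm hx hy hxy

theorem main_ind [CompactSpace L] {k : ℕ} : ∀ f : (Fin k → Omega1) → L,
    ContinuousOn f {v | StrictMono v} → Concl f := by
  induction k with
  | zero =>
    intro f _
    refine ⟨Set.univ, univ_mem, Or.inl ⟨f Fin.elim0, fun v _ _ => ?_⟩⟩
    rw [show v = Fin.elim0 from Subsingleton.elim _ _]
  | succ k ih =>
    intro f hf
    have hlim : ∀ a : Fin k → Omega1, ∃ l, StrictMono a →
        Tendsto (fun β => f (sn a β)) clubF (𝓝 l) := by
      intro a
      by_cases ha : StrictMono a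
      · obtain ⟨l, hl⟩ := exists_lim hf ha
        exact ⟨l, fun _ => hl⟩
      · exact ⟨f (sn a ⊥), fun h => absurd h ha⟩
    choose s hs using hlim
    obtain ⟨C, hC, h⟩ := ih s (lim_cont hf s hs)
    have hfd : ContinuousOn (fun v => OrderDual.toDual (f v)) {v | StrictMono v} := hf
    rcases h with ⟨c, h⟩ | ⟨j, g, hg, hm, h⟩
    · have h1 : EE (fun a : Fin k → Omega1 => Tendsto (fun β => f (sn a β)) clubF (𝓝 c)) :=
        ⟨C, hC, fun a ha haC => by rw [← h a ha haC]; exact hs a ha⟩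
      have hA := RC_of_closed hf (isClosed_Iic (a := c))
      have hB := RC_of_closed hf (isClosed_Ici (a := c))
      rcases EE_dich (RC_desc hA) (RC_desc hB) ⟨Set.univ, univ_mem, fun a ha _ => by
          rcases RC_dich hA ha with h | h
          · exact Or.inl h
          · right
            filter_upwards [h] with β hβ
            exact le_of_not_ge hβ⟩ with h2 | h2
      · exact const_case hf c h1 h2
      · exact Concl_dual (const_case (L := Lᵒᵈ) hfd (OrderDual.toDual c) h1 h2)
    · have hE : EE (fun v : Fin (k+1) → Omega1 => f v = g (v j.castSucc)) := by
        rcases hm with hm | hm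
        · exact mono_case hf s hs hC j g hm h
        · exact mono_case (L := Lᵒᵈ) hfd s hs hC j g
            (fun x hx y hy hxy => hm hx hy hxy) h
      obtain ⟨C', hC', hE⟩ := hE
      refine ⟨C ∩ C', inter_mem hC hC', Or.inr ⟨j.castSucc, g, hg.mono inter_subset_left, ?_,
        fun v hv hvC => hE v hv fun i => (hvC i).2⟩⟩
      exact hm.imp (fun h => h.mono inter_subset_left) (fun h => h.mono inter_subset_left)

end main

/-- If `L` is a compact LOTS, `1 ≤ m`, and `f : [ω₁]^m → L` is continuous, then there are
a club `C ⊆ ω₁`, a continuous `g : C → L` and an index `j` such that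
`f (α₁, …, α_m) = g (α_j)` on `[C]^m`, and `g` is strictly increasing, strictly
decreasing, or constant. -/
theorem stmt16 (m : ℕ) (hm : 1 ≤ m) {L : Type*}
    [LinearOrder L] [TopologicalSpace L] [OrderTopology L] [CompactSpace L]
    (f : {v : Fin m → Omega1 // StrictMono v} → L) (hf : Continuous f) :
    ∃ (C : Set Omega1) (j : Fin m) (g : C → L), IsClubIn C ∧ Continuous g ∧
      (∀ (v : {v : Fin m → Omega1 // StrictMono v}) (hv : ∀ i, v.1 i ∈ C),
        f v = g ⟨v.1 j, hv j⟩) ∧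
      (StrictMono g ∨ StrictAnti g ∨ ∀ a b : C, g a = g b) := by
  classical
  have hex : ∀ k : ℕ, ∃ v : Fin k → Omega1, StrictMono v := by
    intro k
    induction k with
    | zero => exact ⟨Fin.elim0, fun i => i.elim0⟩
    | succ k ih =>
      obtain ⟨a, ha⟩ := ih
      obtain ⟨β, hβ⟩ := (clubF_gt_all a).exists
      exact ⟨sn a β, sn_strictMono ha hβ⟩
  obtain ⟨v0, hv0⟩ := hex m
  let F : (Fin m → Omega1) → L := fun v => if h : StrictMono v then f ⟨v, h⟩ else f ⟨v0, hv0⟩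
  have hFf : ∀ v : {v : Fin m → Omega1 // StrictMono v}, F v.1 = f v := by
    intro v
    simp only [F, dif_pos v.2]
  have hF : ContinuousOn F {v | StrictMono v} := by
    rw [continuousOn_iff_continuous_domRestrict]
    have : ({v | StrictMono v} : Set (Fin m → Omega1)).domRestrict F = fun v => f ⟨v.1, v.2⟩ := by
      funext v
      exact hFf ⟨v.1, v.2⟩
    rw [this]
    exact hf.comp (continuous_subtype_val.subtype_mk _)
  obtain ⟨C, hC, h⟩ := main_ind F hF
  obtain ⟨C', hC', hsub⟩ := mem_clubF.1 hC
  rcases h with ⟨c, h⟩ | ⟨j, g, hg, hm, h⟩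
  · refine ⟨C', ⟨0, hm⟩, fun _ => c, hC', continuous_const, ?_, Or.inr (Or.inr fun _ _ => rfl)⟩
    intro v hv
    rw [← hFf v]
    exact h v.1 v.2 fun i => hsub (hv i)
  · refine ⟨C', j, fun x => g x.1, hC', ?_, ?_, ?_⟩
    · exact continuousOn_iff_continuous_domRestrict.1 (hg.mono hsub)
    · intro v hv
      rw [← hFf v]
      exact h v.1 v.2 fun i => hsub (hv i)
    · rcases hm with hm | hm
      · left; intro x y hxy; exact hm (hsub x.2) (hsub y.2) hxy
      · right; left; intro x y hxy; exact hm (hsub x.2) (hsub y.2) hxy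

end
end

section
/- Let X be a weakly c-dissipated compact Hausdorff space. Then every Radon measure μ on X is separable; that is, there is a countable family 𝒞 of Borel subsets of X such that for every Borel set A ⊆ X and every ε > 0 there is B ∈ 𝒞 with μ(A Δ B) < ε. -/
open Set Topology

universe u

open MeasureTheory



open MeasureTheory

namespace WCD

/-- Exhaustion principle: a family of measurable sets closed under countable unions has an
essentially largest member. -/
theorem exhaustion {α : Type*} [MeasurableSpace α] (μ : Measure α) [IsFiniteMeasure μ]
    (G : Set (Set α)) (hm : ∀ s ∈ G, MeasurableSet s) (hne : G.Nonempty)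
    (hU : ∀ s : ℕ → Set α, (∀ n, s n ∈ G) → (⋃ n, s n) ∈ G) :
    ∃ s ∈ G, ∀ t ∈ G, μ (t \ s) = 0 := by
  obtain ⟨u, -, hu, huS⟩ := exists_seq_tendsto_sSup (S := μ '' G) (hne.image _) (OrderTop.bddAbove _)
  choose s hs hsu using huS
  refine ⟨⋃ n, s n, hU s hs, fun t ht => ?_⟩
  have h1 : (t ∪ ⋃ n, s n) ∈ G := by
    have := hU (fun n => Nat.casesOn n t s) (fun n => by cases n <;> simp [ht, hs])
    convert this using 1
    ext x
    simp only [mem_union, mem_iUnion]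
    constructor
    · rintro (h | ⟨n, h⟩)
      · exact ⟨0, h⟩
      · exact ⟨n + 1, h⟩
    · rintro ⟨n, h⟩
      cases n with
      | zero => exact Or.inl h
      | succ n => exact Or.inr ⟨n, h⟩
  have h2 : μ (t ∪ ⋃ n, s n) ≤ μ (⋃ n, s n) := by
    have h3 : sSup (μ '' G) ≤ μ (⋃ n, s n) := by
      refine le_of_tendsto' hu (fun n => ?_)
      rw [← hsu]
      exact measure_mono (subset_iUnion s n)
    exact (le_sSup (mem_image_of_mem _ h1)).trans h3
  have h4 : t \ (⋃ n, s n) = (t ∪ ⋃ n, s n) \ ⋃ n, s n := by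
    ext x; simp only [mem_sdiff, mem_union]; tauto
  rw [h4, measure_sdiff subset_union_right (hm _ (hU s hs)).nullMeasurableSet (measure_ne_top _ _)]
  exact tsub_eq_zero_of_le h2

/-- `F` is measurable and the trace of `μ` on `F` is countably generated. -/
def GSep {X : Type*} [MeasurableSpace X] (μ : Measure X) (F : Set X) : Prop :=
  MeasurableSet F ∧ ∃ 𝒟 : Set (Set X), 𝒟.Countable ∧ (∀ D ∈ 𝒟, MeasurableSet D) ∧
    ∀ A, MeasurableSet A → ∃ B, MeasurableSet[MeasurableSpace.generateFrom 𝒟] B ∧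
      μ (F ∩ symmDiff A B) = 0

theorem GSep.iUnion {X : Type*} [MeasurableSpace X] {μ : Measure X} (F : ℕ → Set X)
    (h : ∀ n, GSep μ (F n)) : GSep μ (⋃ n, F n) := by
  refine ⟨MeasurableSet.iUnion fun n => (h n).1, ?_⟩
  choose 𝒟 hc hm hA using fun n => (h n).2
  refine ⟨(⋃ n, 𝒟 n) ∪ range F, (countable_iUnion hc).union (countable_range F), ?_, ?_⟩
  · rintro D (hD | ⟨n, rfl⟩)
    · obtain ⟨n, hn⟩ := mem_iUnion.1 hD
      exact hm n D hn
    · exact (h n).1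
  intro A mA
  choose B hB hB0 using fun n => hA n A mA
  refine ⟨⋃ n, B n ∩ disjointed F n, ?_, ?_⟩
  · let _ := MeasurableSpace.generateFrom ((⋃ n, 𝒟 n) ∪ range F)
    refine MeasurableSet.iUnion fun n => MeasurableSet.inter ?_ ?_
    · refine MeasurableSpace.generateFrom_mono ?_ _ (hB n)
      exact (subset_iUnion 𝒟 n).trans subset_union_left
    · refine MeasurableSet.disjointed (fun k => ?_) n
      exact MeasurableSpace.measurableSet_generateFrom (Or.inr ⟨k, rfl⟩)
  · refine measure_mono_null ?_ (measure_iUnion_null hB0)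
    rintro x ⟨hx, hx2⟩
    rw [← iUnion_disjointed] at hx
    obtain ⟨n, hn⟩ := mem_iUnion.1 hx
    refine mem_iUnion.2 ⟨n, disjointed_subset F n hn, ?_⟩
    have key : x ∈ ⋃ n, B n ∩ disjointed F n ↔ x ∈ B n := by
      rw [mem_iUnion]
      constructor
      · rintro ⟨k, hk1, hk2⟩
        by_cases hkn : k = n
        · subst hkn; exact hk1
        · exact absurd hn (Set.disjoint_left.1 (disjoint_disjointed F hkn) hk2)
      · intro h; exact ⟨n, h, hn⟩
    rw [Set.mem_symmDiff] at hx2 ⊢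
    rwa [key] at hx2

theorem GSep.sep {X : Type*} [MeasurableSpace X] {μ : Measure X} [IsFiniteMeasure μ]
    {F : Set X} (h : GSep μ F) (hF : μ Fᶜ = 0) :
    ∃ 𝒞 : Set (Set X), 𝒞.Countable ∧ (∀ B ∈ 𝒞, MeasurableSet B) ∧
      ∀ A : Set X, MeasurableSet A → ∀ ε : ENNReal, 0 < ε →
        ∃ B ∈ 𝒞, μ (symmDiff A B) < ε := by
  obtain ⟨-, 𝒟, hc, hm, hA⟩ := h
  have hle : MeasurableSpace.generateFrom 𝒟 ≤ ‹MeasurableSpace X› :=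
    MeasurableSpace.generateFrom_le hm
  have hgen := (generateFrom_generateSetAlgebra_eq (𝒜 := 𝒟)).symm
  have hd := @Measure.MeasureDense.of_generateFrom_isSetAlgebra_finite X
    (MeasurableSpace.generateFrom 𝒟) (μ.trim hle) _ (isFiniteMeasure_trim hle)
    isSetAlgebra_generateSetAlgebra hgen
  refine ⟨generateSetAlgebra 𝒟, countable_generateSetAlgebra hc,
    fun B hB => hle _ (@Measure.MeasureDense.measurable _ (_) _ _ hd B hB), fun A mA ε hε => ?_⟩
  obtain ⟨B, mB, hB⟩ := hA A mA
  obtain ⟨r, hr0, hr⟩ : ∃ r : ℝ, 0 < r ∧ ENNReal.ofReal r ≤ ε := by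
    obtain ⟨r, hr0, hr⟩ := ENNReal.lt_iff_exists_nnreal_btwn.1 hε
    refine ⟨r, by exact_mod_cast hr0, ?_⟩
    simpa using hr.le
  obtain ⟨C, hC, hBC⟩ := @Measure.MeasureDense.approx _ (_) _ _ hd B mB
    (by rw [trim_measurableSet_eq hle mB]; exact measure_ne_top _ _) r hr0
  have mC := (@Measure.MeasureDense.measurable _ (_) _ _ hd C hC)
  refine ⟨C, hC, lt_of_lt_of_le ?_ hr⟩
  rw [trim_measurableSet_eq hle (MeasurableSet.symmDiff mB mC)] at hBC
  have h0 : μ (symmDiff A B) = 0 := by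
    refine measure_mono_null (t := (F ∩ symmDiff A B) ∪ Fᶜ) ?_ (measure_union_null hB hF)
    intro x hx
    by_cases hxF : x ∈ F
    · exact Or.inl ⟨hxF, hx⟩
    · exact Or.inr hxF
  calc μ (symmDiff A C) ≤ μ (symmDiff A B ∪ symmDiff B C) :=
        measure_mono (symmDiff_triangle A B C)
    _ ≤ μ (symmDiff A B) + μ (symmDiff B C) := measure_union_le _ _
    _ < _ := by rwa [h0, zero_add]

/-- `H` has positive measure over almost every point of `Q`. -/
def Full {X Y : Type*} [MeasurableSpace X] [MeasurableSpace Y] (μ : Measure X) (f : X → Y)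
    (H : Set X) (Q : Set Y) : Prop :=
  ∀ B, MeasurableSet B → B ⊆ Q → μ (H ∩ f ⁻¹' B) = 0 → μ (f ⁻¹' B) = 0

section Fib

variable {X Y : Type*} [MeasurableSpace X] [MeasurableSpace Y] {μ : Measure X}
  {f : X → Y}

theorem Full.mono {H H' : Set X} {Q Q' : Set Y} (h : Full μ f H Q) (hH : H ⊆ H') (hQ : Q' ⊆ Q) :
    Full μ f H' Q' := fun B mB hB h0 =>
  h B mB (hB.trans hQ) (measure_mono_null (inter_subset_inter_left _ hH) h0)

theorem Full.iUnion {ι : Type*} [Countable ι] {H : Set X} {Q : ι → Set Y}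
    (mQ : ∀ i, MeasurableSet (Q i)) (h : ∀ i, Full μ f H (Q i)) : Full μ f H (⋃ i, Q i) := by
  intro B mB hB h0
  have : f ⁻¹' B ⊆ ⋃ i, f ⁻¹' (B ∩ Q i) := by
    intro x hx
    obtain ⟨i, hi⟩ := mem_iUnion.1 (hB hx)
    exact mem_iUnion.2 ⟨i, hx, hi⟩
  refine measure_mono_null this (measure_iUnion_null fun i => ?_)
  refine h i _ (mB.inter (mQ i)) inter_subset_right (measure_mono_null ?_ h0)
  exact inter_subset_inter_right _ (preimage_mono inter_subset_left)

theorem Full.of_diff_null {H : Set X} {Q Q' : Set Y} (mQ' : MeasurableSet Q')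
    (h : Full μ f H Q') (h0 : μ (f ⁻¹' (Q \ Q')) = 0) : Full μ f H Q := by
  intro B mB hB hz
  have h1 := h (B ∩ Q') (mB.inter mQ') inter_subset_right
    (measure_mono_null (inter_subset_inter_right _ (preimage_mono inter_subset_left)) hz)
  refine measure_mono_null (t := f ⁻¹' (B ∩ Q') ∪ f ⁻¹' (Q \ Q')) ?_ (measure_union_null h1 h0)
  intro x hx
  by_cases hq : f x ∈ Q'
  · exact Or.inl ⟨hx, hq⟩
  · exact Or.inr ⟨hB hx, hq⟩

variable [IsFiniteMeasure μ]

theorem exhaustion_map (hf : Measurable f)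
    (G : Set (Set Y)) (hm : ∀ s ∈ G, MeasurableSet s) (hne : G.Nonempty)
    (hU : ∀ s : ℕ → Set Y, (∀ n, s n ∈ G) → (⋃ n, s n) ∈ G) :
    ∃ s ∈ G, ∀ t ∈ G, μ (f ⁻¹' (t \ s)) = 0 := by
  obtain ⟨s, hs, h⟩ := exhaustion (μ.map f) G hm hne hU
  refine ⟨s, hs, fun t ht => ?_⟩
  rw [← Measure.map_apply hf ((hm t ht).diff (hm s hs))]
  exact h t ht

/-- the essential image of a set -/
theorem exists_support (hf : Measurable f) (A : Set X) :
    ∃ S : Set Y, MeasurableSet S ∧ μ (A ∩ f ⁻¹' Sᶜ) = 0 ∧ Full μ f A S := by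
  obtain ⟨s, ⟨ms, hs⟩, hmax⟩ := exhaustion_map (μ := μ) hf
    {B | MeasurableSet B ∧ μ (A ∩ f ⁻¹' B) = 0} (fun s hs => hs.1) ⟨∅, by simp⟩ (by
      intro s hs
      refine ⟨MeasurableSet.iUnion fun n => (hs n).1, ?_⟩
      rw [preimage_iUnion, inter_iUnion]
      exact measure_iUnion_null fun n => (hs n).2)
  refine ⟨sᶜ, ms.compl, by rwa [compl_compl], fun B mB hB h0 => ?_⟩
  have := hmax B ⟨mB, h0⟩
  rwa [show B \ s = B from sdiff_eq_left.2 (disjoint_left.2 fun x hx => hB hx)] at this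

/-- splitting -/
theorem split (hf : Measurable f)
    (hns : ∀ F, MeasurableSet F → μ F ≠ 0 →
      ∃ A, MeasurableSet A ∧ ∀ C : Set Y, MeasurableSet C → μ (F ∩ symmDiff A (f ⁻¹' C)) ≠ 0)
    {H : Set X} {Q : Set Y} (mH : MeasurableSet H) (mQ : MeasurableSet Q) (hH : Full μ f H Q) :
    ∃ A, MeasurableSet A ∧ Full μ f (H ∩ A) Q ∧ Full μ f (H \ A) Q := by
  obtain ⟨B, ⟨mB, A, mA, hA1, hA2⟩, hmax⟩ := exhaustion_map (μ := μ) hf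
    {B | MeasurableSet B ∧ ∃ A, MeasurableSet A ∧ Full μ f (H ∩ A) B ∧ Full μ f (H \ A) B}
    (fun s hs => hs.1) ⟨∅, by
      refine ⟨MeasurableSet.empty, ∅, MeasurableSet.empty, ?_, ?_⟩ <;>
      · intro B _ hB _
        rw [subset_empty_iff.1 hB]; simp⟩ (by
      intro s hs
      refine ⟨MeasurableSet.iUnion fun n => (hs n).1, ?_⟩
      choose ms A mA h1 h2 using hs
      have md : ∀ n, MeasurableSet (disjointed s n) := MeasurableSet.disjointed ms
      have key : ∀ n x, f x ∈ disjointed s n →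
          (x ∈ ⋃ n, A n ∩ f ⁻¹' disjointed s n ↔ x ∈ A n) := by
        intro n x hn
        rw [mem_iUnion]
        constructor
        · rintro ⟨k, hk1, hk2⟩
          by_cases hkn : k = n
          · subst hkn; exact hk1
          · exact absurd hn (Set.disjoint_left.1 (disjoint_disjointed s hkn) hk2)
        · intro h; exact ⟨n, h, hn⟩
      refine ⟨⋃ n, A n ∩ f ⁻¹' disjointed s n, MeasurableSet.iUnion fun n =>
        (mA n).inter (hf (md n)), ?_, ?_⟩
      · rw [← iUnion_disjointed (f := s)]
        refine Full.iUnion md fun n B mB hB h0 => ?_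
        refine h1 n B mB (hB.trans (disjointed_subset s n)) (measure_mono_null ?_ h0)
        rintro x ⟨⟨hx1, hx2⟩, hx3⟩
        exact ⟨⟨hx1, (key n x (hB hx3)).2 hx2⟩, hx3⟩
      · rw [← iUnion_disjointed (f := s)]
        refine Full.iUnion md fun n B mB hB h0 => ?_
        refine h2 n B mB (hB.trans (disjointed_subset s n)) (measure_mono_null ?_ h0)
        rintro x ⟨⟨hx1, hx2⟩, hx3⟩
        exact ⟨⟨hx1, fun h => hx2 ((key n x (hB hx3)).1 h)⟩, hx3⟩)
  suffices h0 : μ (f ⁻¹' (Q \ B)) = 0 from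
    ⟨A, mA, hA1.of_diff_null mB h0, hA2.of_diff_null mB h0⟩
  by_contra hpos
  have hpos' : μ (H ∩ f ⁻¹' (Q \ B)) ≠ 0 := fun h =>
    hpos (hH _ (mQ.diff mB) sdiff_subset h)
  have mF : MeasurableSet (H ∩ f ⁻¹' (Q \ B)) := mH.inter (hf (mQ.diff mB))
  obtain ⟨A', mA', hA'⟩ := hns _ mF hpos'
  obtain ⟨S1, mS1, hS1, hS1'⟩ := exists_support (μ := μ) hf (H ∩ A')
  obtain ⟨S2, mS2, hS2, hS2'⟩ := exists_support (μ := μ) hf (H \ A')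
  have h3 := hmax (S1 ∩ S2) ⟨mS1.inter mS2, A', mA', hS1'.mono subset_rfl inter_subset_left,
    hS2'.mono subset_rfl inter_subset_right⟩
  refine hA' S1 mS1 (measure_mono_null ?_ (measure_union_null (measure_union_null hS1 hS2) h3))
  rintro x ⟨⟨hxH, hxQ, hxB⟩, hx⟩
  rw [Set.mem_symmDiff] at hx
  simp only [mem_union, mem_inter_iff, mem_sdiff, mem_preimage, mem_compl_iff] at hx hxB ⊢
  tauto

end Fib

section Top

variable {X Y : Type*} [TopologicalSpace X] [CompactSpace X] [T2Space X] [MeasurableSpace X]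
  [BorelSpace X] [TopologicalSpace Y] [T2Space Y] [MeasurableSpace Y] [BorelSpace Y]
  {μ : Measure X} [IsFiniteMeasure μ] [μ.Regular] {f : X → Y}

theorem closed_approx (hf : Continuous f) {H : Set X} {Q : Set Y} (mH : MeasurableSet H)
    (mQ : MeasurableSet Q) (hH : Full μ f H Q) {ε : ENNReal} (hε : 0 < ε) :
    ∃ K ⊆ H, IsClosed K ∧ ∃ Q' ⊆ Q, MeasurableSet Q' ∧ Q' ⊆ f '' K ∧ Full μ f K Q' ∧
      μ (f ⁻¹' (Q \ Q')) < ε := by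
  have hfm : Measurable f := hf.measurable
  have h1 : ∀ n : ℕ, ∃ K ⊆ H, IsClosed K ∧ μ (H \ K) < ((n : ENNReal) + 1)⁻¹ := fun n =>
    mH.exists_isClosed_sdiff_lt (measure_ne_top _ _) (by simp)
  choose K hKH hKc hK using h1
  choose S mS hS1 hS2 using fun n => exists_support (μ := μ) hfm (K n)
  have h0 : μ (f ⁻¹' (Q \ ⋃ n, S n)) = 0 := by
    refine hH _ (mQ.diff (MeasurableSet.iUnion mS)) sdiff_subset ?_
    have hb : ∀ n : ℕ, μ (H ∩ f ⁻¹' (Q \ ⋃ n, S n)) ≤ ((n : ENNReal) + 1)⁻¹ := by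
      intro n
      calc μ (H ∩ f ⁻¹' (Q \ ⋃ n, S n)) ≤ μ ((H \ K n) ∪ (K n ∩ f ⁻¹' (S n)ᶜ)) := by
            refine measure_mono ?_
            rintro x ⟨hx, hxQ, hxS⟩
            by_cases hk : x ∈ K n
            · exact Or.inr ⟨hk, fun h => hxS (mem_iUnion.2 ⟨n, h⟩)⟩
            · exact Or.inl ⟨hx, hk⟩
        _ ≤ μ (H \ K n) + μ (K n ∩ f ⁻¹' (S n)ᶜ) := measure_union_le _ _
        _ ≤ _ := by rw [hS1, add_zero]; exact (hK n).le
    have ht : Filter.Tendsto (fun n : ℕ => ((n : ENNReal) + 1)⁻¹) Filter.atTop (𝓝 0) := by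
      have := (Filter.tendsto_add_atTop_iff_nat 1).2 ENNReal.tendsto_inv_nat_nhds_zero
      simpa using this
    exact le_antisymm (ge_of_tendsto' ht hb) zero_le
  have hanti : Antitone (fun n : ℕ => f ⁻¹' (Q \ ⋃ i : Fin n, S i)) := by
    intro a b hab x hx
    refine ⟨hx.1, fun h => hx.2 ?_⟩
    obtain ⟨i, hi⟩ := mem_iUnion.1 h
    exact mem_iUnion.2 ⟨Fin.castLE hab i, hi⟩
  have hlim := tendsto_measure_iInter_atTop (μ := μ)
    (s := fun n : ℕ => f ⁻¹' (Q \ ⋃ i : Fin n, S i))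
    (fun n => (hfm (mQ.diff (MeasurableSet.iUnion fun i : Fin n => mS i))).nullMeasurableSet) hanti
    ⟨0, measure_ne_top _ _⟩
  have hlim0 : μ (⋂ n : ℕ, f ⁻¹' (Q \ ⋃ i : Fin n, S i)) = 0 := by
    refine measure_mono_null ?_ h0
    intro x hx
    rw [mem_iInter] at hx
    refine ⟨(hx 0).1, fun h => ?_⟩
    obtain ⟨i, hi⟩ := mem_iUnion.1 h
    exact (hx (i + 1)).2 (mem_iUnion.2 ⟨⟨i, Nat.lt_succ_self i⟩, hi⟩)
  rw [hlim0] at hlim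
  obtain ⟨n, hn⟩ := (hlim.eventually (gt_mem_nhds hε)).exists
  have hKcl : IsClosed (⋃ i : Fin n, K i) := isClosed_iUnion_of_finite fun i => hKc i
  have hfK : MeasurableSet (f '' ⋃ i : Fin n, K i) :=
    (hKcl.isCompact.image hf).isClosed.measurableSet
  have hfull : Full μ f (⋃ i : Fin n, K i) (⋃ i : Fin n, S i) :=
    Full.iUnion (fun i => mS i) fun i => (hS2 i).mono (subset_iUnion (fun i : Fin n => K i) i)
      subset_rfl
  have mSn : MeasurableSet (⋃ i : Fin n, S i) := MeasurableSet.iUnion fun i => mS i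
  refine ⟨⋃ i : Fin n, K i, iUnion_subset fun i => hKH i, hKcl,
    Q ∩ (⋃ i : Fin n, S i) ∩ (f '' ⋃ i : Fin n, K i), fun x hx => hx.1.1, (mQ.inter mSn).inter hfK,
    inter_subset_right, hfull.mono subset_rfl fun x hx => hx.1.2, ?_⟩
  have hz : μ (f ⁻¹' ((⋃ i : Fin n, S i) \ (f '' ⋃ i : Fin n, K i))) = 0 := by
    refine hfull _ (mSn.diff hfK) sdiff_subset ?_
    convert measure_empty (μ := μ)
    rw [eq_empty_iff_forall_notMem]
    rintro x ⟨hx, hx2⟩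
    exact hx2.2 (mem_image_of_mem f hx)
  calc _ ≤ μ (f ⁻¹' (Q \ ⋃ i : Fin n, S i) ∪
        f ⁻¹' ((⋃ i : Fin n, S i) \ (f '' ⋃ i : Fin n, K i))) := by
        refine measure_mono ?_
        rintro x ⟨hx, hx2⟩
        simp only [mem_union, mem_preimage, mem_sdiff, mem_inter_iff] at hx hx2 ⊢
        tauto
    _ ≤ _ := measure_union_le _ _
    _ < ε := by rwa [hz, add_zero]

/-- A node of the tree. -/
structure Node (μ : Measure X) (f : X → Y) where
  H : Set X
  Q : Set Y
  closed : IsClosed H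
  meas : MeasurableSet Q
  sub : Q ⊆ f '' H
  full : Full μ f H Q

theorem exists_children (hf : Continuous f)
    (hns : ∀ F, MeasurableSet F → μ F ≠ 0 →
      ∃ A, MeasurableSet A ∧ ∀ C : Set Y, MeasurableSet C → μ (F ∩ symmDiff A (f ⁻¹' C)) ≠ 0)
    (N : Node μ f) (ε : ENNReal) (hε : 0 < ε) :
    ∃ c : Bool → Node μ f, Disjoint (c true).H (c false).H ∧
      ∀ b, (c b).H ⊆ N.H ∧ (c b).Q ⊆ N.Q ∧ μ (f ⁻¹' (N.Q \ (c b).Q)) < ε := by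
  obtain ⟨A, mA, h1, h2⟩ := split hf.measurable hns N.closed.measurableSet N.meas N.full
  obtain ⟨K1, hK1, cK1, Q1, hQ1, mQ1, hs1, hf1, he1⟩ :=
    closed_approx hf (N.closed.measurableSet.inter mA) N.meas h1 hε
  obtain ⟨K2, hK2, cK2, Q2, hQ2, mQ2, hs2, hf2, he2⟩ :=
    closed_approx hf (N.closed.measurableSet.diff mA) N.meas h2 hε
  refine ⟨fun b => bif b then ⟨K1, Q1, cK1, mQ1, hs1, hf1⟩ else ⟨K2, Q2, cK2, mQ2, hs2, hf2⟩,
    ?_, ?_⟩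
  · exact disjoint_left.2 fun x hx hx' => (hK2 hx').2 (hK1 hx).2
  · rintro (_ | _)
    · exact ⟨fun x hx => (hK2 hx).1, hQ2, he2⟩
    · exact ⟨fun x hx => (hK1 hx).1, hQ1, he1⟩

/-- Initial segments of a branch (last bit first). -/
def pre (p : ℕ → Bool) : ℕ → List Bool
  | 0 => []
  | n + 1 => p n :: pre p n

theorem pre_length (p : ℕ → Bool) (n : ℕ) : (pre p n).length = n := by
  induction n with
  | zero => rfl
  | succ n ih => simp [pre, ih]

theorem tree_loose (hf : Continuous f) (H : List Bool → Set X) (hc : ∀ s, IsClosed (H s))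
    (hd : ∀ s, Disjoint (H (true :: s)) (H (false :: s)))
    (hsub : ∀ b s, H (b :: s) ⊆ H s) (Q : Set Y) (hQ : ¬ IsScatteredSet Q)
    (hQH : ∀ s, Q ⊆ f '' (H s)) :
    ∃ (D : Set X) (φ : X → (ℕ → Bool)), LooseFunction f D φ := by
  classical
  have hdis : ∀ s t : List Bool, s.length = t.length → s ≠ t → Disjoint (H s) (H t) := by
    intro s
    induction s with
    | nil =>
      intro t ht hne
      exact absurd (List.length_eq_zero_iff.1 ht.symm).symm hne
    | cons b s ih =>
      intro t ht hne
      cases t with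
      | nil => simp at ht
      | cons c t =>
        by_cases hst : s = t
        · subst hst
          cases b <;> cases c
          · exact absurd rfl hne
          · exact (hd s).symm
          · exact hd s
          · exact absurd rfl hne
        · exact (ih t (by simpa using ht) hst).mono (hsub b s) (hsub c t)
  let A : Bool → ℕ → Set X := fun b n => ⋃ s ∈ {s : List Bool | s.length = n}, H (b :: s)
  have hfin : ∀ n, {s : List Bool | s.length = n}.Finite := fun n => List.finite_length_eq Bool n
  have hAc : ∀ b n, IsClosed (A b n) := fun b n => (hfin n).isClosed_biUnion fun s _ => hc _
  have hAd : ∀ n, Disjoint (A true n) (A false n) := by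
    intro n
    refine disjoint_left.2 fun x hx hx' => ?_
    simp only [A, mem_iUnion] at hx hx'
    obtain ⟨s, hs, hxs⟩ := hx
    obtain ⟨t, ht, hxt⟩ := hx'
    exact disjoint_left.1 (hdis (true :: s) (false :: t)
      (by rw [mem_ofPred_eq] at hs ht; simp [hs, ht]) (by simp)) hxs hxt
  refine ⟨⋂ n, (A true n ∪ A false n), fun x n => decide (x ∈ A true n), ?_, ?_, Q, hQ, ?_⟩
  · exact isClosed_iInter fun n => (hAc _ n).union (hAc _ n)
  · rw [continuousOn_pi]
    intro n x hx
    have hx' := mem_iInter.1 hx n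
    rcases hx' with h | h
    · have hxf : x ∉ A false n := disjoint_left.1 (hAd n) h
      have : (fun y => decide (y ∈ A true n)) =ᶠ[𝓝[⋂ n, (A true n ∪ A false n)] x]
          fun _ => true := by
        filter_upwards [mem_nhdsWithin_of_mem_nhds ((hAc false n).isOpen_compl.mem_nhds hxf),
          self_mem_nhdsWithin] with y hy hy2
        have := mem_iInter.1 hy2 n
        simp only [decide_eq_true_eq]
        exact this.resolve_right hy
      exact continuousWithinAt_const.congr_of_eventuallyEq this (by simpa using h)
    · have hxf : x ∉ A true n := disjoint_right.1 (hAd n) h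
      have : (fun y => decide (y ∈ A true n)) =ᶠ[𝓝[⋂ n, (A true n ∪ A false n)] x]
          fun _ => false := by
        filter_upwards [mem_nhdsWithin_of_mem_nhds ((hAc true n).isOpen_compl.mem_nhds hxf)]
          with y hy
        simpa using hy
      exact continuousWithinAt_const.congr_of_eventuallyEq this (by simpa using hxf)
  · intro y hy
    refine eq_univ_of_forall fun p => ?_
    have hne : (⋂ n, (f ⁻¹' {y} ∩ H (pre p n))).Nonempty := by
      have hcl : ∀ n, IsClosed (f ⁻¹' {y} ∩ H (pre p n)) := fun n =>
        (isClosed_singleton.preimage hf).inter (hc _)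
      refine IsCompact.nonempty_iInter_of_sequence_nonempty_isCompact_isClosed _ ?_ ?_ ?_ hcl
      · exact fun n => inter_subset_inter_right _ (hsub _ _)
      · intro n
        obtain ⟨x, hx, hxy⟩ := hQH (pre p n) hy
        exact ⟨x, hxy, hx⟩
      · exact (hcl 0).isCompact
    obtain ⟨x, hx⟩ := hne
    rw [mem_iInter] at hx
    have hxA : ∀ n, x ∈ A (p n) n := by
      intro n
      simp only [A, mem_iUnion]
      exact ⟨pre p n, pre_length p n, (hx (n + 1)).2⟩
    refine ⟨x, ⟨(hx 0).1, mem_iInter.2 fun n => ?_⟩, ?_⟩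
    · have := hxA n
      cases hp : p n <;> rw [hp] at this
      · exact Or.inr this
      · exact Or.inl this
    · funext n
      have := hxA n
      cases hp : p n <;> rw [hp] at this
      · simpa using disjoint_right.1 (hAd n) this
      · simpa using this

theorem not_scattered [SecondCountableTopology Y] (ν : Measure Y) (hν : ∀ y, ν {y} = 0) {Q : Set Y}
    (hQ : ν Q ≠ 0) : ¬ IsScatteredSet Q := by
  intro h
  have h0 : (ν.restrict Q) (ν.restrict Q).supportᶜ = 0 := Measure.measure_compl_support
  have mS : MeasurableSet (ν.restrict Q).supportᶜ :=
    (Measure.isOpen_compl_support).measurableSet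
  rw [Measure.restrict_apply mS] at h0
  have hne : (Q ∩ (ν.restrict Q).support).Nonempty := by
    by_contra hemp
    rw [not_nonempty_iff_eq_empty] at hemp
    refine hQ (measure_mono_null ?_ h0)
    intro x hx
    exact ⟨fun hs => (eq_empty_iff_forall_notMem.1 hemp x) ⟨hx, hs⟩, hx⟩
  obtain ⟨x, hx, U, hU, hUx⟩ := h _ inter_subset_left hne
  have hxU : x ∈ U := (hUx.symm ▸ mem_singleton x : x ∈ U ∩ _).1
  have hpos := (Measure.mem_support_iff_forall x).1 hx.2 U (hU.mem_nhds hxU)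
  rw [Measure.restrict_apply hU.measurableSet] at hpos
  refine hpos.ne' (measure_mono_null ?_ (measure_union_null h0 (hν x)))
  rintro z ⟨hzU, hzQ⟩
  by_cases hz : z ∈ (ν.restrict Q).support
  · exact Or.inr (hUx ▸ ⟨hzU, hzQ, hz⟩)
  · exact Or.inl ⟨hz, hzQ⟩

theorem exists_loose [SecondCountableTopology Y] (hf : Continuous f)
    (hns : ∀ F, MeasurableSet F → μ F ≠ 0 →
      ∃ A, MeasurableSet A ∧ ∀ C : Set Y, MeasurableSet C → μ (F ∩ symmDiff A (f ⁻¹' C)) ≠ 0)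
    (hat : ∀ y, μ (f ⁻¹' {y}) = 0) (hμ : μ univ ≠ 0) :
    ∃ (D : Set X) (φ : X → (ℕ → Bool)), LooseFunction f D φ := by
  have hfm := hf.measurable
  obtain ⟨ε, hε0, hε⟩ := ENNReal.exists_pos_sum_of_countable' hμ (Bool × List Bool)
  have hmin : ∀ s, 0 < min (ε (true, s)) (ε (false, s)) := fun s => lt_min (hε0 _) (hε0 _)
  choose c hcd hc using fun (N : Node μ f) (s : List Bool) =>
    exists_children hf hns N _ (hmin s)
  have hrange : IsClosed (range f) := (isCompact_range hf).isClosed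
  let N0 : Node μ f := ⟨univ, range f, isClosed_univ, hrange.measurableSet, by simp,
    fun B _ _ h => by simpa using h⟩
  let T : List Bool → Node μ f := fun s => List.rec N0 (fun b s N => c N s b) s
  have hT : ∀ b s, T (b :: s) = c (T s) s b := fun b s => rfl
  have hTQ : ∀ b s, μ (f ⁻¹' ((T s).Q \ (T (b :: s)).Q)) ≤ ε (b, s) := by
    intro b s
    refine ((hc (T s) s b).2.2.le).trans ?_
    cases b
    · exact min_le_right _ _
    · exact min_le_left _ _
  refine tree_loose hf (fun s => (T s).H) (fun s => (T s).closed) (fun s => hcd (T s) s)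
    (fun b s => (hc (T s) s b).1) (⋂ s, (T s).Q) ?_
    (fun s => (iInter_subset _ s).trans (T s).sub)
  refine not_scattered (μ.map f) (fun y => ?_) ?_
  · rw [Measure.map_apply hfm (measurableSet_singleton y), hat]
  · rw [Measure.map_apply hfm (MeasurableSet.iInter fun s => (T s).meas)]
    intro h0
    have hcov : (univ : Set X) ⊆ (f ⁻¹' ⋂ s, (T s).Q) ∪
        ⋃ i : Bool × List Bool, f ⁻¹' ((T i.2).Q \ (T (i.1 :: i.2)).Q) := by
      intro x _
      by_contra hx
      rw [mem_union, not_or] at hx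
      refine hx.1 (mem_iInter.2 fun s => ?_)
      induction s with
      | nil => exact mem_range_self x
      | cons b s ih =>
        by_contra hb
        exact hx.2 (mem_iUnion.2 ⟨(b, s), ih, hb⟩)
    have : μ univ ≤ ∑' i, ε i := by
      calc μ univ ≤ _ := measure_mono hcov
        _ ≤ _ := measure_union_le _ _
        _ ≤ 0 + ∑' i : Bool × List Bool, μ (f ⁻¹' ((T i.2).Q \ (T (i.1 :: i.2)).Q)) :=
          add_le_add h0.le (measure_iUnion_le _)
        _ ≤ _ := by
          rw [zero_add]
          exact ENNReal.tsum_le_tsum fun i => hTQ i.1 i.2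
    exact absurd hε (not_lt.2 this)

end Top

section Diffuse

/-- A diffuse measure has a continuous metrizable image with null fibres. -/
theorem exists_diffuse {X : Type u} [TopologicalSpace X] [CompactSpace X] [T2Space X]
    [MeasurableSpace X] [BorelSpace X] (μ : Measure X) [IsFiniteMeasure μ] [μ.Regular]
    (hat : ∀ x, μ {x} = 0) :
    ∃ (ι : Type u) (_ : Countable ι) (g : X → (ι → unitInterval)), Continuous g ∧
      ∀ x, μ {z | g z = g x} = 0 := by
  have h1 : ∀ (n : ℕ) (x : X), ∃ h : C(X, ℝ), h x = 0 ∧ (∀ z, h z ∈ Icc (0 : ℝ) 1) ∧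
      μ {z | h z ≠ 1} ≤ ((n : ENNReal) + 1)⁻¹ := by
    intro n x
    obtain ⟨U, hxU, hU, hμU⟩ := Set.exists_isOpen_lt_of_lt (μ := μ) {x} ((n : ENNReal) + 1)⁻¹
      (by rw [hat]; simp)
    obtain ⟨h, hh0, hh1, hI⟩ := exists_continuous_zero_one_of_isClosed (isClosed_singleton (x := x))
      hU.isClosed_compl (disjoint_left.2 fun z hz hz' => hz' (hxU hz))
    refine ⟨h, hh0 rfl, hI, (measure_mono ?_).trans hμU.le⟩
    intro z hz
    by_contra hzU
    exact hz (hh1 hzU)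
  choose h h0 hI hμ using h1
  have h2 : ∀ n : ℕ, ∃ t : Finset X, univ ⊆ ⋃ x ∈ t, {z | h n x z ≠ 1} := by
    intro n
    refine isCompact_univ.elim_finite_subcover (fun x => {z | h n x z ≠ 1}) (fun x => ?_) ?_
    · exact isOpen_ne_fun (h n x).continuous continuous_const
    · intro x _
      refine mem_iUnion.2 ⟨x, ?_⟩
      simp [h0]
  choose t ht using h2
  refine ⟨Σ n : ℕ, t n, inferInstance, fun z i => ⟨h i.1 i.2 z, hI _ _ _⟩, ?_, ?_⟩
  · refine continuous_pi fun i => Continuous.subtype_mk (h i.1 i.2).continuous _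
  · intro x
    have hb : ∀ n : ℕ, μ {z | (fun i : (Σ n : ℕ, t n) => (⟨h i.1 i.2 z, hI _ _ _⟩ : unitInterval))
        = fun i => ⟨h i.1 i.2 x, hI _ _ _⟩} ≤ ((n : ENNReal) + 1)⁻¹ := by
      intro n
      have := ht n (mem_univ x)
      simp only [mem_iUnion] at this
      obtain ⟨a, ha, hxa⟩ := this
      refine (measure_mono ?_).trans (hμ n a)
      intro z hz
      have := congrArg Subtype.val (congrFun hz ⟨n, a, ha⟩)
      simp only at this
      rw [mem_ofPred_eq, this]
      exact hxa
    have hlim : Filter.Tendsto (fun n : ℕ => ((n : ENNReal) + 1)⁻¹) Filter.atTop (𝓝 0) := by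
      have := (Filter.tendsto_add_atTop_iff_nat 1).2 ENNReal.tendsto_inv_nat_nhds_zero
      simpa using this
    exact le_antisymm (ge_of_tendsto' hlim hb) zero_le

end Diffuse

section Main

/-- A nonzero nowhere separable Radon measure contradicts weak c-dissipation. -/
theorem not_nowhere {X : Type u} [TopologicalSpace X] [CompactSpace X] [T2Space X]
    [MeasurableSpace X] [BorelSpace X] (hX : IsWeaklyCDissipated X)
    (μ : Measure X) [IsFiniteMeasure μ] [μ.Regular]
    (hns : ∀ F, GSep μ F → μ F = 0) : μ univ = 0 := by
  by_contra hμ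
  have hat : ∀ x, μ {x} = 0 := by
    intro x
    refine hns _ ⟨measurableSet_singleton x, ∅, countable_empty, by simp, fun A _ => ?_⟩
    by_cases hx : x ∈ A
    · refine ⟨univ, @MeasurableSet.univ _ (_), ?_⟩
      convert measure_empty (μ := μ)
      rw [eq_empty_iff_forall_notMem]
      rintro z ⟨hz, hz'⟩
      rw [mem_singleton_iff.1 hz, Set.mem_symmDiff] at hz'
      simp [hx] at hz'
    · refine ⟨∅, @MeasurableSet.empty _ (_), ?_⟩
      convert measure_empty (μ := μ)
      rw [eq_empty_iff_forall_notMem]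
      rintro z ⟨hz, hz'⟩
      rw [mem_singleton_iff.1 hz, Set.mem_symmDiff] at hz'
      simp [hx] at hz'
  obtain ⟨ι, hι, g, hg, hg0⟩ := exists_diffuse μ hat
  obtain ⟨Y, tY, cY, mY, f, hf, hw, hfin⟩ := hX (ι → unitInterval) g hg
  let mbY : MeasurableSpace Y := borel Y
  have bY : BorelSpace Y := ⟨rfl⟩
  let _ : MetricSpace Y := TopologicalSpace.metrizableSpaceMetric Y
  have sY : SecondCountableTopology Y := inferInstance
  refine hw (exists_loose (μ := μ) hf ?_ ?_ hμ)
  · intro F mF hF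
    by_contra hcon
    push Not at hcon
    refine hF (hns F ⟨mF, preimage f '' TopologicalSpace.countableBasis Y,
      (TopologicalSpace.countable_countableBasis Y).image _, ?_, ?_⟩)
    · rintro _ ⟨U, hU, rfl⟩
      exact hf.measurable (TopologicalSpace.isOpen_of_mem_countableBasis hU).measurableSet
    · intro A mA
      obtain ⟨C, mC, hC⟩ := hcon A mA
      refine ⟨f ⁻¹' C, ?_, hC⟩
      rw [← MeasurableSpace.comap_generateFrom]
      refine ⟨C, ?_, rfl⟩
      have := (TopologicalSpace.isBasis_countableBasis Y).borel_eq_generateFrom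
      rw [← this]
      exact mC
  · intro y
    by_cases hy : ∃ x, f x = y
    · obtain ⟨x, rfl⟩ := hy
      exact measure_mono_null (fun z hz => hfin z x hz) (hg0 x)
    · convert measure_empty (μ := μ)
      rw [eq_empty_iff_forall_notMem]
      exact fun z hz => hy ⟨z, hz⟩

end Main

end WCD

/-- Every Radon measure (finite regular Borel measure) on a weakly c-dissipated compact
Hausdorff space is separable: there is a countable family `𝒞` of Borel sets such that
every Borel set is approximated in measure by members of `𝒞`. -/
theorem stmt18 {X : Type u}
    [TopologicalSpace X] [CompactSpace X] [T2Space X]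
    [MeasurableSpace X] [BorelSpace X]
    (hX : IsWeaklyCDissipated X)
    (μ : Measure X) [IsFiniteMeasure μ] [μ.Regular] :
    ∃ 𝒞 : Set (Set X), 𝒞.Countable ∧ (∀ B ∈ 𝒞, MeasurableSet B) ∧
      ∀ A : Set X, MeasurableSet A → ∀ ε : ENNReal, 0 < ε →
        ∃ B ∈ 𝒞, μ (symmDiff A B) < ε := by
  obtain ⟨s, hs, hmax⟩ := WCD.exhaustion μ {F | WCD.GSep μ F} (fun F hF => hF.1)
    ⟨∅, MeasurableSet.empty, ∅, countable_empty, by simp, fun A _ => ⟨∅, @MeasurableSet.empty _ (_),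
      by simp⟩⟩ (fun F hF => WCD.GSep.iUnion F hF)
  refine WCD.GSep.sep hs ?_
  have hreg : (μ.restrict sᶜ).Regular :=
    Measure.Regular.restrict_of_measure_ne_top (measure_ne_top _ _)
  have h := WCD.not_nowhere hX (μ.restrict sᶜ) (by
    rintro F ⟨mF, 𝒟, hc, hm, hA⟩
    have hG : WCD.GSep μ (F ∩ sᶜ) := by
      refine ⟨mF.inter hs.1.compl, 𝒟, hc, hm, fun A mA => ?_⟩
      obtain ⟨B, mB, hB⟩ := hA A mA
      refine ⟨B, mB, ?_⟩
      rw [Measure.restrict_apply' hs.1.compl] at hB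
      refine measure_mono_null ?_ hB
      rintro x ⟨⟨h1, h2⟩, h3⟩
      exact ⟨⟨h1, h3⟩, h2⟩
    rw [Measure.restrict_apply mF]
    refine measure_mono_null ?_ (hmax _ hG)
    rintro x ⟨h1, h2⟩
    exact ⟨⟨h1, h2⟩, h2⟩)
  rwa [Measure.restrict_apply_univ] at h
end
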